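/- arXiv:2410.02105 — 3 statements merged into one kernel-verified Lean document; each statement's English description precedes it below -/
import Mathlib

section
/- For integers n ≥ k ≥ d ≥ 1, the set A_{n,k,d}^t descends to a ℚ-vector space basis of the quotient ring ℚ[x_1,…,x_n,y_1,…,y_d,t_1,…,t_k]/J_{n,k,d}^{ℚ,t}; equivalently, A_{n,k,d} descends to a ℚ[t_1,…,t_k]-module basis of this quotient, so the quotient is a free ℚ[t_1,…,t_k]-module of rank (k!·d!/(k−d)!)·Stir(n,d). -/
open MvPolynomial

set_option synthInstance.maxHeartbeats 1000000
set_option maxHeartbeats 4000000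

/-- Stirling numbers of the second kind: the number of set partitions of an `n`-element
set into `d` nonempty blocks, via the standard recurrence. -/
def stirling2 : ℕ → ℕ → ℕ
  | 0, 0 => 1
  | 0, _ + 1 => 0
  | _ + 1, 0 => 0
  | n + 1, d + 1 => (d + 1) * stirling2 n (d + 1) + stirling2 n d

/-- The elementary symmetric polynomial `e_r` in the x-variables, inside `ℚ[x,y,t]`. -/
noncomputable def eX3 (n k d r : ℕ) : MvPolynomial (Fin n ⊕ Fin d ⊕ Fin k) ℚ :=
  rename Sum.inl (esymm (Fin n) ℚ r)

/-- The complete homogeneous symmetric polynomial `h_r` in the y-variables,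
inside `ℚ[x,y,t]`. -/
noncomputable def hY3 (n k d r : ℕ) : MvPolynomial (Fin n ⊕ Fin d ⊕ Fin k) ℚ :=
  rename (Sum.inr ∘ Sum.inl) (hsymm (Fin d) ℚ r)

/-- The elementary symmetric polynomial `e_r` in the y-variables, inside `ℚ[x,y,t]`. -/
noncomputable def eY3 (n k d r : ℕ) : MvPolynomial (Fin n ⊕ Fin d ⊕ Fin k) ℚ :=
  rename (Sum.inr ∘ Sum.inl) (esymm (Fin d) ℚ r)

/-- The elementary symmetric polynomial `e_r` in the t-variables, inside `ℚ[x,y,t]`. -/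
noncomputable def eT3 (n k d r : ℕ) : MvPolynomial (Fin n ⊕ Fin d ⊕ Fin k) ℚ :=
  rename (Sum.inr ∘ Sum.inr) (esymm (Fin k) ℚ r)

/-- `Σ_{a+b=r} (−1)^b e_a(t_1,…,t_k)·h_b(y_1,…,y_d)`. -/
noncomputable def genTY3 (n k d r : ℕ) : MvPolynomial (Fin n ⊕ Fin d ⊕ Fin k) ℚ :=
  ∑ j ∈ Finset.range (r + 1),
    (-1 : MvPolynomial (Fin n ⊕ Fin d ⊕ Fin k) ℚ) ^ j * (eT3 n k d (r - j) * hY3 n k d j)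

/-- `Σ_{a+b=r} (−1)^b e_a(x_1,…,x_n)·h_b(y_1,…,y_d)`. -/
noncomputable def genXY3 (n k d r : ℕ) : MvPolynomial (Fin n ⊕ Fin d ⊕ Fin k) ℚ :=
  ∑ j ∈ Finset.range (r + 1),
    (-1 : MvPolynomial (Fin n ⊕ Fin d ⊕ Fin k) ℚ) ^ j * (eX3 n k d (r - j) * hY3 n k d j)

/-- `Σ_{j=0}^{d} (−1)^j x_i^{d−j} e_j(y_1,…,y_d)`. -/
noncomputable def genPow3 (n k d : ℕ) (i : Fin n) : MvPolynomial (Fin n ⊕ Fin d ⊕ Fin k) ℚ :=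
  ∑ j ∈ Finset.range (d + 1),
    (-1 : MvPolynomial (Fin n ⊕ Fin d ⊕ Fin k) ℚ) ^ j * (X (Sum.inl i) ^ (d - j) * eY3 n k d j)

/-- The generating set of the ideal `J_{n,k,d}^{ℚ,t} ⊆ ℚ[x,y,t]`. -/
def JtgensQ (n k d : ℕ) : Set (MvPolynomial (Fin n ⊕ Fin d ⊕ Fin k) ℚ) :=
  {p | ∃ r, k - d < r ∧ p = genTY3 n k d r} ∪
  {p | ∃ r, n - d < r ∧ p = genXY3 n k d r} ∪
  {p | ∃ i : Fin n, p = genPow3 n k d i}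

/-- An `(n,d)`-staircase: a shuffle of the sequence `(0,1,…,d−1)` with `n−d` copies
of `d−1`, i.e. the values `0, 1, …, d−1` appear in this order at some increasing set of
`d` positions and every other entry equals `d−1`. -/
def IsStaircase (n d : ℕ) (s : Fin n → ℕ) : Prop :=
  ∃ φ : Fin d → Fin n, StrictMono φ ∧ (∀ t, s (φ t) = t) ∧
    ∀ j : Fin n, (∀ t, j ≠ φ t) → s j = d - 1

/-- An `(n,d)`-substaircase sequence: componentwise at most some `(n,d)`-staircase. -/
def IsSubstaircase (n d : ℕ) (a : Fin n → ℕ) : Prop :=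
  ∃ s, IsStaircase n d s ∧ ∀ j, a j ≤ s j

/-- The set of monomials `A_{n,k,d}`, viewed inside `ℚ[x,y,t]`. -/
def Aset3 (n k d : ℕ) : Set (MvPolynomial (Fin n ⊕ Fin d ⊕ Fin k) ℚ) :=
  {p | ∃ a : Fin n → ℕ, ∃ b : Fin d → ℕ, IsSubstaircase n d a ∧
    (∀ i : Fin d, b i < k - d + ((i : ℕ) + 1)) ∧
    p = (∏ j, X (Sum.inl j) ^ a j) * ∏ i, X (Sum.inr (Sum.inl i)) ^ b i}

/-- The set `A_{n,k,d}^t` of products of members of `A_{n,k,d}` with monomials in the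
t-variables. -/
def AsetT (n k d : ℕ) : Set (MvPolynomial (Fin n ⊕ Fin d ⊕ Fin k) ℚ) :=
  {p | ∃ q ∈ Aset3 n k d, ∃ c : Fin k → ℕ, p = q * ∏ i, X (Sum.inr (Sum.inr i)) ^ c i}

/-- `ℚ[x,y,t]` is a `ℚ[t_1,…,t_k]`-algebra via `t_i ↦ t_i`. -/
noncomputable instance algebraTQ3 (n k d : ℕ) :
    Algebra (MvPolynomial (Fin k) ℚ) (MvPolynomial (Fin n ⊕ Fin d ⊕ Fin k) ℚ) :=
  ((rename (Sum.inr ∘ Sum.inr) :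
    MvPolynomial (Fin k) ℚ →ₐ[ℚ] MvPolynomial (Fin n ⊕ Fin d ⊕ Fin k) ℚ)).toRingHom.toAlgebra

/-!
By generating functions, the relations say that `∏ (X - y i)` divides both `∏ (X - t i)` and
`∏ (X - x j)`, and that every `x j` is a root of `∏ (X - y i)`.

*Spanning.* Over `ℚ[t]`, the `y`-monomials are reduced by splitting off one linear factor of
`∏ (X - t i)` at a time. Over the subring generated by the `y i`, the `x`-monomials are reduced by
induction on `n` for a cover `g ∣ ∏ (X - x j)` with `g h` vanishing at all `x j`: with
`v = g (x n)`, the last variable is a root of `g` in `C / (v)` and a root of `h` in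
`C / ann v ≃ v C`. These two cases are the two ways in which a substaircase can end.

*Independence.* The injections `σ : d → k` and the surjections `τ : n → d` give evaluations
`y i ↦ t (σ i)`, `x j ↦ t (σ (τ j))` of the quotient in `ℚ[t]`. They are as many as the spanning
monomials and linearly independent by Dedekind, so the evaluation matrix is nonsingular.
-/

section GeneratingFunctions

open Lagrange (nodal)

variable {R C ι κ : Type*} [CommRing R] [CommRing C] [Algebra R C]

/-- The reciprocal polynomial `∏ i ∈ s, (1 - v i * X)` of `Lagrange.nodal s v`: up to signs, the
generating function of the elementary symmetric functions of the nodes. -/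
noncomputable def revNodal (s : Finset ι) (v : ι → C) : Polynomial C :=
  ∏ i ∈ s, (1 - Polynomial.C (v i) * Polynomial.X)

/-- The supersymmetric difference `∑_{a+b=r} (-1)^b e_a(t) h_b(y)`, that is `e_r[T - Y]` in
plethystic notation. -/
noncomputable def esymmDiff (R : Type*) [CommRing R] [Algebra R C] [Fintype ι] [DecidableEq ι]
    [Fintype κ] (t : κ → C) (y : ι → C) (r : ℕ) : C :=
  ∑ j ∈ Finset.range (r + 1), (-1) ^ j * (aeval t (esymm κ R (r - j)) * aeval y (hsymm ι R j))

lemma mk_pow_mul_one_sub_C_mul_X (a : C) :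
    PowerSeries.mk (a ^ ·) * (1 - PowerSeries.C a * PowerSeries.X) = 1 := by
  simpa [PowerSeries.rescale_mk, PowerSeries.rescale_X] using
    congrArg (PowerSeries.rescale a) (PowerSeries.mk_one_mul_one_sub_eq_one C)

lemma natDegree_one_sub_C_mul_X_le (a : C) :
    (1 - Polynomial.C a * Polynomial.X).natDegree ≤ 1 := by
  compute_degree

lemma natDegree_revNodal_le (s : Finset ι) (v : ι → C) : (revNodal s v).natDegree ≤ s.card := by
  refine (Polynomial.natDegree_prod_le _ _).trans ?_
  simpa using Finset.sum_le_card_nsmul s _ 1 fun i _ ↦ natDegree_one_sub_C_mul_X_le (v i)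

lemma reflect_revNodal (s : Finset ι) (v : ι → C) :
    Polynomial.reflect s.card (revNodal s v) = nodal s v := by
  classical
  induction s using Finset.induction_on with
  | empty => simp [revNodal]
  | insert a s ha ih =>
    have hinsert : revNodal (insert a s) v =
        (1 - Polynomial.C (v a) * Polynomial.X) * revNodal s v := Finset.prod_insert ha
    rw [hinsert, Lagrange.nodal_insert_eq_nodal ha, Finset.card_insert_of_notMem ha, add_comm,
      Polynomial.reflect_mul _ _ (natDegree_one_sub_C_mul_X_le _) (natDegree_revNodal_le s v), ih]
    simp [Polynomial.reflect_sub]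

lemma reflect_nodal (s : Finset ι) (v : ι → C) :
    Polynomial.reflect s.card (nodal s v) = revNodal s v := by
  rw [← reflect_revNodal, Polynomial.reflect_reflect]

lemma coe_revNodal (s : Finset ι) (v : ι → C) :
    (revNodal s v : PowerSeries C) = ∏ i ∈ s, (1 - PowerSeries.C (v i) * PowerSeries.X) := by
  rw [revNodal, ← Polynomial.coeToPowerSeries.ringHom_apply, map_prod]
  simp

lemma nodal_dvd_nodal_iff_exists_revNodal_eq_mul [Nontrivial C] {s : Finset κ} {s' : Finset ι}
    (hcard : s'.card ≤ s.card) (t : κ → C) (y : ι → C) :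
    nodal s' y ∣ nodal s t ↔
      ∃ q : Polynomial C, q.natDegree ≤ s.card - s'.card ∧ revNodal s t = revNodal s' y * q := by
  obtain ⟨e, he⟩ := Nat.exists_eq_add_of_le hcard
  rw [he, Nat.add_sub_cancel_left]
  constructor
  · rintro ⟨q, hq⟩
    have hmonic : q.Monic := Lagrange.nodal_monic.of_mul_monic_left (hq ▸ Lagrange.nodal_monic)
    have hdeg : q.natDegree = e := by
      have hdeg' := congrArg Polynomial.natDegree hq
      rw [Lagrange.nodal_monic.natDegree_mul hmonic, Lagrange.natDegree_nodal,
        Lagrange.natDegree_nodal] at hdeg'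
      omega
    refine ⟨q.reflect e, Polynomial.natDegree_reflect_le.trans (by simp [hdeg]), ?_⟩
    rw [← reflect_nodal, ← reflect_nodal, hq, he,
      Polynomial.reflect_mul _ _ Lagrange.natDegree_nodal.le hdeg.le]
  · rintro ⟨q, hdeg, hq⟩
    rw [← reflect_revNodal, ← reflect_revNodal, hq, he,
      Polynomial.reflect_mul _ _ (natDegree_revNodal_le s' y) hdeg]
    exact dvd_mul_right _ _

variable [Fintype ι] [Fintype κ]

lemma coeff_revNodal (v : ι → C) (r : ℕ) :
    (revNodal Finset.univ v).coeff r = (-1) ^ r * aeval v (esymm ι R r) := by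
  have hexpand : revNodal Finset.univ v = ∑ s ∈ (Finset.univ : Finset ι).powerset,
      Polynomial.C ((-1) ^ s.card * ∏ i ∈ s, v i) * Polynomial.X ^ s.card := by
    simp_rw [revNodal, sub_eq_add_neg]
    rw [Finset.prod_one_add]
    refine Finset.sum_congr rfl fun s _ ↦ ?_
    rw [Finset.prod_neg, Finset.prod_mul_distrib, Finset.prod_const]
    simp [mul_assoc]
  simp_rw [hexpand, Polynomial.finsetSum_coeff, Polynomial.coeff_C_mul_X_pow]
  rw [← Finset.sum_filter, esymm, map_sum, Finset.mul_sum, Finset.powersetCard_eq_filter]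
  simp_rw [eq_comm (a := r)]
  refine Finset.sum_congr rfl fun s hs ↦ ?_
  simp [(Finset.mem_filter.1 hs).2]

lemma coeff_prod_mk_pow [DecidableEq ι] (y : ι → C) (r : ℕ) :
    PowerSeries.coeff r (∏ i, PowerSeries.mk (y i ^ ·)) = aeval y (hsymm ι R r) := by
  symm
  rw [PowerSeries.coeff_prod, hsymm, map_sum]
  refine Finset.sum_bij' (i := fun s _ ↦ (Sym.equivNatSum ι r s : ι →₀ ℕ))
    (j := fun l hl ↦ (Sym.equivNatSum ι r).symm ⟨l, ?_⟩) ?_ ?_ ?_ ?_ ?_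
  · rw [Finsupp.sum_fintype _ _ (by simp)]
    exact (Finset.mem_finsuppAntidiag.1 hl).1
  · intro s _
    have hsum := (Sym.equivNatSum ι r s).2
    rw [Finsupp.sum_fintype _ _ (by simp)] at hsum
    exact Finset.mem_finsuppAntidiag.2 ⟨hsum, Finset.subset_univ _⟩
  · exact fun l _ ↦ Finset.mem_univ _
  · simp
  · simp
  · intro s _
    simp only [PowerSeries.coeff_mk, Sym.coe_equivNatSum_apply_apply]
    rw [map_multiset_prod, Multiset.map_map]
    simp only [Function.comp_def, aeval_X]
    rw [Finset.prod_multiset_map_count]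
    refine Finset.prod_subset (Finset.subset_univ _) fun i _ hi ↦ ?_
    rw [Multiset.count_eq_zero_of_notMem (mt Multiset.mem_toFinset.2 hi), pow_zero]

lemma mk_hsymm_mul_revNodal [DecidableEq ι] (y : ι → C) :
    PowerSeries.mk (fun r ↦ aeval y (hsymm ι R r)) *
      (revNodal Finset.univ y : PowerSeries C) = 1 := by
  have hprod : PowerSeries.mk (fun r ↦ aeval y (hsymm ι R r)) =
      ∏ i, PowerSeries.mk (y i ^ ·) := by
    ext r
    rw [PowerSeries.coeff_mk, coeff_prod_mk_pow (R := R)]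
  rw [hprod, coe_revNodal, ← Finset.prod_mul_distrib]
  exact Finset.prod_eq_one fun i _ ↦ mk_pow_mul_one_sub_C_mul_X (y i)

lemma esymmDiff_eq_coeff [DecidableEq ι] (t : κ → C) (y : ι → C) (r : ℕ) :
    esymmDiff R t y r = (-1) ^ r *
      PowerSeries.coeff r (PowerSeries.mk (fun j ↦ aeval y (hsymm ι R j)) *
        (revNodal Finset.univ t : PowerSeries C)) := by
  rw [esymmDiff, PowerSeries.coeff_mul, Finset.Nat.sum_antidiagonal_eq_sum_range_succ_mk,
    Finset.mul_sum]
  refine Finset.sum_congr rfl fun j hj ↦ ?_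
  simp only [PowerSeries.coeff_mk, Polynomial.coeff_coe, coeff_revNodal (R := R)]
  obtain ⟨i, rfl⟩ := Nat.exists_eq_add_of_le (Finset.mem_range_succ_iff.1 hj)
  have hsign : (-1 : C) ^ (j + i) * (-1) ^ i = (-1) ^ j := by
    rw [pow_add, mul_assoc, ← mul_pow, neg_one_mul, neg_neg, one_pow, mul_one]
  rw [add_tsub_cancel_left, ← hsign]
  ring

lemma nodal_dvd_nodal_iff_esymmDiff_eq_zero [Nontrivial C] [DecidableEq ι]
    (hcard : Fintype.card ι ≤ Fintype.card κ) (t : κ → C) (y : ι → C) :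
    nodal Finset.univ y ∣ nodal Finset.univ t ↔
      ∀ r, Fintype.card κ - Fintype.card ι < r → esymmDiff R t y r = 0 := by
  rw [nodal_dvd_nodal_iff_exists_revNodal_eq_mul (by simpa using hcard)]
  simp only [Finset.card_univ]
  set H := PowerSeries.mk (fun j ↦ aeval y (hsymm ι R j))
  have hinv : H * (revNodal Finset.univ y : PowerSeries C) = 1 := mk_hsymm_mul_revNodal y
  set G := H * (revNodal Finset.univ t : PowerSeries C)
  have hcoeff (r : ℕ) : esymmDiff R t y r = 0 ↔ PowerSeries.coeff r G = 0 := by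
    rw [esymmDiff_eq_coeff, (isUnit_one.neg.pow r).mul_right_eq_zero]
  simp_rw [hcoeff]
  constructor
  · rintro ⟨q, hdeg, hq⟩ r hr
    simp only [G, hq, Polynomial.coe_mul]
    rw [← mul_assoc, hinv, one_mul, Polynomial.coeff_coe,
      Polynomial.coeff_eq_zero_of_natDegree_lt (hdeg.trans_lt hr)]
  · intro hzero
    set q := PowerSeries.trunc (Fintype.card κ - Fintype.card ι + 1) G
    have hq : (q : PowerSeries C) = G := by
      ext r
      rw [Polynomial.coeff_coe, PowerSeries.coeff_trunc]
      split_ifs with hr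
      · rfl
      · exact (hzero r (by omega)).symm
    refine ⟨q, Nat.lt_succ_iff.1 (PowerSeries.natDegree_trunc_lt _ _), ?_⟩
    apply Polynomial.coe_injective C
    rw [Polynomial.coe_mul, hq, mul_left_comm, ← mul_assoc, hinv, one_mul]

lemma eval_nodal_eq_sum_esymm (y : ι → C) (x : C) :
    (nodal Finset.univ y).eval x = ∑ j ∈ Finset.range (Fintype.card ι + 1),
      (-1) ^ j * (x ^ (Fintype.card ι - j) * aeval y (esymm ι R j)) := by
  have hvieta := Multiset.prod_X_sub_X_eq_sum_esymm (Finset.univ.val.map y)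
  simp only [Multiset.map_map, Function.comp_def, Multiset.card_map, Finset.card_val,
    Finset.card_univ] at hvieta
  rw [Lagrange.nodal_eq, Finset.prod, hvieta, Polynomial.eval_finsetSum]
  refine Finset.sum_congr rfl fun j _ ↦ ?_
  rw [aeval_esymm_eq_multiset_esymm]
  simp only [Polynomial.eval_mul, Polynomial.eval_pow, Polynomial.eval_neg, Polynomial.eval_one,
    Polynomial.eval_C, Polynomial.eval_X]
  ring

end GeneratingFunctions

section MonomialSpan

variable {R C D : Type*} [CommRing R] [CommRing C] [CommRing D] [Algebra R C] [Algebra R D]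
variable {ι : Type*} [Fintype ι] {n : ℕ}

/-- The `R`-submodule spanned by the monomials `∏ i, x i ^ a i` with exponent vector `a ∈ S`. -/
def monomialSpan (R : Type*) [CommRing R] [Algebra R C] (x : ι → C) (S : Set (ι → ℕ)) :
    Submodule R C :=
  Submodule.span R ((fun a ↦ ∏ i, x i ^ a i) '' S)

lemma monomialSpan_mono (x : ι → C) {S S' : Set (ι → ℕ)} (h : S ⊆ S') :
    monomialSpan R x S ≤ monomialSpan R x S' :=
  Submodule.span_mono (Set.image_mono h)

lemma monomialSpan_map (f : C →ₐ[R] D) (x : ι → C) (S : Set (ι → ℕ)) :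
    (monomialSpan R x S).map f.toLinearMap = monomialSpan R (f ∘ x) S := by
  rw [monomialSpan, Submodule.map_span, monomialSpan, Set.image_image]
  simp [map_prod]

lemma monomialSpan_sup_restrictScalars_eq_top (I : Ideal C) {x : ι → C} {S : Set (ι → ℕ)}
    (h : monomialSpan R (Ideal.Quotient.mkₐ R I ∘ x) S = ⊤) :
    monomialSpan R x S ⊔ I.restrictScalars R = ⊤ := by
  have hker : LinearMap.ker (Ideal.Quotient.mkₐ R I).toLinearMap = I.restrictScalars R := by
    ext z
    exact Ideal.Quotient.eq_zero_iff_mem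
  rw [← hker, ← Submodule.comap_map_eq, monomialSpan_map, h, Submodule.comap_top]

lemma monomialSpan_eq_top_of_isEmpty [IsEmpty ι] {x : ι → C} {S : Set (ι → ℕ)}
    (hx : Algebra.adjoin R (Set.range x) = ⊤) (hS : S.Nonempty) : monomialSpan R x S = ⊤ := by
  obtain ⟨a, ha⟩ := hS
  rw [Set.range_eq_empty, Algebra.adjoin_empty] at hx
  rw [eq_top_iff, ← Algebra.top_toSubmodule, ← hx, Algebra.toSubmodule_bot,
    Submodule.one_eq_span, Submodule.span_singleton_le_iff_mem]
  exact Submodule.subset_span ⟨a, ha, Fintype.prod_empty _⟩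

lemma span_pow_adjoin_singleton_eq_top {a : C} {f : Polynomial R} (hf : f.Monic)
    (ha : Polynomial.aeval a f = 0) :
    Submodule.span R {z : Algebra.adjoin R {a} | ∃ j < f.natDegree, (z : C) = a ^ j} = ⊤ := by
  apply Submodule.map_injective_of_injective (f := (Algebra.adjoin R {a}).val.toLinearMap)
    Subtype.val_injective
  rw [Submodule.map_span, Submodule.map_top]
  have hrange : LinearMap.range (Algebra.adjoin R {a}).val.toLinearMap =
      Subalgebra.toSubmodule (Algebra.adjoin R {a}) := by
    ext z
    simp
  rw [hrange, ← Submodule.span_range_natDegree_eq_adjoin hf ha]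
  congr 1
  ext z
  simp only [Set.mem_image, Set.mem_ofPred_eq, Finset.coe_image, Finset.coe_range, Set.mem_Iio]
  constructor
  · rintro ⟨w, ⟨j, hj, hw⟩, rfl⟩
    exact ⟨j, hj, hw.symm⟩
  · rintro ⟨j, hj, rfl⟩
    exact ⟨⟨a ^ j, pow_mem (Algebra.self_mem_adjoin_singleton R a) j⟩, ⟨j, hj, rfl⟩, rfl⟩

lemma monomialSpan_eq_top_of_init {x : Fin (n + 1) → C} {S : Set (Fin n → ℕ)} {f : Polynomial R}
    (hf : f.Monic) (hroot : Polynomial.aeval (x (Fin.last n)) f = 0)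
    (hS : monomialSpan (Algebra.adjoin R {x (Fin.last n)}) (Fin.init x) S = ⊤) :
    monomialSpan R x {c | Fin.init c ∈ S ∧ c (Fin.last n) < f.natDegree} = ⊤ := by
  have hspan := Submodule.span_smul_of_span_eq_top (span_pow_adjoin_singleton_eq_top hf hroot)
    ((fun a ↦ ∏ i, (Fin.init x : Fin n → C) i ^ a i) '' S)
  rw [← monomialSpan, hS, Submodule.restrictScalars_top] at hspan
  rw [eq_top_iff, ← hspan, monomialSpan]
  refine Submodule.span_mono ?_
  rintro _ ⟨w, ⟨j, hj, hw⟩, _, ⟨b, hb, rfl⟩, rfl⟩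
  refine ⟨Fin.snoc b j, ⟨by simpa using hb, by simpa using hj⟩, ?_⟩
  simp [Fin.prod_univ_castSucc, Subalgebra.smul_def, hw, Fin.init, mul_comm]

lemma aeval_mul_mem_monomialSpan {x : Fin (n + 1) → C} {S : Set (Fin n → ℕ)} (p : Polynomial R)
    {e : ℕ} {z : C}
    (hz : z ∈ monomialSpan R x {c | Fin.init c ∈ S ∧ c (Fin.last n) < e}) :
    Polynomial.aeval (x (Fin.last n)) p * z ∈
      monomialSpan R x {c | Fin.init c ∈ S ∧ c (Fin.last n) < p.natDegree + e} := by
  set T := monomialSpan R x {c | Fin.init c ∈ S ∧ c (Fin.last n) < p.natDegree + e}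
  suffices h : monomialSpan R x {c | Fin.init c ∈ S ∧ c (Fin.last n) < e} ≤
      T.comap (LinearMap.mulLeft R (Polynomial.aeval (x (Fin.last n)) p)) from h hz
  refine Submodule.span_le.2 ?_
  rintro _ ⟨c, ⟨hc, hlast⟩, rfl⟩
  change Polynomial.aeval (x (Fin.last n)) p * _ ∈ T
  rw [Polynomial.aeval_eq_sum_range, Finset.sum_mul]
  refine Submodule.sum_mem _ fun j hj ↦ ?_
  rw [smul_mul_assoc]
  refine Submodule.smul_mem _ _ (Submodule.subset_span
    ⟨Fin.snoc (Fin.init c) (c (Fin.last n) + j), ⟨by simpa using hc, ?_⟩, ?_⟩)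
  · have := Finset.mem_range_succ_iff.1 hj
    simp only [Fin.snoc_last]
    omega
  · simp only [Fin.prod_univ_castSucc, Fin.snoc_castSucc, Fin.snoc_last, Fin.init]
    ring

lemma adjoin_adjoin_eq_top {s t : Set C} (h : Algebra.adjoin R (s ∪ t) = ⊤) :
    Algebra.adjoin (Algebra.adjoin R s) t = ⊤ := by
  rw [Algebra.adjoin_union_eq_adjoin_adjoin] at h
  refine eq_top_iff.2 fun z _ ↦ ?_
  have hz : z ∈ (⊤ : Subalgebra R C) := Algebra.mem_top
  rwa [← h, Subalgebra.mem_restrictScalars] at hz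

lemma adjoin_range_init_eq_top {x : Fin (n + 1) → C} (hx : Algebra.adjoin R (Set.range x) = ⊤) :
    Algebra.adjoin (Algebra.adjoin R {x (Fin.last n)})
      (Set.range (Fin.init x : Fin n → C)) = ⊤ := by
  apply adjoin_adjoin_eq_top
  rwa [Set.singleton_union, ← Fin.range_snoc, Fin.snoc_init_self]

lemma adjoin_range_comp_eq_top {ι : Type*} {f : C →ₐ[R] D} (hf : Function.Surjective f) {x : ι → C}
    (hx : Algebra.adjoin R (Set.range x) = ⊤) : Algebra.adjoin R (Set.range (f ∘ x)) = ⊤ := by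
  rw [Set.range_comp, ← AlgHom.map_adjoin, hx, Algebra.map_top, (AlgHom.range_eq_top f).2 hf]

end MonomialSpan

section NodalDivisibility

open Lagrange (nodal)

variable {R C D : Type*} [CommRing R] [CommRing C] [CommRing D] [Algebra R C] {n : ℕ}

lemma nodal_map {ι : Type*} (f : C →+* D) (s : Finset ι) (v : ι → C) :
    (nodal s v).map f = nodal s (f ∘ v) := by
  simp [Lagrange.nodal_eq, Polynomial.map_prod]

lemma nodal_univ_fin_succ (x : Fin (n + 1) → C) :
    nodal Finset.univ x =
      (Polynomial.X - Polynomial.C (x (Fin.last n))) * nodal Finset.univ (Fin.init x) := by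
  rw [Lagrange.nodal_eq, Fin.prod_univ_castSucc, mul_comm]
  rfl

lemma isMonicOfDegree_map [Nontrivial D] (f : C →+* D) {p : Polynomial C} {m : ℕ}
    (hp : p.IsMonicOfDegree m) : (p.map f).IsMonicOfDegree m :=
  ⟨(hp.monic.natDegree_map f).trans hp.natDegree_eq, hp.monic.map f⟩

lemma exists_map_eq_X_sub_C_mul [Nontrivial C] {f : Polynomial R} {k : ℕ}
    (hf : f.IsMonicOfDegree (k + 1)) {a : C} (ha : Polynomial.aeval a f = 0) :
    ∃ f₁ : Polynomial (Algebra.adjoin R {a}), f₁.IsMonicOfDegree k ∧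
      f.map (algebraMap R C) =
        (Polynomial.X - Polynomial.C a) * f₁.map (algebraMap (Algebra.adjoin R {a}) C) := by
  let a' : Algebra.adjoin R {a} := ⟨a, Algebra.self_mem_adjoin_singleton R a⟩
  set F := f.map (algebraMap R (Algebra.adjoin R {a})) with hF
  have hroot : F.IsRoot a' := by
    apply Subtype.val_injective
    rw [hF, Polynomial.eval_map_algebraMap]
    exact (Polynomial.aeval_algHom_apply (Algebra.adjoin R {a}).val a' f).symm.trans ha
  obtain ⟨f₁, hf₁⟩ := Polynomial.dvd_iff_isRoot.2 hroot
  have hFdeg : F.IsMonicOfDegree (1 + k) := add_comm k 1 ▸ isMonicOfDegree_map _ hf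
  refine ⟨f₁, (Polynomial.isMonicOfDegree_X_sub_one a').of_mul_left (hf₁ ▸ hFdeg), ?_⟩
  rw [IsScalarTower.algebraMap_eq R (Algebra.adjoin R {a}) C, ← Polynomial.map_map, ← hF, hf₁,
    Polynomial.map_mul, Polynomial.map_sub, Polynomial.map_X, Polynomial.map_C]
  rfl

lemma aeval_eq_zero_of_nodal_dvd {ι : Type*} {s : Finset ι} {y : ι → C} {f : Polynomial R}
    (hdvd : nodal s y ∣ f.map (algebraMap R C)) {i : ι} (hi : i ∈ s) :
    Polynomial.aeval (y i) f = 0 := by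
  rw [← Polynomial.eval_map_algebraMap]
  exact Polynomial.eval_eq_zero_of_dvd_of_eval_eq_zero hdvd (Lagrange.eval_nodal_at_node hi)

lemma mul_X_sub_C_dvd_mul_iff (a : C) {p q : Polynomial C} :
    (Polynomial.X - Polynomial.C a) * p ∣ (Polynomial.X - Polynomial.C a) * q ↔ p ∣ q :=
  (Polynomial.monic_X_sub_C a).isRegular.left.dvd_cancel_left

end NodalDivisibility

section PartialSubstaircase

variable {n d m : ℕ}

/-- A sequence lying componentwise below some shuffle of `(0, 1, …, m - 1)` with copies of `d - 1`.
For `m = d` these are the `(n,d)`-substaircases; smaller `m` occur when entries are peeled off. -/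
def IsPartialSubstaircase (d m : ℕ) (a : Fin n → ℕ) : Prop :=
  (∀ j, a j < d) ∧ ∃ φ : Fin m → Fin n, StrictMono φ ∧ ∀ t, a (φ t) ≤ t

lemma isPartialSubstaircase_zero_iff {a : Fin n → ℕ} :
    IsPartialSubstaircase d 0 a ↔ ∀ j, a j < d :=
  and_iff_left ⟨Fin.elim0, fun i ↦ i.elim0, fun i ↦ i.elim0⟩

lemma not_isPartialSubstaircase_of_lt {a : Fin n → ℕ} (h : n < m) :
    ¬ IsPartialSubstaircase d m a := by
  rintro ⟨-, φ, hφ, -⟩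
  have hle : m ≤ n := by simpa using Fintype.card_le_of_injective φ hφ.injective
  exact h.not_ge hle

lemma IsPartialSubstaircase.pred {a : Fin n → ℕ} (h : IsPartialSubstaircase d m a) :
    IsPartialSubstaircase d (m - 1) a := by
  obtain ⟨hlt, φ, hφ, hle⟩ := h
  refine ⟨hlt, φ ∘ Fin.castLE (Nat.sub_le m 1), hφ.comp (Fin.strictMono_castLE _), fun t ↦ ?_⟩
  simpa using hle (Fin.castLE _ t)

lemma IsPartialSubstaircase.of_init {c : Fin (n + 1) → ℕ}
    (h : IsPartialSubstaircase d m (Fin.init c)) (hlast : c (Fin.last n) < d) :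
    IsPartialSubstaircase d m c := by
  obtain ⟨hlt, φ, hφ, hle⟩ := h
  exact ⟨Fin.forall_fin_succ'.2 ⟨hlt, hlast⟩, Fin.castSucc ∘ φ, Fin.strictMono_castSucc.comp hφ,
    hle⟩

lemma IsPartialSubstaircase.succ_of_init {c : Fin (n + 1) → ℕ}
    (h : IsPartialSubstaircase d m (Fin.init c)) (hlast : c (Fin.last n) < d)
    (hlast' : c (Fin.last n) ≤ m) : IsPartialSubstaircase d (m + 1) c := by
  obtain ⟨hlt, φ, hφ, hle⟩ := h
  refine ⟨Fin.forall_fin_succ'.2 ⟨hlt, hlast⟩, Fin.snoc (Fin.castSucc ∘ φ) (Fin.last n), ?_, ?_⟩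
  · intro s t hst
    induction t using Fin.lastCases with
    | last =>
      obtain ⟨s, rfl⟩ := Fin.exists_castSucc_eq.2 hst.ne
      simp [Fin.castSucc_lt_last]
    | cast t =>
      obtain ⟨s, rfl⟩ := Fin.exists_castSucc_eq.2 (hst.trans (Fin.castSucc_lt_last t)).ne
      simpa using hφ (Fin.castSucc_lt_castSucc_iff.1 hst)
  · refine Fin.forall_fin_succ'.2 ⟨fun t ↦ ?_, by simpa using hlast'⟩
    simpa [Fin.init] using hle t

lemma IsPartialSubstaircase.init_of_ne_last {c : Fin (n + 1) → ℕ} (hlt : ∀ j, c j < d)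
    {φ : Fin m → Fin (n + 1)} (hφ : StrictMono φ) (hle : ∀ t, c (φ t) ≤ t)
    (hne : ∀ t, φ t ≠ Fin.last n) : IsPartialSubstaircase d m (Fin.init c) := by
  refine ⟨fun j ↦ hlt j.castSucc, fun t ↦ (φ t).castPred (hne t), fun s t hst ↦ ?_, fun t ↦ ?_⟩
  · simpa using hφ hst
  · simpa [Fin.init] using hle t

lemma isPartialSubstaircase_succ_iff {c : Fin (n + 1) → ℕ} :
    IsPartialSubstaircase d m c ↔ c (Fin.last n) < d ∧
      (c (Fin.last n) < m ∧ IsPartialSubstaircase d (m - 1) (Fin.init c) ∨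
        m ≤ c (Fin.last n) ∧ IsPartialSubstaircase d m (Fin.init c)) := by
  constructor
  · rintro ⟨hlt, φ, hφ, hle⟩
    refine ⟨hlt _, ?_⟩
    by_cases hne : ∀ t, φ t ≠ Fin.last n
    · have hinit := IsPartialSubstaircase.init_of_ne_last hlt hφ hle hne
      exact (lt_or_ge _ _).imp (⟨·, hinit.pred⟩) (⟨·, hinit⟩)
    · push Not at hne
      obtain ⟨t, ht⟩ := hne
      refine .inl ⟨(ht ▸ hle t).trans_lt t.isLt, ?_⟩
      have hmono : StrictMono (φ ∘ Fin.castLE (Nat.sub_le m 1)) :=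
        hφ.comp (Fin.strictMono_castLE _)
      refine .init_of_ne_last hlt hmono (fun s ↦ by simpa using hle (Fin.castLE _ s)) fun s hs ↦ ?_
      have hlt' : φ (Fin.castLE (Nat.sub_le m 1) s) < φ ⟨m - 1, Nat.sub_one_lt_of_lt t.isLt⟩ :=
        hφ s.isLt
      exact (Fin.le_last _).not_gt (hs.symm.trans_lt hlt')
  · rintro ⟨hd, ⟨hm, h⟩ | ⟨-, h⟩⟩
    · obtain ⟨m, rfl⟩ := Nat.exists_eq_succ_of_ne_zero (Nat.ne_zero_of_lt hm)
      exact h.succ_of_init hd (Nat.lt_succ_iff.1 hm)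
    · exact h.of_init hd

lemma isSubstaircase_iff_isPartialSubstaircase (hd : 1 ≤ d) {a : Fin n → ℕ} :
    IsSubstaircase n d a ↔ IsPartialSubstaircase d d a := by
  constructor
  · rintro ⟨s, ⟨φ, hφ, hval, hrest⟩, hle⟩
    refine ⟨fun j ↦ (hle j).trans_lt ?_, φ, hφ, fun t ↦ (hle _).trans_eq (hval t)⟩
    by_cases hj : ∃ t, j = φ t
    · obtain ⟨t, rfl⟩ := hj
      exact (hval t).trans_lt t.isLt
    · rw [hrest j (not_exists.1 hj)]
      omega
  · rintro ⟨hlt, φ, hφ, hle⟩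
    refine ⟨Function.extend φ (fun t ↦ (t : ℕ)) fun _ ↦ d - 1,
      ⟨φ, hφ, hφ.injective.extend_apply _ _, fun j hj ↦ ?_⟩, fun j ↦ ?_⟩
    · exact Function.extend_apply' _ _ _ fun ⟨t, ht⟩ ↦ hj t ht.symm
    · by_cases hj : ∃ t, φ t = j
      · obtain ⟨t, rfl⟩ := hj
        rw [hφ.injective.extend_apply]
        exact hle t
      · rw [Function.extend_apply' _ _ _ hj]
        exact Nat.le_sub_one_of_lt (hlt j)

/-- The exponent vectors `(a, b)` of the monomials `x ^ a * y ^ b` in `A_{n,k,d}`, see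
`Aset3_eq_image_xyMonomial`. -/
def basisExponents (n k d : ℕ) : Set ((Fin n → ℕ) × (Fin d → ℕ)) :=
  {a | IsPartialSubstaircase d d a} ×ˢ {b | ∀ i : Fin d, b i < k - d + ((i : ℕ) + 1)}

/-- The value at `x`, `y` of the monomial with exponent vectors `p = (a, b)`. -/
def xyMonomial {Q : Type*} [CommMonoid Q] (x : Fin n → Q) (y : Fin d → Q)
    (p : (Fin n → ℕ) × (Fin d → ℕ)) : Q :=
  (∏ j, x j ^ p.1 j) * ∏ i, y i ^ p.2 i

lemma map_xyMonomial {Q Q' F : Type*} [CommMonoid Q] [CommMonoid Q'] [FunLike F Q Q']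
    [MonoidHomClass F Q Q'] (φ : F) (x : Fin n → Q) (y : Fin d → Q)
    (p : (Fin n → ℕ) × (Fin d → ℕ)) :
    φ (xyMonomial x y p) = xyMonomial (φ ∘ x) (φ ∘ y) p := by
  simp [xyMonomial]

lemma Aset3_eq_image_xyMonomial {n k d : ℕ} (hd : 1 ≤ d) :
    Aset3 n k d =
      xyMonomial (X ∘ Sum.inl) (X ∘ Sum.inr ∘ Sum.inl) '' basisExponents n k d := by
  ext p
  simp only [Aset3, isSubstaircase_iff_isPartialSubstaircase hd]
  constructor
  · rintro ⟨a, b, ha, hb, rfl⟩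
    exact ⟨(a, b), ⟨ha, hb⟩, rfl⟩
  · rintro ⟨⟨a, b⟩, ⟨ha, hb⟩, rfl⟩
    exact ⟨a, b, ha, hb, rfl⟩

end PartialSubstaircase

section Counting

variable {d m n : ℕ}

/-- The number of maps `[n] → [d]` whose image contains `m` prescribed values, computed by recursion
on the value at a chosen point of `[n]`. -/
def coverCount (d : ℕ) : ℕ → ℕ → ℕ
  | 0, 0 => 1
  | 0, _ + 1 => 0
  | n + 1, m => m * coverCount d n (m - 1) + (d - m) * coverCount d n m

lemma coverCount_succ_left (h : m ≤ d) :
    coverCount (d + 1) n m = coverCount d n m + coverCount (d + 1) n (m + 1) := by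
  induction n generalizing m with
  | zero => cases m <;> simp [coverCount]
  | succ n ih =>
    obtain ⟨e, rfl⟩ := Nat.exists_eq_add_of_le h
    have hsub : m + e + 1 - m = e + 1 := by omega
    simp only [coverCount, Nat.add_sub_add_right, Nat.add_sub_cancel_left, Nat.add_sub_cancel, hsub]
    cases m with
    | zero => rw [ih h]; ring
    | succ m => rw [Nat.add_sub_cancel, ih (Nat.le_of_succ_le h), ih h]; ring

lemma coverCount_self (n d : ℕ) : coverCount d n d = d.factorial * stirling2 n d := by
  induction n generalizing d with
  | zero => cases d <;> simp [coverCount, stirling2]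
  | succ n ih =>
    cases d with
    | zero => simp [coverCount, stirling2]
    | succ d =>
      simp only [coverCount, stirling2, Nat.add_sub_cancel, Nat.sub_self]
      rw [coverCount_succ_left le_rfl, ih, ih, Nat.factorial_succ]
      ring

lemma card_subset_range {ι : Type*} [Finite ι] (n : ℕ) (S : Set ι) :
    Nat.card {f : Fin n → ι // S ⊆ Set.range f} = coverCount (Nat.card ι) n S.ncard := by
  classical
  have := Fintype.ofFinite ι
  induction n generalizing S with
  | zero =>
    rcases S.eq_empty_or_nonempty with rfl | hS
    · simp [coverCount]
    · obtain ⟨m, hm⟩ := Nat.exists_eq_succ_of_ne_zero hS.ncard_pos.ne'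
      simp [hm, coverCount, hS.ne_empty]
  | succ n ih =>
    have hcons (j : ι) (g : Fin n → ι) :
        S ⊆ Set.range (Fin.cons j g : Fin (n + 1) → ι) ↔ S \ {j} ⊆ Set.range g := by
      rw [Fin.range_cons, Set.sdiff_singleton_subset_iff]
    have e : {f : Fin (n + 1) → ι // S ⊆ Set.range f} ≃
        Σ j, {g : Fin n → ι // S \ {j} ⊆ Set.range g} :=
      ((Fin.consEquiv fun _ ↦ ι).symm.subtypeEquiv fun f ↦ by
        rw [← hcons]
        simp [Fin.consEquiv]).trans (Equiv.subtypeProdEquivSigmaSubtype _)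
    rw [Nat.card_congr e, Nat.card_sigma]
    simp_rw [ih]
    have hmem : ∀ j ∈ S.toFinset, coverCount (Nat.card ι) n (S \ {j}).ncard =
        coverCount (Nat.card ι) n (S.ncard - 1) := fun j hj ↦ by
      rw [Set.ncard_sdiff_singleton_of_mem (Set.mem_toFinset.1 hj)]
    have hnotMem : ∀ j ∈ S.toFinsetᶜ, coverCount (Nat.card ι) n (S \ {j}).ncard =
        coverCount (Nat.card ι) n S.ncard := fun j hj ↦ by
      rw [Set.sdiff_singleton_eq_self (by simpa using hj)]
    rw [← Finset.sum_add_sum_compl S.toFinset, Finset.sum_congr rfl hmem,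
      Finset.sum_congr rfl hnotMem]
    simp [coverCount, Finset.card_compl, Set.ncard_eq_toFinset_card']

lemma card_surjective (n d : ℕ) :
    Nat.card {f : Fin n → Fin d // Function.Surjective f} = d.factorial * stirling2 n d := by
  simpa [Set.univ_subset_iff, Set.range_eq_univ, Set.ncard_univ, coverCount_self] using
    card_subset_range n (Set.univ : Set (Fin d))

lemma finite_isPartialSubstaircase (n d m : ℕ) :
    {a : Fin n → ℕ | IsPartialSubstaircase d m a}.Finite :=
  (Set.Finite.pi fun _ ↦ Set.finite_Iio d).subset fun _ ha j _ ↦ ha.1 j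

lemma setOf_isPartialSubstaircase_succ (h : m ≤ d) :
    {c : Fin (n + 1) → ℕ | IsPartialSubstaircase d m c} =
      (Fin.snocEquiv fun _ ↦ ℕ) ''
        (Set.Iio m ×ˢ {a | IsPartialSubstaircase d (m - 1) a} ∪
          Set.Ico m d ×ˢ {a | IsPartialSubstaircase d m a}) := by
  ext c
  rw [Equiv.image_eq_preimage_symm]
  simp only [Set.mem_ofPred_eq, isPartialSubstaircase_succ_iff, Set.mem_preimage, Set.mem_union,
    Set.mem_prod, Set.mem_Iio, Set.mem_Ico]
  change _ ↔ c (Fin.last n) < m ∧ IsPartialSubstaircase d (m - 1) (Fin.init c) ∨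
    (m ≤ c (Fin.last n) ∧ c (Fin.last n) < d) ∧ IsPartialSubstaircase d m (Fin.init c)
  grind

lemma ncard_isPartialSubstaircase (n : ℕ) (h : m ≤ d) :
    {a : Fin n → ℕ | IsPartialSubstaircase d m a}.ncard = coverCount d n m := by
  induction n generalizing m with
  | zero =>
    cases m with
    | zero => simp [isPartialSubstaircase_zero_iff, coverCount, Set.ncard_univ]
    | succ m => simp [not_isPartialSubstaircase_of_lt, coverCount]
  | succ n ih =>
    have hdisj : Disjoint (Set.Iio m ×ˢ {a : Fin n → ℕ | IsPartialSubstaircase d (m - 1) a})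
        (Set.Ico m d ×ˢ {a | IsPartialSubstaircase d m a}) :=
      Set.Disjoint.set_prod_left (Set.disjoint_left.2 fun i hi hi' ↦ hi'.1.not_gt hi) _ _
    rw [setOf_isPartialSubstaircase_succ h, Set.ncard_image_of_injective _ (Equiv.injective _),
      Set.ncard_union_eq hdisj ((Set.finite_Iio m).prod (finite_isPartialSubstaircase n d _))
        ((Set.finite_Ico m d).prod (finite_isPartialSubstaircase n d m)),
      Set.ncard_prod, Set.ncard_prod, ih h, ih ((Nat.sub_le m 1).trans h)]
    simp [coverCount, Set.ncard_eq_toFinset_card']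

lemma prod_fin_sub_add_eq_descFactorial {k : ℕ} (h : d ≤ k) :
    ∏ i : Fin d, (k - d + ((i : ℕ) + 1)) = k.descFactorial d := by
  rw [Fin.prod_univ_eq_prod_range (fun i ↦ k - d + (i + 1)), Nat.descFactorial_eq_prod_range,
    ← Finset.prod_range_reflect]
  refine Finset.prod_congr rfl fun i hi ↦ ?_
  have := Finset.mem_range.1 hi
  omega

lemma ncard_basisExponents {n k d : ℕ} (hdk : d ≤ k) :
    (basisExponents n k d).ncard = k.descFactorial d * (d.factorial * stirling2 n d) := by
  have hb : {b : Fin d → ℕ | ∀ i, b i < k - d + ((i : ℕ) + 1)} =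
      Fintype.piFinset fun i : Fin d ↦ Finset.range (k - d + ((i : ℕ) + 1)) := by
    ext b
    simp
  rw [basisExponents, Set.ncard_prod, ncard_isPartialSubstaircase n le_rfl, coverCount_self, hb,
    Set.ncard_coe_finset, Fintype.card_piFinset]
  simp [prod_fin_sub_add_eq_descFactorial hdk, mul_comm]

lemma finite_basisExponents (n k d : ℕ) : (basisExponents n k d).Finite :=
  (finite_isPartialSubstaircase n d d).prod
    ((Set.Finite.pi fun i : Fin d ↦ Set.finite_Iio (k - d + ((i : ℕ) + 1))).subset
      fun _ hb i _ ↦ hb i)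

end Counting

section Spanning

open Lagrange (nodal)

universe u

theorem monomialSpan_eq_top_of_nodal_dvd {d k : ℕ} {R C : Type u} [CommRing R] [CommRing C]
    [Algebra R C] {y : Fin d → C} {f : Polynomial R} (hf : f.IsMonicOfDegree k) (hdk : d ≤ k)
    (hy : Algebra.adjoin R (Set.range y) = ⊤)
    (hdvd : nodal Finset.univ y ∣ f.map (algebraMap R C)) :
    monomialSpan R y {b | ∀ i : Fin d, b i < k - d + ((i : ℕ) + 1)} = ⊤ := by
  induction d generalizing R k with
  | zero => exact monomialSpan_eq_top_of_isEmpty hy ⟨0, fun i ↦ i.elim0⟩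
  | succ d ih =>
    cases subsingleton_or_nontrivial C
    · exact Subsingleton.elim _ _
    obtain ⟨k, rfl⟩ := Nat.exists_eq_add_of_le' (Nat.one_le_of_lt hdk)
    have hroot : Polynomial.aeval (y (Fin.last d)) f = 0 :=
      aeval_eq_zero_of_nodal_dvd hdvd (Finset.mem_univ _)
    obtain ⟨f₁, hf₁, hfactor⟩ := exists_map_eq_X_sub_C_mul hf hroot
    rw [nodal_univ_fin_succ, hfactor, mul_X_sub_C_dvd_mul_iff] at hdvd
    have hinit := ih hf₁ (by omega) (adjoin_range_init_eq_top hy) hdvd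
    rw [eq_top_iff, ← monomialSpan_eq_top_of_init hf.monic hroot hinit, hf.natDegree_eq]
    refine monomialSpan_mono y fun b hb ↦ Fin.forall_fin_succ'.2 ⟨fun i ↦ ?_, ?_⟩
    · have := hb.1 i
      simp only [Fin.init] at this
      simp only [Fin.val_castSucc]
      omega
    · have := hb.2
      simp only [Fin.val_last]
      omega

/-- The data on which the spanning argument for the `x`-monomials inducts: `g * h` kills every
`x i`, and every root of `g` is covered by the `x i`, as expressed by `g ∣ ∏ i, (X - x i)`. -/
structure IsRootCover {n : ℕ} (R : Type*) {C : Type*} [CommRing R] [CommRing C] [Algebra R C]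
    (x : Fin n → C) (g h : Polynomial R) : Prop where
  adjoin_eq_top : Algebra.adjoin R (Set.range x) = ⊤
  aeval_mul_eq_zero : ∀ i, Polynomial.aeval (x i) (g * h) = 0
  map_dvd_nodal : g.map (algebraMap R C) ∣ nodal Finset.univ x

lemma eq_top_of_sup_span_eq_top {R C : Type*} [CommRing R] [CommRing C] [Algebra R C]
    {T T' : Submodule R C} {v : C} (hT : T ⊔ (Ideal.span {v}).restrictScalars R = ⊤)
    (hT' : T' ⊔ (Ideal.torsionOf C C v).restrictScalars R = ⊤) (hv : ∀ z ∈ T', v * z ∈ T) :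
    T = ⊤ := by
  refine eq_top_iff.2 fun c _ ↦ ?_
  obtain ⟨w, hw, u, hu, rfl⟩ := Submodule.mem_sup.1 (hT ▸ Submodule.mem_top : c ∈ _)
  obtain ⟨c', rfl⟩ := Ideal.mem_span_singleton'.1 hu
  obtain ⟨w', hw', u', hu', rfl⟩ := Submodule.mem_sup.1 (hT' ▸ Submodule.mem_top : c' ∈ _)
  have hann : u' * v = 0 := (Ideal.mem_torsionOf_iff v u').1 hu'
  rw [add_mul, hann, add_zero, mul_comm]
  exact T.add_mem hw (hv w' hw')

namespace IsRootCover

variable {R C D : Type u} [CommRing R] [CommRing C] [CommRing D] [Algebra R C] [Algebra R D]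
variable {n d m e : ℕ} {g h : Polynomial R}

lemma comp {x : Fin n → C} (hx : IsRootCover R x g h) {f : C →ₐ[R] D}
    (hf : Function.Surjective f) : IsRootCover R (f ∘ x) g h where
  adjoin_eq_top := adjoin_range_comp_eq_top hf hx.adjoin_eq_top
  aeval_mul_eq_zero i := by
    rw [Function.comp_apply, Polynomial.aeval_algHom_apply, hx.aeval_mul_eq_zero, map_zero]
  map_dvd_nodal := by
    have hdvd := Polynomial.map_dvd (f : C →+* D) hx.map_dvd_nodal
    rw [nodal_map, Polynomial.map_map] at hdvd
    rwa [← f.comp_algebraMap]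

variable {x : Fin (n + 1) → C}

lemma exists_init_of_aeval_eq_zero [Nontrivial C] (hx : IsRootCover R x g h)
    (hg : g.IsMonicOfDegree (m + 1)) (hh : h.IsMonicOfDegree e)
    (hroot : Polynomial.aeval (x (Fin.last n)) g = 0) :
    ∃ g₁ h₁ : Polynomial (Algebra.adjoin R {x (Fin.last n)}), g₁.IsMonicOfDegree m ∧
      h₁.IsMonicOfDegree (e + 1) ∧
      IsRootCover (Algebra.adjoin R {x (Fin.last n)}) (Fin.init x) g₁ h₁ := by
  set a := x (Fin.last n)
  obtain ⟨g₁, hg₁, hfactor⟩ := exists_map_eq_X_sub_C_mul hg hroot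
  let a' : Algebra.adjoin R {a} := ⟨a, Algebra.self_mem_adjoin_singleton R a⟩
  refine ⟨g₁, (Polynomial.X - Polynomial.C a') * h.map (algebraMap R _), hg₁, ?_,
    adjoin_range_init_eq_top hx.adjoin_eq_top, fun i ↦ ?_, ?_⟩
  · rw [add_comm e]
    exact (Polynomial.isMonicOfDegree_X_sub_one a').mul (isMonicOfDegree_map _ hh)
  · have heval := congrArg (Polynomial.eval (Fin.init x i)) hfactor
    rw [Polynomial.eval_map_algebraMap, Polynomial.eval_mul, Polynomial.eval_map_algebraMap,
      Polynomial.eval_sub, Polynomial.eval_X, Polynomial.eval_C] at heval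
    have hzero : Polynomial.aeval (Fin.init x i) (g * h) = 0 := hx.aeval_mul_eq_zero i.castSucc
    rw [map_mul, heval] at hzero
    rw [map_mul, map_mul, map_sub, Polynomial.aeval_X, Polynomial.aeval_C,
      Polynomial.aeval_map_algebraMap, mul_left_comm, ← mul_assoc]
    exact hzero
  · have hdvd := hx.map_dvd_nodal
    rwa [nodal_univ_fin_succ, hfactor, mul_X_sub_C_dvd_mul_iff] at hdvd

lemma map_dvd_nodal_init (hx : IsRootCover R x g h) (f : C →ₐ[R] D)
    (hker : ∀ z, Polynomial.aeval (x (Fin.last n)) g * z = 0 → f z = 0) :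
    g.map (algebraMap R D) ∣ nodal Finset.univ (Fin.init (f ∘ x)) := by
  obtain ⟨q, hq⟩ := hx.map_dvd_nodal
  have hqroot : (q.map (f : C →+* D)).IsRoot (f (x (Fin.last n))) := by
    have heval := congrArg (Polynomial.eval (x (Fin.last n))) hq
    rw [Lagrange.eval_nodal_at_node (Finset.mem_univ _), Polynomial.eval_mul,
      Polynomial.eval_map_algebraMap] at heval
    exact (Polynomial.eval_map_apply (f : C →+* D) (x (Fin.last n))).trans (hker _ heval.symm)
  obtain ⟨q', hq'⟩ := Polynomial.dvd_iff_isRoot.2 hqroot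
  have hmap := congrArg (Polynomial.map (f : C →+* D)) hq
  rw [nodal_map, nodal_univ_fin_succ, Polynomial.map_mul, Polynomial.map_map, f.comp_algebraMap,
    hq', mul_left_comm] at hmap
  exact ⟨q', (Polynomial.monic_X_sub_C _).isRegular.left hmap⟩

lemma aeval_eq_zero_of_forall_mul_eq_zero (hx : IsRootCover R x g h) (f : C →ₐ[R] D)
    (hker : ∀ z, Polynomial.aeval (x (Fin.last n)) g * z = 0 → f z = 0) :
    Polynomial.aeval (f (x (Fin.last n))) h = 0 := by
  rw [Polynomial.aeval_algHom_apply]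
  exact hker _ (by rw [← map_mul, hx.aeval_mul_eq_zero])

lemma init_of_forall_mul_eq_zero (hx : IsRootCover R x g h) {f : C →ₐ[R] D}
    (hf : Function.Surjective f)
    (hker : ∀ z, Polynomial.aeval (x (Fin.last n)) g * z = 0 → f z = 0) :
    IsRootCover (Algebra.adjoin R {(f ∘ x) (Fin.last n)}) (Fin.init (f ∘ x))
      (g.map (algebraMap R _)) (h.map (algebraMap R _)) where
  adjoin_eq_top := adjoin_range_init_eq_top (hx.comp hf).adjoin_eq_top
  aeval_mul_eq_zero i := by
    rw [← Polynomial.map_mul, Polynomial.aeval_map_algebraMap]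
    exact (hx.comp hf).aeval_mul_eq_zero i.castSucc
  map_dvd_nodal := by
    rw [Polynomial.map_map, ← IsScalarTower.algebraMap_eq]
    exact hx.map_dvd_nodal_init f hker

lemma monomialSpan_eq_top_of_isEmpty {x : Fin 0 → C} [Nontrivial C] (hx : IsRootCover R x g h)
    (hg : g.IsMonicOfDegree m) : monomialSpan R x {a | IsPartialSubstaircase d m a} = ⊤ := by
  have hone : g.map (algebraMap R C) = 1 := (hg.monic.map _).eq_one_of_isUnit
    (isUnit_of_dvd_one (by simpa using hx.map_dvd_nodal))
  have hm : m = 0 := by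
    rw [← hg.natDegree_eq, ← hg.monic.natDegree_map (algebraMap R C), hone,
      Polynomial.natDegree_one]
  subst hm
  exact _root_.monomialSpan_eq_top_of_isEmpty hx.adjoin_eq_top
    ⟨0, isPartialSubstaircase_zero_iff.2 fun i ↦ i.elim0⟩

lemma monomialSpan_eq_top_of_aeval_eq_zero (hg : g.IsMonicOfDegree (m + 1)) (hd : m + 1 ≤ d)
    (hroot : Polynomial.aeval (x (Fin.last n)) g = 0)
    (hinit : monomialSpan (Algebra.adjoin R {x (Fin.last n)}) (Fin.init x)
      {a | IsPartialSubstaircase d m a} = ⊤) :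
    monomialSpan R x {a | IsPartialSubstaircase d (m + 1) a} = ⊤ := by
  rw [eq_top_iff, ← monomialSpan_eq_top_of_init hg.monic hroot hinit, hg.natDegree_eq]
  exact monomialSpan_mono x fun c hc ↦
    hc.1.succ_of_init (hc.2.trans_le hd) (Nat.lt_succ_iff.1 hc.2)

theorem monomialSpan_eq_top {x : Fin n → C} (hx : IsRootCover R x g h) (hg : g.IsMonicOfDegree m)
    (hh : h.IsMonicOfDegree e) (hd : m + e = d) :
    monomialSpan R x {a | IsPartialSubstaircase d m a} = ⊤ := by
  induction n generalizing R C m e with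
  | zero =>
    cases subsingleton_or_nontrivial C
    · exact Subsingleton.elim _ _
    · exact hx.monomialSpan_eq_top_of_isEmpty hg
  | succ n ih =>
    set v := Polynomial.aeval (x (Fin.last n)) g with hv
    refine eq_top_of_sup_span_eq_top (v := v)
      (T' := monomialSpan R x {c | Fin.init c ∈ {a | IsPartialSubstaircase d m a} ∧
        c (Fin.last n) < e}) ?_ ?_ fun z hz ↦ ?_
    · -- In `C ⧸ (v)` the last variable is a root of `g`.
      cases m with
      | zero => simp [hv, Polynomial.isMonicOfDegree_zero_iff.1 hg]
      | succ m =>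
        refine monomialSpan_sup_restrictScalars_eq_top _ ?_
        cases subsingleton_or_nontrivial (C ⧸ Ideal.span {v})
        · exact Subsingleton.elim _ _
        have hroot : Polynomial.aeval (Ideal.Quotient.mkₐ R (.span {v}) (x (Fin.last n))) g = 0 :=
          (Polynomial.aeval_algHom_apply _ _ g).trans
            (Ideal.Quotient.eq_zero_iff_mem.2 (Ideal.mem_span_singleton_self v))
        obtain ⟨g₁, h₁, hg₁, hh₁, hx₁⟩ :=
          (hx.comp (Ideal.Quotient.mkₐ_surjective R _)).exists_init_of_aeval_eq_zero hg hh hroot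
        exact monomialSpan_eq_top_of_aeval_eq_zero hg (by omega) hroot (ih hx₁ hg₁ hh₁ (by omega))
    · -- Modulo the annihilator of `v` the last variable is a root of `h`.
      set I := Ideal.torsionOf C C v
      refine monomialSpan_sup_restrictScalars_eq_top I ?_
      cases subsingleton_or_nontrivial (C ⧸ I)
      · exact Subsingleton.elim _ _
      have hker (z : C) (hz : v * z = 0) : Ideal.Quotient.mkₐ R I z = 0 :=
        Ideal.Quotient.eq_zero_iff_mem.2 ((Ideal.mem_torsionOf_iff v z).2 (by rwa [mul_comm] at hz))
      have hroot := hx.aeval_eq_zero_of_forall_mul_eq_zero _ hker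
      have hinit := hx.init_of_forall_mul_eq_zero (Ideal.Quotient.mkₐ_surjective R I) hker
      rw [← hh.natDegree_eq]
      exact monomialSpan_eq_top_of_init hh.monic hroot
        (ih hinit (isMonicOfDegree_map _ hg) (isMonicOfDegree_map _ hh) hd)
    · refine monomialSpan_mono x (fun c hc ↦ ?_) (aeval_mul_mem_monomialSpan g hz)
      rw [hg.natDegree_eq, hd] at hc
      exact hc.1.of_init hc.2

end IsRootCover

theorem span_mul_eq_top_of_nodal_dvd {n d k : ℕ} {S Q : Type u} [CommRing S] [CommRing Q]
    [Algebra S Q] {x : Fin n → Q} {y : Fin d → Q} {f : Polynomial S} (hf : f.IsMonicOfDegree k)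
    (hdk : d ≤ k) (hgen : Algebra.adjoin S (Set.range y ∪ Set.range x) = ⊤)
    (hy : nodal Finset.univ y ∣ f.map (algebraMap S Q))
    (hx : nodal Finset.univ y ∣ nodal Finset.univ x)
    (hroot : ∀ i, (nodal Finset.univ y).eval (x i) = 0) :
    Submodule.span S (xyMonomial x y '' basisExponents n k d) = ⊤ := by
  cases subsingleton_or_nontrivial Q
  · exact Subsingleton.elim _ _
  let B := Algebra.adjoin S (Set.range y)
  let y' : Fin d → B := fun i ↦ ⟨y i, Algebra.subset_adjoin ⟨i, rfl⟩⟩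
  have hnodal : (nodal Finset.univ y').map (algebraMap B Q) = nodal Finset.univ y :=
    nodal_map _ _ _
  have hcover : IsRootCover B x (nodal Finset.univ y') 1 :=
    { adjoin_eq_top := adjoin_adjoin_eq_top hgen
      aeval_mul_eq_zero i := by
        rw [mul_one, ← Polynomial.eval_map_algebraMap, hnodal, hroot]
      map_dvd_nodal := by rwa [hnodal] }
  have hxspan : monomialSpan B x {a | IsPartialSubstaircase d d a} = ⊤ :=
    hcover.monomialSpan_eq_top (m := d) (e := 0) ⟨by simp, Lagrange.nodal_monic⟩
      (Polynomial.isMonicOfDegree_zero_iff.2 rfl) rfl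
  have hyspan : monomialSpan S y' {b | ∀ i : Fin d, b i < k - d + ((i : ℕ) + 1)} = ⊤ := by
    refine monomialSpan_eq_top_of_nodal_dvd hf hdk ?_ ?_
    · rw [← Algebra.adjoin_adjoin_coe_preimage (R := S) (s := Set.range y)]
      congr 1
      ext z
      simp [y', Subtype.ext_iff]
    · rwa [← hnodal, IsScalarTower.algebraMap_eq S B Q, ← Polynomial.map_map,
        Polynomial.map_dvd_map _ Subtype.val_injective Lagrange.nodal_monic] at hy
  have hspan := Submodule.span_smul_of_span_eq_top hyspan
    ((fun c ↦ ∏ j, x j ^ c j) '' {a | IsPartialSubstaircase d d a})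
  rw [← monomialSpan, hxspan, Submodule.restrictScalars_top] at hspan
  rw [eq_top_iff, ← hspan]
  refine Submodule.span_mono ?_
  rintro _ ⟨_, ⟨b, hb, rfl⟩, _, ⟨a, ha, rfl⟩, rfl⟩
  refine ⟨(a, b), ⟨ha, hb⟩, ?_⟩
  simp [xyMonomial, Subalgebra.smul_def, y', mul_comm]

end Spanning

section Independence

lemma linearIndependent_of_injective_algHom {ι S Q : Type*} [Finite ι] [CommRing S] [IsDomain S]
    [CommRing Q] [Algebra S Q] {ev : ι → Q →ₐ[S] S} (hev : Function.Injective ev) {v : ι → Q}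
    (hspan : Submodule.span S (Set.range v) = ⊤) : LinearIndependent S v := by
  classical
  have := Fintype.ofFinite ι
  let M : Matrix ι ι S := .of fun i j ↦ ev i (v j)
  have hdet : M.det ≠ 0 := by
    intro hdet
    obtain ⟨c, hc, hcM⟩ := Matrix.exists_vecMul_eq_zero_iff.2 hdet
    -- The relation `c` between the rows holds on all of `Q`, against Dedekind's theorem.
    have hrel : ∑ i, c i • (ev i).toLinearMap = 0 := by
      refine LinearMap.ext_on_range hspan fun j ↦ ?_
      simpa [M, Matrix.vecMul, dotProduct] using congrFun hcM j
    exact hc (funext (Fintype.linearIndependent_iff.1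
      ((linearIndependent_toLinearMap S Q S).comp ev hev) c hrel))
  refine Fintype.linearIndependent_iff.2 fun c hc ↦ congrFun
    (Matrix.eq_zero_of_mulVec_eq_zero hdet (funext fun i ↦ ?_))
  simpa [M, Matrix.mulVec, dotProduct, mul_comm] using congrArg (ev i) hc

variable {ι R S M N : Type*} [CommSemiring R] [Semiring S] [Algebra R S] [AddCommMonoid M]
  [Module S M] [AddCommMonoid N] [Module R N] [Module S N] [IsScalarTower R S N]

open scoped Pointwise

lemma linearIndepOn_range_smul {b : ι → S} (hb : LinearIndependent R b) {f : M →ₗ[S] N}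
    {s : Set M} (hs : LinearIndepOn S f s) : LinearIndepOn R f (Set.range b • s) := by
  have himage : Set.range b • s = (fun p : ι × s ↦ b p.1 • (p.2 : M)) '' Set.univ := by
    ext
    simp [Set.mem_smul]
  rw [himage]
  refine LinearIndepOn.image_of_comp _ f (linearIndepOn_univ_iff.2 ?_)
  convert linearIndependent_smul hb hs using 2
  simp

lemma span_image_range_smul {b : ι → S} (hb : Submodule.span R (Set.range b) = ⊤)
    {f : M →ₗ[S] N} {s : Set M} (hs : Submodule.span S (f '' s) = ⊤) :
    Submodule.span R (f '' (Set.range b • s)) = ⊤ := by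
  have himage : f '' (Set.range b • s) = Set.range b • f '' s := Set.image_image2_distrib_right
    fun c m ↦ map_smul f c m
  rw [himage, Submodule.span_smul_of_span_eq_top hb, hs, Submodule.restrictScalars_top]

end Independence

section Quotient

open Lagrange (nodal)

open scoped Pointwise

variable {n k d : ℕ}

instance isScalarTowerTQ3 : IsScalarTower ℚ (MvPolynomial (Fin k) ℚ)
    (MvPolynomial (Fin n ⊕ Fin d ⊕ Fin k) ℚ) :=
  .of_algebraMap_eq fun q ↦ ((rename (Sum.inr ∘ Sum.inr) :
    MvPolynomial (Fin k) ℚ →ₐ[ℚ] MvPolynomial (Fin n ⊕ Fin d ⊕ Fin k) ℚ).commutes q).symm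

lemma algebraMap_eq_rename (p : MvPolynomial (Fin k) ℚ) :
    algebraMap _ (MvPolynomial (Fin n ⊕ Fin d ⊕ Fin k) ℚ) p = rename (Sum.inr ∘ Sum.inr) p :=
  rfl

lemma AsetT_eq_range_basisMonomials_smul :
    AsetT n k d = Set.range (basisMonomials (Fin k) ℚ) • Aset3 n k d := by
  have hmul (c : Fin k → ℕ) (q : MvPolynomial (Fin n ⊕ Fin d ⊕ Fin k) ℚ) :
      q * ∏ i, X (Sum.inr (Sum.inr i)) ^ c i =
        basisMonomials (Fin k) ℚ (Finsupp.equivFunOnFinite.symm c) • q := by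
    simp only [Algebra.smul_def, mul_comm, coe_basisMonomials, monomial_eq]
    simp [algebraMap_eq_rename, Finsupp.prod_fintype]
  ext p
  constructor
  · rintro ⟨q, hq, c, rfl⟩
    exact Set.mem_smul.2 ⟨_, ⟨_, rfl⟩, q, hq, (hmul c q).symm⟩
  · rintro ⟨_, ⟨c, rfl⟩, q, hq, rfl⟩
    exact ⟨q, hq, c, by simp [hmul]⟩

lemma forall_mem_JtgensQ_eq_zero_iff {Q : Type*} [CommRing Q] [Nontrivial Q] [Algebra ℚ Q]
    (φ : MvPolynomial (Fin n ⊕ Fin d ⊕ Fin k) ℚ →ₐ[ℚ] Q) (hk : d ≤ k) (hn : d ≤ n) :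
    (∀ g ∈ JtgensQ n k d, φ g = 0) ↔
      nodal Finset.univ (φ ∘ X ∘ Sum.inr ∘ Sum.inl) ∣
        nodal Finset.univ (φ ∘ X ∘ Sum.inr ∘ Sum.inr) ∧
      nodal Finset.univ (φ ∘ X ∘ Sum.inr ∘ Sum.inl) ∣ nodal Finset.univ (φ ∘ X ∘ Sum.inl) ∧
      ∀ i, (nodal Finset.univ (φ ∘ X ∘ Sum.inr ∘ Sum.inl)).eval (φ (X (Sum.inl i))) = 0 := by
  have hrename {ι : Type} (g : ι → Fin n ⊕ Fin d ⊕ Fin k) (p : MvPolynomial ι ℚ) :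
      φ (rename g p) = aeval (φ ∘ X ∘ g) p := by
    rw [aeval_unique φ, aeval_rename, ← aeval_unique φ]
    rfl
  have hTY (r : ℕ) : φ (genTY3 n k d r) =
      esymmDiff ℚ (φ ∘ X ∘ Sum.inr ∘ Sum.inr) (φ ∘ X ∘ Sum.inr ∘ Sum.inl) r := by
    simp [genTY3, eT3, hY3, esymmDiff, hrename]
  have hXY (r : ℕ) : φ (genXY3 n k d r) =
      esymmDiff ℚ (φ ∘ X ∘ Sum.inl) (φ ∘ X ∘ Sum.inr ∘ Sum.inl) r := by
    simp [genXY3, eX3, hY3, esymmDiff, hrename]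
  have hPow (i : Fin n) : φ (genPow3 n k d i) =
      (nodal Finset.univ (φ ∘ X ∘ Sum.inr ∘ Sum.inl)).eval (φ (X (Sum.inl i))) := by
    simp [genPow3, eY3, eval_nodal_eq_sum_esymm (R := ℚ), hrename]
  rw [nodal_dvd_nodal_iff_esymmDiff_eq_zero (R := ℚ) (by simpa),
    nodal_dvd_nodal_iff_esymmDiff_eq_zero (R := ℚ) (by simpa)]
  simp only [Fintype.card_fin, ← hTY, ← hXY, ← hPow, JtgensQ]
  constructor
  · exact fun h ↦ ⟨fun r hr ↦ h _ (.inl (.inl ⟨r, hr, rfl⟩)),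
      fun r hr ↦ h _ (.inl (.inr ⟨r, hr, rfl⟩)), fun i ↦ h _ (.inr ⟨i, rfl⟩)⟩
  · rintro ⟨hT, hX, hP⟩ _ ((⟨r, hr, rfl⟩ | ⟨r, hr, rfl⟩) | ⟨i, rfl⟩)
    exacts [hT r hr, hX r hr, hP i]

/-- The evaluation `y i ↦ t (σ i)`, `x j ↦ t (σ (τ j))` of `ℚ[x,y,t]` in `ℚ[t]`. -/
noncomputable def evalPoint (σ : Fin d → Fin k) (τ : Fin n → Fin d) :
    MvPolynomial (Fin n ⊕ Fin d ⊕ Fin k) ℚ →ₐ[MvPolynomial (Fin k) ℚ] MvPolynomial (Fin k) ℚ where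
  toRingHom := (aeval (Sum.elim (X ∘ σ ∘ τ) (Sum.elim (X ∘ σ) X)) :
    MvPolynomial (Fin n ⊕ Fin d ⊕ Fin k) ℚ →ₐ[ℚ] MvPolynomial (Fin k) ℚ).toRingHom
  commutes' p := (aeval_rename _ _ p).trans (aeval_X_left_apply p)

lemma evalPoint_X (σ : Fin d → Fin k) (τ : Fin n → Fin d) (v : Fin n ⊕ Fin d ⊕ Fin k) :
    evalPoint σ τ (X v) = Sum.elim (X ∘ σ ∘ τ) (Sum.elim (X ∘ σ) X) v :=
  aeval_X _ v

lemma nodal_comp_dvd_nodal {ι κ C : Type*} [Fintype ι] [Fintype κ] [CommRing C] {f : ι → κ}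
    (hf : Function.Injective f) (v : κ → C) :
    nodal Finset.univ (v ∘ f) ∣ nodal Finset.univ v := by
  have hmap : nodal Finset.univ (v ∘ f) = nodal (Finset.univ.map ⟨f, hf⟩) v := by
    simp [nodal]
  exact hmap ▸ Finset.prod_dvd_prod_of_subset _ _ _ (Finset.subset_univ _)

lemma nodal_dvd_nodal_comp {ι κ C : Type*} [Fintype ι] [Fintype κ] [CommRing C] {f : ι → κ}
    (hf : Function.Surjective f) (v : κ → C) :
    nodal Finset.univ v ∣ nodal Finset.univ (v ∘ f) := by
  simpa [Function.comp_assoc, Function.comp_surjInv hf] using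
    nodal_comp_dvd_nodal (Function.injective_surjInv hf) (v ∘ f)

lemma evalPoint_eq_zero_of_mem_JtgensQ {σ : Fin d → Fin k} (hσ : Function.Injective σ)
    {τ : Fin n → Fin d} (hτ : Function.Surjective τ) {g} (hg : g ∈ JtgensQ n k d) :
    evalPoint σ τ g = 0 := by
  refine (forall_mem_JtgensQ_eq_zero_iff ((evalPoint σ τ).restrictScalars ℚ)
    (by simpa using Fintype.card_le_of_injective σ hσ)
    (by simpa using Fintype.card_le_of_surjective τ hτ)).2 ?_ g hg
  have hx : evalPoint σ τ ∘ X ∘ Sum.inl = X ∘ σ ∘ τ :=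
    _root_.funext fun j ↦ evalPoint_X σ τ (.inl j)
  have hy : evalPoint σ τ ∘ X ∘ Sum.inr ∘ Sum.inl = X ∘ σ :=
    _root_.funext fun i ↦ evalPoint_X σ τ (.inr (.inl i))
  have ht : evalPoint σ τ ∘ X ∘ Sum.inr ∘ Sum.inr = X :=
    _root_.funext fun i ↦ evalPoint_X σ τ (.inr (.inr i))
  simp only [AlgHom.coe_restrictScalars', hx, hy, ht]
  refine ⟨nodal_comp_dvd_nodal hσ X, nodal_dvd_nodal_comp hτ (X ∘ σ), fun i ↦ ?_⟩
  rw [evalPoint_X]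
  exact Lagrange.eval_nodal_at_node (v := X ∘ σ) (Finset.mem_univ (τ i))

/-- The points at which the quotient by `JtgensQ n k d` is evaluated: `t` is generic, `y` consists
of `d` distinct entries of `t`, and `x` runs through all entries of `y`. -/
abbrev EvalIndex (n k d : ℕ) : Type :=
  (Fin d ↪ Fin k) × {τ : Fin n → Fin d // Function.Surjective τ}

lemma card_evalIndex (hdk : d ≤ k) :
    Nat.card (EvalIndex n k d) = (basisExponents n k d).ncard := by
  rw [Nat.card_prod, card_surjective, ncard_basisExponents hdk, Nat.card_eq_fintype_card,
    Fintype.card_embedding_eq, Fintype.card_fin, Fintype.card_fin]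

/-- The evaluation `evalPoint` on the quotient by the ideal generated by `JtgensQ n k d`. -/
noncomputable def evalQuotient (p : EvalIndex n k d) :
    MvPolynomial (Fin n ⊕ Fin d ⊕ Fin k) ℚ ⧸ Ideal.span (JtgensQ n k d)
      →ₐ[MvPolynomial (Fin k) ℚ] MvPolynomial (Fin k) ℚ :=
  Ideal.Quotient.liftₐ _ (evalPoint p.1 p.2) fun _ hg ↦
    (Ideal.span_le (I := RingHom.ker (evalPoint (n := n) p.1 p.2))).2
      (fun _ hg ↦ evalPoint_eq_zero_of_mem_JtgensQ p.1.injective p.2.2 hg) hg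

lemma evalQuotient_mk (p : EvalIndex n k d) (g : MvPolynomial (Fin n ⊕ Fin d ⊕ Fin k) ℚ) :
    evalQuotient p (Ideal.Quotient.mk _ g) = evalPoint p.1 p.2 g :=
  rfl

lemma evalQuotient_injective :
    Function.Injective (evalQuotient (n := n) (k := k) (d := d)) := by
  rintro ⟨σ, τ, hτ⟩ ⟨σ', τ', hτ'⟩ heq
  have happly (v) := DFunLike.congr_fun heq (Ideal.Quotient.mk _ (X v))
  simp only [evalQuotient_mk, evalPoint_X] at happly
  obtain rfl : σ = σ' := DFunLike.ext _ _ fun i ↦ X_injective (happly (Sum.inr (Sum.inl i)))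
  obtain rfl : τ = τ' := _root_.funext fun j ↦ σ.injective (X_injective (happly (Sum.inl j)))
  rfl

variable (n k d) in
/-- The image of the variables in the quotient by the ideal generated by `JtgensQ n k d`. -/
noncomputable def quotientVar (v : Fin n ⊕ Fin d ⊕ Fin k) :
    MvPolynomial (Fin n ⊕ Fin d ⊕ Fin k) ℚ ⧸ Ideal.span (JtgensQ n k d) :=
  Ideal.Quotient.mk _ (X v)

lemma quotientVar_inr_inr (i : Fin k) :
    quotientVar n k d (Sum.inr (Sum.inr i)) = algebraMap (MvPolynomial (Fin k) ℚ) _ (X i) := by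
  rw [quotientVar, ← Ideal.Quotient.mk_algebraMap, algebraMap_eq_rename, rename_X]
  rfl

lemma adjoin_quotientVar_eq_top :
    Algebra.adjoin (MvPolynomial (Fin k) ℚ) (Set.range (quotientVar n k d ∘ Sum.inr ∘ Sum.inl) ∪
      Set.range (quotientVar n k d ∘ Sum.inl)) = ⊤ := by
  refine eq_top_iff.2 fun z _ ↦ ?_
  obtain ⟨p, rfl⟩ := Ideal.Quotient.mk_surjective z
  induction p using MvPolynomial.induction_on with
  | C a =>
    rw [← algebraMap_eq, IsScalarTower.algebraMap_apply ℚ (MvPolynomial (Fin k) ℚ)]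
    exact Subalgebra.algebraMap_mem _ _
  | add p q hp hq =>
    rw [map_add]
    exact add_mem (hp trivial) (hq trivial)
  | mul_X p v hp =>
    rw [map_mul]
    refine mul_mem (hp trivial) ?_
    obtain j | i | i := v
    · exact Algebra.subset_adjoin (.inr ⟨j, rfl⟩)
    · exact Algebra.subset_adjoin (.inl ⟨i, rfl⟩)
    · change quotientVar n k d _ ∈ _
      exact quotientVar_inr_inr (n := n) (d := d) i ▸ Subalgebra.algebraMap_mem _ (X i)

lemma span_xyMonomial_quotientVar_eq_top (hk : d ≤ k) (hn : d ≤ n) :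
    Submodule.span (MvPolynomial (Fin k) ℚ)
      (xyMonomial (quotientVar n k d ∘ Sum.inl) (quotientVar n k d ∘ Sum.inr ∘ Sum.inl) ''
        basisExponents n k d) = ⊤ := by
  cases subsingleton_or_nontrivial
    (MvPolynomial (Fin n ⊕ Fin d ⊕ Fin k) ℚ ⧸ Ideal.span (JtgensQ n k d))
  · exact Subsingleton.elim _ _
  obtain ⟨hyt, hyx, hroot⟩ := (forall_mem_JtgensQ_eq_zero_iff
    (Ideal.Quotient.mkₐ ℚ (Ideal.span (JtgensQ n k d))) hk hn).1
    fun g hg ↦ Ideal.Quotient.eq_zero_iff_mem.2 (Ideal.subset_span hg)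
  refine span_mul_eq_top_of_nodal_dvd (f := nodal Finset.univ X) ⟨by simp, Lagrange.nodal_monic⟩
    hk adjoin_quotientVar_eq_top ?_ hyx hroot
  have ht : algebraMap (MvPolynomial (Fin k) ℚ) _ ∘ X = quotientVar n k d ∘ Sum.inr ∘ Sum.inr :=
    _root_.funext fun i ↦ (quotientVar_inr_inr i).symm
  rw [nodal_map, ht]
  exact hyt

lemma linearIndepOn_xyMonomial_quotientVar (hk : d ≤ k) (hn : d ≤ n) :
    LinearIndepOn (MvPolynomial (Fin k) ℚ)
      (xyMonomial (quotientVar n k d ∘ Sum.inl) (quotientVar n k d ∘ Sum.inr ∘ Sum.inl))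
      (basisExponents n k d) := by
  have : Finite (basisExponents n k d) := finite_basisExponents n k d
  have e : basisExponents n k d ≃ EvalIndex n k d :=
    (Finite.equivFinOfCardEq (Nat.card_coe_set_eq _)).trans
      (Finite.equivFinOfCardEq (card_evalIndex hk)).symm
  refine linearIndependent_of_injective_algHom (evalQuotient_injective.comp e.injective) ?_
  rw [← Set.image_eq_range]
  exact span_xyMonomial_quotientVar_eq_top hk hn

/-- The classes of the monomials in `A_{n,k,d}`, indexed by exponent vectors, as a basis over
`ℚ[t]`. -/
noncomputable def quotientBasis (hk : d ≤ k) (hn : d ≤ n) :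
    Module.Basis (basisExponents n k d) (MvPolynomial (Fin k) ℚ)
      (MvPolynomial (Fin n ⊕ Fin d ⊕ Fin k) ℚ ⧸ Ideal.span (JtgensQ n k d)) :=
  .mk (linearIndepOn_xyMonomial_quotientVar hk hn) <| by
    rw [← Set.image_eq_range, span_xyMonomial_quotientVar_eq_top hk hn]

lemma factorial_mul_factorial_div_factorial_sub (hk : d ≤ k) :
    k.factorial * d.factorial / (k - d).factorial = k.descFactorial d * d.factorial := by
  rw [← Nat.factorial_mul_descFactorial hk, mul_assoc,
    Nat.mul_div_cancel_left _ (Nat.factorial_pos _)]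

lemma rank_quotient_span_JtgensQ (hk : d ≤ k) (hn : d ≤ n) :
    Module.rank (MvPolynomial (Fin k) ℚ)
        (MvPolynomial (Fin n ⊕ Fin d ⊕ Fin k) ℚ ⧸ Ideal.span (JtgensQ n k d)) =
      (k.factorial * d.factorial / (k - d).factorial * stirling2 n d : ℕ) := by
  rw [← (quotientBasis hk hn).mk_eq_rank'', ← Set.cast_ncard (finite_basisExponents n k d),
    ncard_basisExponents hk, factorial_mul_factorial_div_factorial_sub hk, mul_assoc]

lemma mk_comp_xyMonomial :
    Ideal.Quotient.mk (Ideal.span (JtgensQ n k d)) ∘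
        xyMonomial (X ∘ Sum.inl) (X ∘ Sum.inr ∘ Sum.inl) =
      xyMonomial (quotientVar n k d ∘ Sum.inl) (quotientVar n k d ∘ Sum.inr ∘ Sum.inl) :=
  _root_.funext (map_xyMonomial _ _ _)

lemma linearIndepOn_mk_Aset3 (hd : 1 ≤ d) (hk : d ≤ k) (hn : d ≤ n) :
    LinearIndepOn (MvPolynomial (Fin k) ℚ) (Ideal.Quotient.mk (Ideal.span (JtgensQ n k d)))
      (Aset3 n k d) := by
  rw [Aset3_eq_image_xyMonomial hd]
  refine LinearIndepOn.image_of_comp _ _ ?_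
  rw [mk_comp_xyMonomial]
  exact linearIndepOn_xyMonomial_quotientVar hk hn

lemma span_mk_image_Aset3_eq_top (hd : 1 ≤ d) (hk : d ≤ k) (hn : d ≤ n) :
    Submodule.span (MvPolynomial (Fin k) ℚ)
      (Ideal.Quotient.mk (Ideal.span (JtgensQ n k d)) '' Aset3 n k d) = ⊤ := by
  rw [Aset3_eq_image_xyMonomial hd, ← Set.image_comp, mk_comp_xyMonomial]
  exact span_xyMonomial_quotientVar_eq_top hk hn

end Quotient

theorem AsetT_descends_to_basis_general (n k d : ℕ) (hd : 1 ≤ d) (hk : d ≤ k) (hn : d ≤ n) :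
    (LinearIndependent ℚ (fun p : AsetT n k d =>
        Ideal.Quotient.mk (Ideal.span (JtgensQ n k d))
          (p : MvPolynomial (Fin n ⊕ Fin d ⊕ Fin k) ℚ)) ∧
      Submodule.span ℚ
        (⇑(Ideal.Quotient.mk (Ideal.span (JtgensQ n k d))) '' AsetT n k d) = ⊤) ∧
    (LinearIndependent (MvPolynomial (Fin k) ℚ) (fun p : Aset3 n k d =>
        Ideal.Quotient.mk (Ideal.span (JtgensQ n k d))
          (p : MvPolynomial (Fin n ⊕ Fin d ⊕ Fin k) ℚ)) ∧
      Submodule.span (MvPolynomial (Fin k) ℚ)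
        (⇑(Ideal.Quotient.mk (Ideal.span (JtgensQ n k d))) '' Aset3 n k d) = ⊤) ∧
    Module.Free (MvPolynomial (Fin k) ℚ)
      (MvPolynomial (Fin n ⊕ Fin d ⊕ Fin k) ℚ ⧸ Ideal.span (JtgensQ n k d)) ∧
    Module.rank (MvPolynomial (Fin k) ℚ)
        (MvPolynomial (Fin n ⊕ Fin d ⊕ Fin k) ℚ ⧸ Ideal.span (JtgensQ n k d)) =
      ((Nat.factorial k * Nat.factorial d / Nat.factorial (k - d) * stirling2 n d : ℕ) :
        Cardinal) := by
  let π := (Ideal.Quotient.mkₐ (MvPolynomial (Fin k) ℚ) (Ideal.span (JtgensQ n k d))).toLinearMap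
  have hli : LinearIndepOn _ π (Aset3 n k d) := linearIndepOn_mk_Aset3 hd hk hn
  have hspan : Submodule.span _ (π '' Aset3 n k d) = ⊤ := span_mk_image_Aset3_eq_top hd hk hn
  have hliT : LinearIndepOn ℚ π (AsetT n k d) := by
    rw [AsetT_eq_range_basisMonomials_smul]
    exact linearIndepOn_range_smul (basisMonomials (Fin k) ℚ).linearIndependent hli
  have hspanT : Submodule.span ℚ (π '' AsetT n k d) = ⊤ := by
    rw [AsetT_eq_range_basisMonomials_smul]
    exact span_image_range_smul (basisMonomials (Fin k) ℚ).span_eq hspan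
  exact ⟨⟨hliT, hspanT⟩, ⟨hli, hspan⟩, .of_basis (quotientBasis hk hn),
    rank_quotient_span_JtgensQ hk hn⟩

/-- The set `A_{n,k,d}^t` descends to a `ℚ`-vector space basis of
`ℚ[x,y,t]/J_{n,k,d}^{ℚ,t}`; equivalently, `A_{n,k,d}` descends to a
`ℚ[t_1,…,t_k]`-module basis of this quotient, so the quotient is a free
`ℚ[t_1,…,t_k]`-module of rank `(k!·d!/(k−d)!)·Stir(n,d)`. -/
theorem AsetT_descends_to_basis (n k d : ℕ) (hd : 1 ≤ d) (hk : d ≤ k) (hn : k ≤ n) :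
    (LinearIndependent ℚ (fun p : AsetT n k d =>
        Ideal.Quotient.mk (Ideal.span (JtgensQ n k d))
          (p : MvPolynomial (Fin n ⊕ Fin d ⊕ Fin k) ℚ)) ∧
      Submodule.span ℚ
        (⇑(Ideal.Quotient.mk (Ideal.span (JtgensQ n k d))) '' AsetT n k d) = ⊤) ∧
    (LinearIndependent (MvPolynomial (Fin k) ℚ) (fun p : Aset3 n k d =>
        Ideal.Quotient.mk (Ideal.span (JtgensQ n k d))
          (p : MvPolynomial (Fin n ⊕ Fin d ⊕ Fin k) ℚ)) ∧
      Submodule.span (MvPolynomial (Fin k) ℚ)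
        (⇑(Ideal.Quotient.mk (Ideal.span (JtgensQ n k d))) '' Aset3 n k d) = ⊤) ∧
    Module.Free (MvPolynomial (Fin k) ℚ)
      (MvPolynomial (Fin n ⊕ Fin d ⊕ Fin k) ℚ ⧸ Ideal.span (JtgensQ n k d)) ∧
    Module.rank (MvPolynomial (Fin k) ℚ)
        (MvPolynomial (Fin n ⊕ Fin d ⊕ Fin k) ℚ ⧸ Ideal.span (JtgensQ n k d)) =
      ((Nat.factorial k * Nat.factorial d / Nat.factorial (k - d) * stirling2 n d : ℕ) :
        Cardinal) :=
  AsetT_descends_to_basis_general n k d hd hk (hk.trans hn)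
end

section
/- Let n ≥ k ≥ d ≥ 1 be integers and let B be a family of homogeneous S_d-invariant polynomials in ℚ[x_1,…,x_n,y_1,…,y_d]^{S_d} which descends to a ℚ-basis of ℚ[x_1,…,x_n,y_1,…,y_d]^{S_d}/(J_{n,k,d}^ℚ ∩ ℚ[x_1,…,x_n,y_1,…,y_d]^{S_d}). Then B^t descends to a ℚ-basis of ℚ[x_1,…,x_n,y_1,…,y_d,t_1,…,t_k]^{S_d}/(J_{n,k,d}^{ℚ,t} ∩ ℚ[x_1,…,x_n,y_1,…,y_d,t_1,…,t_k]^{S_d}). In particular, this last quotient is a free ℚ[t_1,…,t_k]-module of rank (k!/(k−d)!)·Stir(n,d). -/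
open MvPolynomial

set_option synthInstance.maxHeartbeats 1000000
set_option maxHeartbeats 4000000

/-- The elementary symmetric polynomial `e_r` in the x-variables `x_1, …, x_n`. -/
noncomputable def eX (n d r : ℕ) : MvPolynomial (Fin n ⊕ Fin d) ℚ :=
  rename Sum.inl (esymm (Fin n) ℚ r)

/-- The complete homogeneous symmetric polynomial `h_r` in the y-variables `y_1, …, y_d`. -/
noncomputable def hY (n d r : ℕ) : MvPolynomial (Fin n ⊕ Fin d) ℚ :=
  rename Sum.inr (hsymm (Fin d) ℚ r)

/-- The elementary symmetric polynomial `e_r` in the y-variables `y_1, …, y_d`. -/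
noncomputable def eY (n d r : ℕ) : MvPolynomial (Fin n ⊕ Fin d) ℚ :=
  rename Sum.inr (esymm (Fin d) ℚ r)

/-- `Σ_{a+b=r} (−1)^b e_a(x_1,…,x_n)·h_b(y_1,…,y_d)`. -/
noncomputable def genXY (n d r : ℕ) : MvPolynomial (Fin n ⊕ Fin d) ℚ :=
  ∑ j ∈ Finset.range (r + 1),
    (-1 : MvPolynomial (Fin n ⊕ Fin d) ℚ) ^ j * (eX n d (r - j) * hY n d j)

/-- `Σ_{j=0}^{d} (−1)^j x_i^{d−j} e_j(y_1,…,y_d)`. -/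
noncomputable def genPow (n d : ℕ) (i : Fin n) : MvPolynomial (Fin n ⊕ Fin d) ℚ :=
  ∑ j ∈ Finset.range (d + 1),
    (-1 : MvPolynomial (Fin n ⊕ Fin d) ℚ) ^ j * (X (Sum.inl i) ^ (d - j) * eY n d j)

/-- The generating set of the ideal `J_{n,k,d}^ℚ ⊆ ℚ[x_1,…,x_n,y_1,…,y_d]`. -/
def JgensQ (n k d : ℕ) : Set (MvPolynomial (Fin n ⊕ Fin d) ℚ) :=
  {p | ∃ r, k - d < r ∧ p = hY n d r} ∪
  {p | ∃ r, n - d < r ∧ p = genXY n d r} ∪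
  {p | ∃ i : Fin n, p = genPow n d i}

/-- The permutation of the variable index set `Fin n ⊕ Fin d` induced by a permutation
of the y-indices. -/
def permY (n d : ℕ) (g : Equiv.Perm (Fin d)) : (Fin n ⊕ Fin d) ≃ (Fin n ⊕ Fin d) :=
  Equiv.sumCongr (Equiv.refl (Fin n)) g

/-- The subalgebra of `S_d`-invariants of `ℚ[x_1,…,x_n,y_1,…,y_d]`, where `S_d` permutes
the variables `y_1,…,y_d` and fixes the x-variables. -/
noncomputable def invQ2 (n d : ℕ) : Subalgebra ℚ (MvPolynomial (Fin n ⊕ Fin d) ℚ) where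
  carrier := {f | ∀ g : Equiv.Perm (Fin d), rename (⇑(permY n d g)) f = f}
  mul_mem' := fun ha hb g => by rw [map_mul, ha g, hb g]
  add_mem' := fun ha hb g => by rw [map_add, ha g, hb g]
  one_mem' := fun g => by rw [map_one]
  zero_mem' := fun g => by rw [map_zero]
  algebraMap_mem' := fun r g => by rw [MvPolynomial.algebraMap_eq, rename_C]

/-- The permutation of the variable index set `Fin n ⊕ Fin d ⊕ Fin k` induced by a
permutation of the y-indices. -/
def permY3 (n k d : ℕ) (g : Equiv.Perm (Fin d)) :
    (Fin n ⊕ Fin d ⊕ Fin k) ≃ (Fin n ⊕ Fin d ⊕ Fin k) :=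
  Equiv.sumCongr (Equiv.refl (Fin n)) (Equiv.sumCongr g (Equiv.refl (Fin k)))

/-- The subalgebra of `S_d`-invariants of `ℚ[x_1,…,x_n,y_1,…,y_d,t_1,…,t_k]`, where
`S_d` permutes the variables `y_1,…,y_d` and fixes all other variables. -/
noncomputable def invQ3 (n k d : ℕ) :
    Subalgebra ℚ (MvPolynomial (Fin n ⊕ Fin d ⊕ Fin k) ℚ) where
  carrier := {f | ∀ g : Equiv.Perm (Fin d), rename (⇑(permY3 n k d g)) f = f}
  mul_mem' := fun ha hb g => by rw [map_mul, ha g, hb g]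
  add_mem' := fun ha hb g => by rw [map_add, ha g, hb g]
  one_mem' := fun g => by rw [map_one]
  zero_mem' := fun g => by rw [map_zero]
  algebraMap_mem' := fun r g => by rw [MvPolynomial.algebraMap_eq, rename_C]

/-- The map `ℚ[t_1,…,t_k] → ℚ[x,y,t]^{S_d}` sending `t_i` to `t_i`. -/
noncomputable def tHomQ (n k d : ℕ) :
    MvPolynomial (Fin k) ℚ →ₐ[ℚ] ↥(invQ3 n k d) :=
  AlgHom.codRestrict (rename (Sum.inr ∘ Sum.inr)) (invQ3 n k d) (fun f g => by
    show rename (⇑(permY3 n k d g)) (rename (Sum.inr ∘ Sum.inr) f) = _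
    rw [rename_rename]
    congr 1)

/-- `ℚ[x,y,t]^{S_d}` is a `ℚ[t_1,…,t_k]`-algebra via `tHomQ`. -/
noncomputable instance invQ3.algebraT (n k d : ℕ) :
    Algebra (MvPolynomial (Fin k) ℚ) ↥(invQ3 n k d) :=
  (tHomQ n k d).toRingHom.toAlgebra

/-- The set `B^t` of products of (liftings to `ℚ[x,y,t]` of) members of `B` with
monomials in the t-variables, viewed inside the invariant ring `ℚ[x,y,t]^{S_d}`. -/
def BsetT (n k d : ℕ) (B : Set ↥(invQ2 n d)) : Set ↥(invQ3 n k d) :=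
  {q | ∃ b ∈ B, ∃ c : Fin k → ℕ,
    (q : MvPolynomial (Fin n ⊕ Fin d ⊕ Fin k) ℚ) =
      rename (Sum.map id Sum.inl) (b : MvPolynomial (Fin n ⊕ Fin d) ℚ) *
        ∏ i, X (Sum.inr (Sum.inr i)) ^ c i}

/-!
Write `N = (k choose d) * d! * Stir(n,d)`. The first two families of relations say that
`∏ (X - y_j)` divides `∏ (X - t_i)` and `∏ (X - x_i)`, the third that each `x_i` is a root of
`∏ (X - y_j)`. At `t = 0` the invariant ring modulo the relations is therefore spanned by `N`
elements: the coefficients of `∏ (X - y_j)` generate an algebra spanned by `k choose d` elements,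
and adjoining the roots `x_i` one at a time contributes a factor `d! * Stir(n,d)`, the number of
surjections from the `x_i` onto the roots. Hence `B` has at most `N` elements, and by graded
Nakayama its lifts span the quotient of `ℚ[x,y,t]^{S_d}` over `ℚ[t]`.

Conversely, for each of the `N` maps `w` from `{1,…,n}` to `{1,…,k}` with image of size `d`, the
relations hold at `x_i = t_{w(i)}` and `y` an enumeration of the `t_c` with `c` in the image of `w`.
The values of the `x_i` separate these points, so the quotient has rank at least `N` over `ℚ[t]`.
A spanning family of at most `N` elements is then a basis, and multiplying it by the monomials
in `t` gives a basis over `ℚ`.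
-/

/-! ### Modules spanned by a given number of elements -/

universe u

/-- `M` is spanned over `R` by `c` elements, which need not be distinct. -/
def SpannedBy (R M : Type*) [Semiring R] [AddCommMonoid M] [Module R M] (c : ℕ) : Prop :=
  ∃ v : Fin c → M, Submodule.span R (Set.range v) = ⊤

namespace SpannedBy

theorem of_subsingleton (R M : Type*) [Semiring R] [AddCommMonoid M] [Module R M]
    [Subsingleton M] (c : ℕ) : SpannedBy R M c :=
  ⟨0, Subsingleton.elim _ _⟩

theorem of_fintype {R M ι : Type*} [Semiring R] [AddCommMonoid M] [Module R M] [Fintype ι]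
    {v : ι → M} (hv : Submodule.span R (Set.range v) = ⊤) : SpannedBy R M (Fintype.card ι) :=
  ⟨v ∘ (Fintype.equivFin ι).symm, by rw [(Fintype.equivFin ι).symm.surjective.range_comp, hv]⟩

theorem module_finite {R M : Type*} [Semiring R] [AddCommMonoid M] [Module R M] {c : ℕ}
    (h : SpannedBy R M c) : Module.Finite R M := by
  obtain ⟨v, hv⟩ := h
  exact .of_fg_top (hv ▸ Submodule.fg_span (Set.finite_range v))

theorem finrank_le {R M : Type*} [Semiring R] [StrongRankCondition R] [AddCommMonoid M]
    [Module R M] {c : ℕ} (h : SpannedBy R M c) : Module.finrank R M ≤ c := by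
  obtain ⟨v, hv⟩ := h
  exact (finrank_le_of_span_eq_top hv).trans_eq (Fintype.card_fin c)

theorem of_surjective {R M N : Type*} [Semiring R] [AddCommMonoid M] [Module R M]
    [AddCommMonoid N] [Module R N] {c : ℕ} (h : SpannedBy R M c) (φ : M →ₗ[R] N)
    (hφ : Function.Surjective φ) : SpannedBy R N c := by
  obtain ⟨v, hv⟩ := h
  refine ⟨φ ∘ v, ?_⟩
  rw [Set.range_comp, ← Submodule.map_span, hv, Submodule.map_top, LinearMap.range_eq_top.mpr hφ]

theorem of_quotient {R M : Type*} [Ring R] [AddCommGroup M] [Module R M] {N : Submodule R M}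
    {a b : ℕ} (hN : SpannedBy R N a) (hQ : SpannedBy R (M ⧸ N) b) : SpannedBy R M (a + b) := by
  obtain ⟨v, hv⟩ := hN
  obtain ⟨w, hw⟩ := hQ
  choose w' hw' using fun j => N.mkQ_surjective (w j)
  have hN : Submodule.span R (Set.range (N.subtype ∘ v)) = N := by
    rw [Set.range_comp, ← Submodule.map_span, hv, Submodule.map_subtype_top]
  have hQ : Submodule.map N.mkQ (Submodule.span R (Set.range w')) = ⊤ := by
    rw [Submodule.map_span, ← Set.range_comp, ← hw]
    exact congrArg _ (congrArg _ (funext hw'))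
  have hspan : Submodule.span R (Set.range (Sum.elim (N.subtype ∘ v) w')) = ⊤ := by
    rw [Set.Sum.elim_range, Submodule.span_union, hN, ← Submodule.map_mkQ_eq_top, hQ]
  simpa only [Fintype.card_sum, Fintype.card_fin] using of_fintype hspan

theorem of_quotient_span_singleton {R S : Type*} [CommRing R] [CommRing S] [Algebra R S] (c : S)
    {a b : ℕ} (ha : SpannedBy R (S ⧸ Ideal.span {c}) a)
    (hb : SpannedBy R (S ⧸ Ideal.torsionOf S S c) b) : SpannedBy R S (a + b) := by
  have hN : SpannedBy R ((Ideal.span {c}).restrictScalars R) b :=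
    hb.of_surjective ((Ideal.quotTorsionOfEquivSpanSingleton S S c).toLinearMap.restrictScalars R)
      (Ideal.quotTorsionOfEquivSpanSingleton S S c).surjective
  have hQ : SpannedBy R (S ⧸ (Ideal.span {c}).restrictScalars R) a :=
    ha.of_surjective (Submodule.Quotient.restrictScalarsEquiv R (Ideal.span {c})).symm.toLinearMap
      (Submodule.Quotient.restrictScalarsEquiv R (Ideal.span {c})).symm.surjective
  exact add_comm b a ▸ hN.of_quotient hQ

open scoped Pointwise in
theorem trans {R S A : Type*} [CommSemiring R] [Semiring S] [AddCommMonoid A] [Algebra R S]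
    [Module S A] [Module R A] [IsScalarTower R S A] {a b : ℕ}
    (ha : SpannedBy R S a) (hb : SpannedBy S A b) : SpannedBy R A (a * b) := by
  obtain ⟨v, hv⟩ := ha
  obtain ⟨w, hw⟩ := hb
  have hspan : Submodule.span R (Set.range fun p : Fin a × Fin b => v p.1 • w p.2) = ⊤ := by
    rw [← Submodule.restrictScalars_top R S A, ← hw, ← Submodule.span_smul_of_span_eq_top hv,
      Set.range_smul_range]
  simpa only [Fintype.card_prod, Fintype.card_fin] using of_fintype hspan

theorem one_of_adjoin_eq_top {R S : Type*} [CommSemiring R] [Semiring S] [Algebra R S] {s : Set S}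
    (hs : Algebra.adjoin R s = ⊤) (h : s ⊆ (⊥ : Subalgebra R S)) : SpannedBy R S 1 := by
  have hbot : (⊥ : Subalgebra R S) = ⊤ := top_unique (hs ▸ Algebra.adjoin_le h)
  refine ⟨fun _ => 1, ?_⟩
  rw [Set.range_const, ← Submodule.one_eq_span, ← Algebra.toSubmodule_bot, hbot,
    Algebra.top_toSubmodule]

open scoped Classical in
theorem adjoin_singleton_of_monic {R S : Type*} [CommRing R] [Ring S] [Algebra R S]
    {f : Polynomial R} (hf : f.Monic) {a : S} (ha : Polynomial.aeval a f = 0) :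
    SpannedBy R (Algebra.adjoin R {a}) f.natDegree := by
  let v : Fin f.natDegree → Algebra.adjoin R {a} :=
    fun i => ⟨a, Algebra.subset_adjoin rfl⟩ ^ (i : ℕ)
  have hrange : Set.range ((Algebra.adjoin R {a}).val ∘ v) =
      (Finset.range f.natDegree).image (a ^ ·) := by
    ext b
    simp [v, Fin.exists_iff]
  refine ⟨v, Submodule.map_injective_of_injective (f := (Algebra.adjoin R {a}).val.toLinearMap)
    Subtype.val_injective ?_⟩
  rw [Submodule.map_span, Submodule.map_top]
  exact (congrArg _ ((Set.range_comp _ _).symm.trans hrange)).trans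
    ((Submodule.span_range_natDegree_eq_adjoin hf ha).trans (Submodule.range_subtype _).symm)

end SpannedBy

theorem adjoin_eq_top_of_surjective {R S S' : Type*} [CommSemiring R] [Semiring S] [Semiring S']
    [Algebra R S] [Algebra R S'] {φ : S →ₐ[R] S'} (hφ : Function.Surjective φ) {s : Set S}
    {s' : Set S'} (hs : Algebra.adjoin R s = ⊤) (h : φ '' s ⊆ Algebra.adjoin R s') :
    Algebra.adjoin R s' = ⊤ := by
  rw [eq_top_iff, ← (AlgHom.range_eq_top φ).mpr hφ, ← Algebra.map_top, ← hs, AlgHom.map_adjoin]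
  exact Algebra.adjoin_le h

/-! ### Adjoining the coefficients of a divisor of `∏ (X - t i)` -/

theorem exists_eq_mul_of_isRoot_of_mul_eq {S : Type*} [CommRing S] {f g p : Polynomial S} {a : S}
    (hf : f.IsRoot a) (h : f * g = (Polynomial.X - Polynomial.C a) * p) :
    ∃ f', f = (Polynomial.X - Polynomial.C a) * f' ∧ f' * g = p := by
  obtain ⟨f', rfl⟩ := Polynomial.dvd_iff_isRoot.mpr hf
  exact ⟨f', rfl, (Polynomial.monic_X_sub_C a).isRegular.left ((mul_assoc _ _ _).symm.trans h)⟩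

theorem natDegree_of_monic_X_sub_C_mul {S : Type*} [CommRing S] [Nontrivial S] {f : Polynomial S}
    {a : S} {d : ℕ} (hf : ((Polynomial.X - Polynomial.C a) * f).Monic)
    (hd : ((Polynomial.X - Polynomial.C a) * f).natDegree = d + 1) : f.Monic ∧ f.natDegree = d := by
  have hf' : f.Monic := (Polynomial.monic_X_sub_C a).of_mul_monic_left hf
  rw [(Polynomial.monic_X_sub_C a).natDegree_mul hf', Polynomial.natDegree_X_sub_C, add_comm] at hd
  exact ⟨hf', Nat.succ_injective hd⟩

theorem range_coeff_X_sub_C_mul_subset_adjoin {R S : Type*} [CommRing R] [CommRing S] [Algebra R S]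
    (r : R) (f : Polynomial S) :
    Set.range ((Polynomial.X - Polynomial.C (algebraMap R S r)) * f).coeff ⊆
      Algebra.adjoin R (Set.range f.coeff) := by
  have hmem (i : ℕ) : f.coeff i ∈ Algebra.adjoin R (Set.range f.coeff) :=
    Algebra.subset_adjoin ⟨i, rfl⟩
  rintro _ ⟨i, rfl⟩
  rw [sub_mul, Polynomial.coeff_sub, Polynomial.coeff_C_mul, ← Algebra.smul_def]
  refine sub_mem ?_ (Subalgebra.smul_mem _ (hmem i) r)
  cases i with
  | zero => rw [Polynomial.coeff_X_mul_zero]; exact zero_mem _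
  | succ i => rw [Polynomial.coeff_X_mul]; exact hmem i

theorem adjoin_coeff_map_eq_top {R S S' : Type*} [CommRing R] [CommRing S] [CommRing S']
    [Algebra R S] [Algebra R S'] {φ : S →ₐ[R] S'} (hφ : Function.Surjective φ) {f : Polynomial S}
    (hf : Algebra.adjoin R (Set.range f.coeff) = ⊤) :
    Algebra.adjoin R (Set.range (f.map (φ : S →+* S')).coeff) = ⊤ := by
  refine adjoin_eq_top_of_surjective hφ hf ?_
  rintro _ ⟨_, ⟨i, rfl⟩, rfl⟩
  exact Algebra.subset_adjoin ⟨i, Polynomial.coeff_map _ _⟩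

theorem map_prod_X_sub_C {ι R S : Type*} [Fintype ι] [CommRing R] [CommRing S] (φ : R →+* S)
    (x : ι → R) : (∏ i, (Polynomial.X - Polynomial.C (x i))).map φ =
      ∏ i, (Polynomial.X - Polynomial.C (φ (x i))) := by
  simp only [Polynomial.map_prod, Polynomial.map_sub, Polynomial.map_X, Polynomial.map_C]

theorem exists_map_eq_mul_of_eval_eq_zero {R S S' : Type*} [CommRing R] [CommRing S] [CommRing S']
    [Algebra R S] [Algebra R S'] (φ : S →ₐ[R] S') {r : R} {f g p : Polynomial S}
    (h : f * g = (Polynomial.X - Polynomial.C (algebraMap R S r)) * p)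
    (hf : φ (f.eval (algebraMap R S r)) = 0) :
    ∃ f', f.map (φ : S →+* S') = (Polynomial.X - Polynomial.C (algebraMap R S' r)) * f' ∧
      f' * g.map (φ : S →+* S') = p.map (φ : S →+* S') := by
  have hr : (φ : S →+* S') (algebraMap R S r) = algebraMap R S' r := φ.commutes r
  refine exists_eq_mul_of_isRoot_of_mul_eq ?_ ?_
  · rw [Polynomial.IsRoot.def, ← hr, Polynomial.eval_map_apply]
    exact hf
  · rw [← Polynomial.map_mul, h, Polynomial.map_mul, Polynomial.map_sub, Polynomial.map_X,
      Polynomial.map_C, hr]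

theorem SpannedBy.of_adjoin_coeff_one {R S : Type*} [CommRing R] [CommRing S] [Algebra R S]
    (h : Algebra.adjoin R (Set.range (1 : Polynomial S).coeff) = ⊤) : SpannedBy R S 1 := by
  refine one_of_adjoin_eq_top h ?_
  rintro _ ⟨i, rfl⟩
  rw [Polynomial.coeff_one]
  split_ifs
  exacts [one_mem _, zero_mem _]

-- The recursion of Pascal: modulo `f (t 0)` the root `t 0` moves to `f`, modulo the annihilator of
-- `f (t 0)` it moves to the cofactor `g`.
theorem SpannedBy.of_mul_eq_prod {R : Type*} [CommRing R] {k : ℕ} (t : Fin k → R) {d : ℕ}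
    {S : Type u} [CommRing S] [Algebra R S] {f g : Polynomial S} (hf : f.Monic)
    (hd : f.natDegree = d)
    (hfg : f * g = ∏ i, (Polynomial.X - Polynomial.C (algebraMap R S (t i))))
    (hadj : Algebra.adjoin R (Set.range f.coeff) = ⊤) : SpannedBy R S (k.choose d) := by
  induction k generalizing d S with
  | zero =>
    obtain rfl : f = 1 := hf.eq_one_of_isUnit (.of_mul_eq_one g (by simpa using hfg))
    rw [← hd, Polynomial.natDegree_one, Nat.choose_zero_right]
    exact of_adjoin_coeff_one hadj
  | succ k ih =>
    cases d with
    | zero =>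
      obtain rfl : f = 1 := hf.natDegree_eq_zero.mp hd
      rw [Nat.choose_zero_right]
      exact of_adjoin_coeff_one hadj
    | succ d =>
      rw [Fin.prod_univ_succ] at hfg
      refine of_quotient_span_singleton (f.eval (algebraMap R S (t 0))) ?_ ?_
      · cases subsingleton_or_nontrivial (S ⧸ Ideal.span {f.eval (algebraMap R S (t 0))})
        · exact of_subsingleton _ _ _
        obtain ⟨f', hf', hfg'⟩ := exists_map_eq_mul_of_eval_eq_zero (Ideal.Quotient.mkₐ R _) hfg
          (Ideal.Quotient.eq_zero_iff_mem.mpr (Ideal.mem_span_singleton_self _))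
        obtain ⟨hmonic, hdeg⟩ := natDegree_of_monic_X_sub_C_mul (hf' ▸ hf.map _)
          (hf' ▸ (hf.natDegree_map _).trans hd)
        refine ih (t ∘ Fin.succ) hmonic hdeg (hfg'.trans (map_prod_X_sub_C _ _)) (top_unique ?_)
        rw [← adjoin_coeff_map_eq_top (Ideal.Quotient.mkₐ_surjective R _) hadj, hf']
        exact Algebra.adjoin_le (range_coeff_X_sub_C_mul_subset_adjoin (t 0) f')
      · cases subsingleton_or_nontrivial (S ⧸ Ideal.torsionOf S S (f.eval (algebraMap R S (t 0))))
        · exact of_subsingleton _ _ _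
        obtain ⟨g', -, hfg'⟩ := exists_map_eq_mul_of_eval_eq_zero
          (Ideal.Quotient.mkₐ R (Ideal.torsionOf S S (f.eval (algebraMap R S (t 0)))))
          ((mul_comm g f).trans hfg) <| Ideal.Quotient.eq_zero_iff_mem.mpr <| by
            rw [Ideal.mem_torsionOf_iff, smul_eq_mul, mul_comm, ← Polynomial.eval_mul, hfg]
            simp
        exact ih (t ∘ Fin.succ) (hf.map _) ((hf.natDegree_map _).trans hd)
          ((mul_comm _ _).trans (hfg'.trans (map_prod_X_sub_C _ _)))
          (adjoin_coeff_map_eq_top (Ideal.Quotient.mkₐ_surjective R _) hadj)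

/-! ### Adjoining roots exhausting the roots of a polynomial -/

theorem factorial_mul_stirling2_succ (n d : ℕ) :
    (d + 1).factorial * stirling2 (n + 1) (d + 1) =
      (d + 1) * ((d + 1).factorial * stirling2 n (d + 1) + d.factorial * stirling2 n d) := by
  rw [stirling2, Nat.factorial_succ]
  ring

/-- The `x i` are roots of `f` generating the `R`-algebra `S`, and they exhaust the roots of `f` in
the sense that `f` divides `∏ (X - x i)`. Universally, such families correspond to the surjections
from `ι` onto the roots of `f`. -/
structure ExhaustsRoots {ι R S : Type*} [Fintype ι] [CommRing R] [CommRing S] [Algebra R S]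
    (f : Polynomial R) (x : ι → S) : Prop where
  aeval_eq_zero (i : ι) : Polynomial.aeval (x i) f = 0
  map_dvd_prod : f.map (algebraMap R S) ∣ ∏ i, (Polynomial.X - Polynomial.C (x i))
  adjoin_eq_top : Algebra.adjoin R (Set.range x) = ⊤

namespace ExhaustsRoots

theorem map_base {ι R R' S : Type*} [Fintype ι] [CommRing R] [CommRing R'] [CommRing S]
    [Algebra R R'] [Algebra R S] [Algebra R' S] [IsScalarTower R R' S] {f : Polynomial R}
    {x : ι → S} (h : ExhaustsRoots f x) : ExhaustsRoots (f.map (algebraMap R R')) x where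
  aeval_eq_zero i := by rw [Polynomial.aeval_map_algebraMap, h.aeval_eq_zero]
  map_dvd_prod := by
    rw [Polynomial.map_map, ← IsScalarTower.algebraMap_eq]
    exact h.map_dvd_prod
  adjoin_eq_top := by
    have hle : Algebra.adjoin R (Set.range x) ≤
        (Algebra.adjoin R' (Set.range x)).restrictScalars R :=
      Algebra.adjoin_le Algebra.subset_adjoin
    exact top_unique fun s _ => hle (h.adjoin_eq_top ▸ Algebra.mem_top)

variable {R S : Type*} [CommRing R] [CommRing S] [Algebra R S] {n : ℕ} {a : R} {g : Polynomial R}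
  {x : Fin (n + 1) → S}

theorem exists_mul_eq_prod_tail
    (h : ExhaustsRoots ((Polynomial.X - Polynomial.C a) * g) x) (hx : x 0 = algebraMap R S a) :
    ∃ q : Polynomial S,
      g.map (algebraMap R S) * q = ∏ i : Fin n, (Polynomial.X - Polynomial.C (x i.succ)) := by
  obtain ⟨q, hq⟩ := h.map_dvd_prod
  rw [Fin.prod_univ_succ, hx, Polynomial.map_mul, Polynomial.map_sub, Polynomial.map_X,
    Polynomial.map_C, mul_assoc] at hq
  exact ⟨q, (Polynomial.monic_X_sub_C _).isRegular.left hq.symm⟩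

theorem adjoin_quotient_tail {f : Polynomial R} (h : ExhaustsRoots f x)
    (hx : x 0 = algebraMap R S a) (I : Ideal S) :
    Algebra.adjoin R (Set.range fun i : Fin n => Ideal.Quotient.mkₐ R I (x i.succ)) = ⊤ := by
  refine adjoin_eq_top_of_surjective (Ideal.Quotient.mkₐ_surjective R I) h.adjoin_eq_top ?_
  rintro _ ⟨_, ⟨i, rfl⟩, rfl⟩
  cases i using Fin.cases with
  | zero => rw [hx, AlgHom.commutes]; exact Subalgebra.algebraMap_mem _ a
  | succ i => exact Algebra.subset_adjoin ⟨i, rfl⟩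

theorem quotient_span_singleton
    (h : ExhaustsRoots ((Polynomial.X - Polynomial.C a) * g) x) (hx : x 0 = algebraMap R S a)
    {q : Polynomial S}
    (hq : g.map (algebraMap R S) * q = ∏ i : Fin n, (Polynomial.X - Polynomial.C (x i.succ))) :
    ExhaustsRoots ((Polynomial.X - Polynomial.C a) * g) fun i : Fin n =>
      Ideal.Quotient.mkₐ R (Ideal.span {q.eval (x 0)}) (x i.succ) where
  aeval_eq_zero i := by rw [Polynomial.aeval_algHom_apply, h.aeval_eq_zero, map_zero]
  map_dvd_prod := by
    set φ := Ideal.Quotient.mkₐ R (Ideal.span {q.eval (x 0)})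
    have hroot : (q.map (φ : S →+* S ⧸ Ideal.span {q.eval (x 0)})).IsRoot (algebraMap R _ a) := by
      rw [← φ.commutes a, ← hx]
      exact (Polynomial.eval_map_apply _ _).trans
        (Ideal.Quotient.eq_zero_iff_mem.mpr (Ideal.mem_span_singleton_self _))
    refine .trans (?_ : _ ∣ _) (map_prod_X_sub_C (φ : S →+* S ⧸ Ideal.span {q.eval (x 0)}) _).dvd
    rw [← hq, Polynomial.map_mul, Polynomial.map_mul, Polynomial.map_map, φ.comp_algebraMap,
      mul_comm, Polynomial.map_sub, Polynomial.map_X, Polynomial.map_C]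
    exact mul_dvd_mul_left _ (Polynomial.dvd_iff_isRoot.mpr hroot)
  adjoin_eq_top := h.adjoin_quotient_tail hx _

theorem quotient_torsionOf
    (h : ExhaustsRoots ((Polynomial.X - Polynomial.C a) * g) x) (hx : x 0 = algebraMap R S a)
    {q : Polynomial S}
    (hq : g.map (algebraMap R S) * q = ∏ i : Fin n, (Polynomial.X - Polynomial.C (x i.succ))) :
    ExhaustsRoots g fun i : Fin n =>
      Ideal.Quotient.mkₐ R (Ideal.torsionOf S S (q.eval (x 0))) (x i.succ) where
  aeval_eq_zero i := by
    rw [Polynomial.aeval_algHom_apply]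
    refine Ideal.Quotient.eq_zero_iff_mem.mpr ?_
    have hf : (x i.succ - x 0) * Polynomial.aeval (x i.succ) g = 0 := by
      simpa [hx] using h.aeval_eq_zero i.succ
    have hgq : Polynomial.aeval (x i.succ) g * q.eval (x i.succ) = 0 := by
      rw [← Polynomial.eval_map_algebraMap, ← Polynomial.eval_mul, hq, Polynomial.eval_prod]
      exact Finset.prod_eq_zero (Finset.mem_univ i) (by simp)
    obtain ⟨r, hr⟩ := Polynomial.sub_dvd_eval_sub (x i.succ) (x 0) q
    rw [Ideal.mem_torsionOf_iff, smul_eq_mul]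
    generalize Polynomial.aeval (x i.succ) g = b at hf hgq ⊢
    linear_combination hgq - r * hf - b * hr
  map_dvd_prod := by
    set φ := Ideal.Quotient.mkₐ R (Ideal.torsionOf S S (q.eval (x 0)))
    refine .trans (?_ : _ ∣ _)
      (map_prod_X_sub_C (φ : S →+* S ⧸ Ideal.torsionOf S S (q.eval (x 0))) _).dvd
    rw [← hq, Polynomial.map_mul, Polynomial.map_map, φ.comp_algebraMap]
    exact dvd_mul_right _ _
  adjoin_eq_top := h.adjoin_quotient_tail hx _

end ExhaustsRoots

theorem exists_map_adjoin_eq_X_sub_C_mul {R S : Type*} [CommRing R] [CommRing S] [Algebra R S]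
    {f : Polynomial R} {a : S} (ha : Polynomial.aeval a f = 0) :
    ∃ g, f.map (algebraMap R (Algebra.adjoin R {a})) =
      (Polynomial.X - Polynomial.C ⟨a, Algebra.subset_adjoin rfl⟩) * g := by
  refine Polynomial.dvd_iff_isRoot.mpr ((Polynomial.eval_map_algebraMap _ _).trans ?_)
  exact Subtype.ext ((Polynomial.aeval_algHom_apply (Algebra.adjoin R {a}).val _ f).symm.trans ha)

-- Adjoin `x 0`. Over the resulting ring `f = (X - x 0) * g`, and the remaining `x i` exhaust either
-- the roots of `f` or those of `g`: this is the recursion for the number of surjections.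
theorem SpannedBy.of_exhaustsRoots {n d : ℕ} {R S : Type u} [CommRing R] [CommRing S] [Algebra R S]
    {f : Polynomial R} (hf : f.Monic) (hd : f.natDegree = d) {x : Fin n → S}
    (h : ExhaustsRoots f x) : SpannedBy R S (d.factorial * stirling2 n d) := by
  induction n generalizing d R S with
  | zero =>
    cases subsingleton_or_nontrivial S
    · exact of_subsingleton _ _ _
    have hone : f.map (algebraMap R S) = 1 :=
      (hf.map _).eq_one_of_isUnit (isUnit_of_dvd_one (by simpa using h.map_dvd_prod))
    obtain rfl : d = 0 := by
      rw [← hd, ← hf.natDegree_map (algebraMap R S), hone, Polynomial.natDegree_one]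
    exact one_of_adjoin_eq_top h.adjoin_eq_top (by simp)
  | succ n ih =>
    cases subsingleton_or_nontrivial S
    · exact of_subsingleton _ _ _
    cases d with
    | zero =>
      have := h.aeval_eq_zero 0
      rw [hf.natDegree_eq_zero.mp hd, map_one] at this
      exact absurd this one_ne_zero
    | succ d =>
      have := (algebraMap (Algebra.adjoin R {x 0}) S).domain_nontrivial
      have hadjoin : SpannedBy R (Algebra.adjoin R {x 0}) (d + 1) :=
        hd ▸ adjoin_singleton_of_monic hf (h.aeval_eq_zero 0)
      have h' := h.map_base (R' := Algebra.adjoin R {x 0})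
      have hmonic := hf.map (algebraMap R (Algebra.adjoin R {x 0}))
      have hdeg := (hf.natDegree_map (algebraMap R (Algebra.adjoin R {x 0}))).trans hd
      obtain ⟨g, hg⟩ := exists_map_adjoin_eq_X_sub_C_mul (h.aeval_eq_zero 0)
      rw [hg] at h' hmonic hdeg
      obtain ⟨hgmonic, hgdeg⟩ := natDegree_of_monic_X_sub_C_mul hmonic hdeg
      obtain ⟨q, hq⟩ := h'.exists_mul_eq_prod_tail rfl
      rw [factorial_mul_stirling2_succ]
      exact hadjoin.trans <| of_quotient_span_singleton (q.eval (x 0))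
        (ih hmonic hdeg (h'.quotient_span_singleton rfl hq))
        (ih hgmonic hgdeg (h'.quotient_torsionOf rfl hq))

/-! ### Symmetric functions and divisibility of products of linear factors -/

section SymmetricFunctions

variable {α β R : Type*} [Fintype α] [Fintype β] [CommRing R]

/-- The value `e_r(a)` of an elementary symmetric polynomial at a family of ring elements. -/
def esymmOf (a : α → R) (r : ℕ) : R :=
  ∑ s ∈ Finset.powersetCard r Finset.univ, ∏ i ∈ s, a i

/-- The value `h_r(b)` of a complete homogeneous symmetric polynomial at a family of ring
elements. -/
def hsymmOf [DecidableEq β] (b : β → R) (r : ℕ) : R :=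
  ∑ s : Sym β r, (s.1.map b).prod

/-- The supersymmetric function `∑_{i+j=r} (-1)^j e_i(a) h_j(b)`, that is, `e_r` of the formal
difference of the alphabets `a` and `b`. -/
def esymmSub [DecidableEq β] (a : α → R) (b : β → R) (r : ℕ) : R :=
  ∑ j ∈ Finset.range (r + 1), (-1) ^ j * (esymmOf a (r - j) * hsymmOf b j)

/-- The reciprocal polynomial `∏ (1 - a_i X)` of `∏ (X - a_i)`. -/
noncomputable def revProd (a : α → R) : Polynomial R :=
  ∏ i, (1 - Polynomial.C (a i) * Polynomial.X)

theorem coeff_revProd (a : α → R) (r : ℕ) : (revProd a).coeff r = (-1) ^ r * esymmOf a r := by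
  have hcoeff (s : Finset α) :
      (∏ i ∈ s, -(Polynomial.C (a i) * Polynomial.X)).coeff r =
        if r = s.card then (-1) ^ r * ∏ i ∈ s, a i else 0 := by
    rw [Finset.prod_neg, Finset.prod_mul_distrib, Finset.prod_const, ← map_prod,
      ← Polynomial.C_1, ← Polynomial.C_neg, ← Polynomial.C_pow, ← mul_assoc, ← Polynomial.C_mul,
      Polynomial.coeff_C_mul_X_pow]
    split_ifs with h <;> simp only [h]
  simp only [revProd, sub_eq_add_neg, Finset.prod_one_add, Polynomial.finsetSum_coeff, hcoeff,
    esymmOf, Finset.powersetCard_eq_filter, Finset.sum_filter, Finset.mul_sum, mul_ite, mul_zero,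
    eq_comm]

theorem natDegree_prod_one_sub_C_mul_X_le {ι : Type*} (s : Finset ι) (a : ι → R) :
    (∏ i ∈ s, (1 - Polynomial.C (a i) * Polynomial.X)).natDegree ≤ s.card := by
  refine (Polynomial.natDegree_prod_le _ _).trans ((Finset.sum_le_card_nsmul _ _ 1 ?_).trans_eq ?_)
  · intro i _
    compute_degree
  · rw [smul_eq_mul, mul_one]

theorem natDegree_revProd_le (a : α → R) : (revProd a).natDegree ≤ Fintype.card α :=
  natDegree_prod_one_sub_C_mul_X_le Finset.univ a

theorem reflect_revProd (a : α → R) :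
    (revProd a).reflect (Fintype.card α) = ∏ i, (Polynomial.X - Polynomial.C (a i)) := by
  classical
  suffices h : ∀ s : Finset α,
      (∏ i ∈ s, (1 - Polynomial.C (a i) * Polynomial.X)).reflect s.card =
        ∏ i ∈ s, (Polynomial.X - Polynomial.C (a i)) from h Finset.univ
  intro s
  induction s using Finset.induction_on with
  | empty => simp
  | insert i s hi ih =>
    have hdeg : (1 - Polynomial.C (a i) * Polynomial.X).natDegree ≤ 1 := by compute_degree
    have hrefl : (1 - Polynomial.C (a i) * Polynomial.X).reflect 1 =
        Polynomial.X - Polynomial.C (a i) := by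
      have hX := Polynomial.reflect_C_mul_X_pow 1 1 (c := a i)
      rw [pow_one, Polynomial.revAt_le le_rfl, Nat.sub_self, pow_zero, mul_one] at hX
      rw [Polynomial.reflect_sub, hX, Polynomial.reflect_one, pow_one]
    rw [Finset.prod_insert hi, Finset.prod_insert hi, Finset.card_insert_of_notMem hi, add_comm,
      Polynomial.reflect_mul _ _ hdeg (natDegree_prod_one_sub_C_mul_X_le s a), hrefl, ih]

theorem hsymmOf_eq_coeff_prod [DecidableEq β] (b : β → R) (r : ℕ) :
    hsymmOf b r = PowerSeries.coeff r (∏ j, PowerSeries.mk fun m => b j ^ m) := by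
  simp only [PowerSeries.coeff_prod, PowerSeries.coeff_mk]
  refine Finset.sum_bij' (fun s _ => Multiset.toFinsupp s.1)
    (fun l hl => ⟨Finsupp.toMultiset l, ?_⟩) ?_ ?_ ?_ ?_ ?_
  · rw [Finsupp.card_toMultiset, Finsupp.sum_fintype _ _ fun _ => rfl]
    exact (Finset.mem_finsuppAntidiag.mp hl).1
  · rintro ⟨s, rfl⟩ -
    exact Finset.mem_finsuppAntidiag.mpr
      ⟨Multiset.sum_count_eq_card fun j _ => Finset.mem_univ j, Finset.subset_univ _⟩
  · exact fun _ _ => Finset.mem_univ _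
  · exact fun s _ => Subtype.ext (Multiset.toFinsupp_toMultiset s.1)
  · exact fun l _ => Finsupp.toMultiset_toFinsupp l
  · intro s _
    simp only [Multiset.toFinsupp_apply]
    exact Finset.prod_multiset_map_count s.1 b |>.trans
      (Finset.prod_subset (Finset.subset_univ _) fun j _ hj => by
        rw [Multiset.count_eq_zero_of_notMem (mt Multiset.mem_toFinset.mpr hj), pow_zero])

theorem mk_hsymmOf_mul_revProd [DecidableEq β] (b : β → R) :
    PowerSeries.mk (hsymmOf b) * (revProd b : PowerSeries R) = 1 := by
  have hprod : PowerSeries.mk (hsymmOf b) = ∏ j, PowerSeries.mk fun m => b j ^ m :=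
    PowerSeries.ext fun r => (PowerSeries.coeff_mk _ _).trans (hsymmOf_eq_coeff_prod b r)
  have hrev : (revProd b : PowerSeries R) = ∏ j, (1 - PowerSeries.C (b j) * PowerSeries.X) := by
    rw [revProd, ← Polynomial.coeToPowerSeries.ringHom_apply, map_prod]
    simp
  rw [hprod, hrev, ← Finset.prod_mul_distrib]
  refine Finset.prod_eq_one fun j _ => ?_
  have := congrArg (PowerSeries.rescale (b j)) (PowerSeries.mk_one_mul_one_sub_eq_one R)
  simpa [PowerSeries.rescale_mk, PowerSeries.rescale_X] using this

theorem mk_esymmSub [DecidableEq β] (a : α → R) (b : β → R) :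
    PowerSeries.mk (fun r => (-1) ^ r * esymmSub a b r) =
      PowerSeries.mk (hsymmOf b) * (revProd a : PowerSeries R) := by
  ext r
  rw [PowerSeries.coeff_mul, Finset.Nat.sum_antidiagonal_eq_sum_range_succ_mk,
    PowerSeries.coeff_mk, esymmSub, Finset.mul_sum]
  refine Finset.sum_congr rfl fun j hj => ?_
  obtain ⟨i, rfl⟩ := Nat.exists_eq_add_of_le (Nat.lt_succ_iff.mp (Finset.mem_range.mp hj))
  rw [PowerSeries.coeff_mk, Polynomial.coeff_coe, coeff_revProd, Nat.add_sub_cancel_left]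
  linear_combination (-1) ^ i * esymmOf a i * hsymmOf b j *
    pow_mul_pow_eq_one j (show (-1 : R) * -1 = 1 by rw [neg_mul_neg, one_mul])

theorem prod_X_sub_C_dvd_of_esymmSub_eq_zero [DecidableEq β] (a : α → R) (b : β → R)
    (hcard : Fintype.card β ≤ Fintype.card α)
    (h : ∀ r, Fintype.card α - Fintype.card β < r → esymmSub a b r = 0) :
    ∏ j, (Polynomial.X - Polynomial.C (b j)) ∣ ∏ i, (Polynomial.X - Polynomial.C (a i)) := by
  set m := Fintype.card α - Fintype.card β
  let q := (PowerSeries.mk fun r => (-1) ^ r * esymmSub a b r).trunc (m + 1)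
  have hq : (q : PowerSeries R) = PowerSeries.mk fun r => (-1) ^ r * esymmSub a b r := by
    ext r
    rw [Polynomial.coeff_coe, PowerSeries.coeff_trunc, PowerSeries.coeff_mk]
    split_ifs with hr
    · rfl
    · rw [h r (by omega), mul_zero]
  have hmul : q * revProd b = revProd a := Polynomial.coe_injective R <| by
    rw [Polynomial.coe_mul, hq, mk_esymmSub, mul_right_comm, mk_hsymmOf_mul_revProd, one_mul]
  have hdeg : q.natDegree ≤ m := Nat.lt_succ_iff.mp (PowerSeries.natDegree_trunc_lt _ m)
  rw [← reflect_revProd, ← reflect_revProd, ← hmul, ← Nat.sub_add_cancel hcard,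
    Polynomial.reflect_mul _ _ hdeg (natDegree_revProd_le b)]
  exact dvd_mul_left _ _

theorem esymmSub_comp_eq_zero [DecidableEq β] (a : α → R) {ι : β → α} (hι : Function.Injective ι)
    {r : ℕ} (hr : Fintype.card α - Fintype.card β < r) : esymmSub a (a ∘ ι) r = 0 := by
  classical
  let e : β ≃ {i // ∃ j, ι j = i} := Equiv.ofInjective ι hι
  let c : {i // ¬∃ j, ι j = i} → R := fun i => a i
  have hcard : Fintype.card {i // ¬∃ j, ι j = i} = Fintype.card α - Fintype.card β := by
    rw [Fintype.card_subtype_compl, ← Fintype.card_congr e]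
  have hmul : revProd a = revProd (a ∘ ι) * revProd c := by
    refine (Fintype.prod_subtype_mul_prod_subtype (fun i => ∃ j, ι j = i) _).symm.trans
      (congrArg (· * revProd c) ?_)
    exact (Fintype.prod_equiv e _ _ fun _ => rfl).symm
  have hseries := mk_esymmSub a (a ∘ ι)
  rw [hmul, Polynomial.coe_mul, ← mul_assoc, mk_hsymmOf_mul_revProd, one_mul] at hseries
  have hcoeff := congrArg (PowerSeries.coeff r) hseries
  rw [PowerSeries.coeff_mk, Polynomial.coeff_coe, Polynomial.coeff_eq_zero_of_natDegree_lt
    ((natDegree_revProd_le c).trans_lt (hcard ▸ hr))] at hcoeff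
  exact ((isUnit_neg_one.pow r).mul_right_eq_zero).mp hcoeff

theorem esymmSub_zero_left [DecidableEq β] (b : β → R) (r : ℕ) :
    esymmSub (0 : α → R) b r = (-1) ^ r * hsymmOf b r := by
  have hrev : revProd (0 : α → R) = 1 := by simp [revProd]
  have hseries := congrArg (PowerSeries.coeff r) (mk_esymmSub (0 : α → R) b)
  rw [hrev, Polynomial.coe_one, mul_one, PowerSeries.coeff_mk, PowerSeries.coeff_mk] at hseries
  rw [← hseries, ← mul_assoc, ← mul_pow, neg_mul_neg, one_mul, one_pow, one_mul]

theorem prod_sub_eq_sum_esymmOf (y : β → R) (x : R) :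
    ∏ j, (x - y j) =
      ∑ j ∈ Finset.range (Fintype.card β + 1),
        (-1) ^ j * (x ^ (Fintype.card β - j) * esymmOf y j) := by
  have h := congrArg (Polynomial.eval x)
    (Multiset.prod_X_sub_X_eq_sum_esymm (Finset.univ.val.map y))
  simp only [Multiset.map_map, Multiset.card_map, Finset.card_val, Finset.esymm_map_val] at h
  simpa [Polynomial.eval_prod, Polynomial.eval_finsetSum, esymmOf, mul_comm] using h

end SymmetricFunctions

/-! ### The relations defining the ideals -/

theorem adjoin_range_eq_top_of_coe {R S ι : Type*} [CommSemiring R] [Semiring S] [Algebra R S]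
    {A : Subalgebra R S} {x : ι → A} (h : Algebra.adjoin R (Set.range fun i => (x i : S)) = A) :
    Algebra.adjoin R (Set.range x) = ⊤ := by
  refine Subalgebra.map_injective (f := A.val) Subtype.val_injective ?_
  rw [AlgHom.map_adjoin, ← Set.range_comp, Algebra.map_top, A.range_val]
  exact h

theorem adjoin_range_coeff_prod_X_sub_C {R S β : Type*} [Fintype β] [CommRing R] [CommRing S]
    [Algebra R S] (y : β → S) :
    Algebra.adjoin R (Set.range (∏ j, (Polynomial.X - Polynomial.C (y j))).coeff) =
      Algebra.adjoin R (Set.range (esymmOf y)) := by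
  have hcoeff (r : ℕ) : (∏ j, (Polynomial.X - Polynomial.C (y j))).coeff r =
      (-1) ^ Polynomial.revAt (Fintype.card β) r *
        esymmOf y (Polynomial.revAt (Fintype.card β) r) := by
    rw [← reflect_revProd, Polynomial.coeff_reflect, coeff_revProd]
  have hneg_sq (r : ℕ) : (-1 : S) ^ r * (-1) ^ r = 1 := by
    rw [← mul_pow, neg_mul_neg, one_mul, one_pow]
  have hneg (A : Subalgebra R S) (r : ℕ) : (-1) ^ r ∈ A := pow_mem (neg_mem (one_mem A)) r
  refine le_antisymm (Algebra.adjoin_le ?_) (Algebra.adjoin_le ?_)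
  · rintro _ ⟨r, rfl⟩
    rw [hcoeff]
    exact mul_mem (hneg _ _) (Algebra.subset_adjoin ⟨_, rfl⟩)
  · rintro _ ⟨r, rfl⟩
    have hr := hcoeff (Polynomial.revAt (Fintype.card β) r)
    rw [Polynomial.revAt_invol] at hr
    rw [← one_mul (esymmOf y r), ← hneg_sq, mul_assoc, ← hr]
    exact mul_mem (hneg _ _) (Algebra.subset_adjoin ⟨_, rfl⟩)

theorem exists_monic_map_eq_prod_X_sub_C (R : Type*) {S β : Type*} [Fintype β] [CommRing R]
    [CommRing S] [Nontrivial S] [Algebra R S] (y : β → S) :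
    ∃ f : Polynomial (Algebra.adjoin R (Set.range (esymmOf y))),
      f.Monic ∧ f.natDegree = Fintype.card β ∧
      f.map (algebraMap _ S) = ∏ j, (Polynomial.X - Polynomial.C (y j)) ∧
      Algebra.adjoin R (Set.range f.coeff) = ⊤ := by
  have hmonic : (∏ j, (Polynomial.X - Polynomial.C (y j))).Monic :=
    Polynomial.monic_prod_X_sub_C _ _
  have hlifts : (∏ j, (Polynomial.X - Polynomial.C (y j))) ∈
      Polynomial.lifts (algebraMap (Algebra.adjoin R (Set.range (esymmOf y))) S) := by
    rw [Polynomial.lifts_iff_coeff_lifts]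
    intro i
    rw [← adjoin_range_coeff_prod_X_sub_C]
    exact ⟨⟨_, Algebra.subset_adjoin ⟨i, rfl⟩⟩, rfl⟩
  obtain ⟨f, hf, hdeg, hfmonic⟩ := Polynomial.lifts_and_natDegree_eq_and_monic hlifts hmonic
  refine ⟨f, hfmonic, ?_, hf, adjoin_range_eq_top_of_coe ?_⟩
  · rw [hdeg, Polynomial.natDegree_finsetProd_X_sub_C_eq_card, Finset.card_univ]
  · refine (congrArg _ (congrArg _ (funext fun i => ?_))).trans (adjoin_range_coeff_prod_X_sub_C y)
    rw [← hf, Polynomial.coeff_map]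
    rfl

/-- The relations defining `J_{n,k,d}^t`, for elements `t`, `x` and `y` of a ring; those defining
`J_{n,k,d}` are the case `t = 0`. -/
structure SatisfiesRelations {T : Type*} [CommRing T] {k n d : ℕ} (t : Fin k → T) (x : Fin n → T)
    (y : Fin d → T) : Prop where
  esymmSub_base_eq_zero (r : ℕ) : k - d < r → esymmSub t y r = 0
  esymmSub_eq_zero (r : ℕ) : n - d < r → esymmSub x y r = 0
  prod_sub_eq_zero (i : Fin n) : ∏ j, (x i - y j) = 0

namespace SatisfiesRelations

variable {R : Type*} {T : Type u} [CommRing R] [CommRing T] [Algebra R T] {k n d : ℕ}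
  {t : Fin k → R} {x : Fin n → T} {y : Fin d → T}

theorem prod_X_sub_C_dvd (hn : d ≤ n) {t : Fin k → T} (h : SatisfiesRelations t x y) :
    ∏ j, (Polynomial.X - Polynomial.C (y j)) ∣ ∏ i, (Polynomial.X - Polynomial.C (x i)) :=
  prod_X_sub_C_dvd_of_esymmSub_eq_zero x y (by simpa only [Fintype.card_fin] using hn)
    (by simpa only [Fintype.card_fin] using h.esymmSub_eq_zero)

theorem prod_X_sub_C_dvd_base (hk : d ≤ k) {t : Fin k → T} (h : SatisfiesRelations t x y) :
    ∏ j, (Polynomial.X - Polynomial.C (y j)) ∣ ∏ i, (Polynomial.X - Polynomial.C (t i)) :=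
  prod_X_sub_C_dvd_of_esymmSub_eq_zero t y (by simpa only [Fintype.card_fin] using hk)
    (by simpa only [Fintype.card_fin] using h.esymmSub_base_eq_zero)

theorem exhaustsRoots (hn : d ≤ n) {t : Fin k → T} (h : SatisfiesRelations t x y)
    {A : Subalgebra R T} {f : Polynomial A} (hf : f.Monic)
    (hmap : f.map (algebraMap A T) = ∏ j, (Polynomial.X - Polynomial.C (y j))) :
    ExhaustsRoots f fun i =>
      (⟨x i, Algebra.subset_adjoin ⟨i, rfl⟩⟩ : Algebra.adjoin A (Set.range x)) where
  aeval_eq_zero i := Subtype.val_injective <| by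
    refine (Polynomial.aeval_algHom_apply (Algebra.adjoin A (Set.range x)).val _ f).symm.trans ?_
    rw [← Polynomial.eval_map_algebraMap, hmap, Polynomial.eval_prod]
    simp only [Polynomial.eval_sub, Polynomial.eval_X, Polynomial.eval_C]
    exact h.prod_sub_eq_zero i
  map_dvd_prod := by
    rw [← Polynomial.map_dvd_map (algebraMap (Algebra.adjoin A (Set.range x)) T)
      Subtype.val_injective (hf.map _), Polynomial.map_map, map_prod_X_sub_C]
    exact hmap.symm ▸ h.prod_X_sub_C_dvd hn
  adjoin_eq_top := adjoin_range_eq_top_of_coe rfl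

theorem spannedBy_adjoin (hk : d ≤ k) (hn : d ≤ n)
    (h : SatisfiesRelations (fun i => algebraMap R T (t i)) x y) :
    SpannedBy R (Algebra.adjoin R (Set.range (esymmOf y) ∪ Set.range x))
      (k.choose d * (d.factorial * stirling2 n d)) := by
  cases subsingleton_or_nontrivial T
  · have : Subsingleton (Algebra.adjoin R (Set.range (esymmOf y) ∪ Set.range x)) :=
      Subtype.val_injective.subsingleton
    exact .of_subsingleton _ _ _
  obtain ⟨f, hf, hdeg, hmap, hadj⟩ := exists_monic_map_eq_prod_X_sub_C R y
  rw [Fintype.card_fin] at hdeg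
  have hbase : SpannedBy R (Algebra.adjoin R (Set.range (esymmOf y))) (k.choose d) := by
    obtain ⟨g, hg⟩ : f ∣ ∏ i, (Polynomial.X - Polynomial.C (algebraMap R _ (t i))) := by
      rw [← Polynomial.map_dvd_map (algebraMap _ T) Subtype.val_injective hf, hmap,
        map_prod_X_sub_C]
      exact h.prod_X_sub_C_dvd_base hk
    exact .of_mul_eq_prod t hf hdeg hg.symm hadj
  rw [Algebra.adjoin_union_eq_adjoin_adjoin]
  exact (hbase.trans (.of_exhaustsRoots hf hdeg (h.exhaustsRoots hn hf hmap)) :)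

theorem of_range_eq {T : Type*} [CommRing T] (t : Fin k → T) {σ : Fin d → Fin k}
    (hσ : Function.Injective σ) {w : Fin n → Fin k} (h : Set.range w = Set.range σ) :
    SatisfiesRelations t (t ∘ w) (t ∘ σ) where
  esymmSub_base_eq_zero r hr :=
    esymmSub_comp_eq_zero t hσ (by simpa only [Fintype.card_fin] using hr)
  esymmSub_eq_zero r hr := by
    choose s hs using fun j => (h.symm ▸ Set.mem_range_self j : σ j ∈ Set.range w)
    obtain rfl : σ = w ∘ s := funext fun j => (hs j).symm
    exact esymmSub_comp_eq_zero (t ∘ w) hσ.of_comp (by simpa only [Fintype.card_fin] using hr)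
  prod_sub_eq_zero i := by
    obtain ⟨j, hj⟩ : w i ∈ Set.range σ := h ▸ Set.mem_range_self i
    refine Finset.prod_eq_zero (Finset.mem_univ j) ?_
    rw [Function.comp_apply, Function.comp_apply, hj, sub_self]

end SatisfiesRelations

theorem algHom_rename {α β K T : Type*} [CommRing K] [CommRing T]
    [Algebra K T] (φ : MvPolynomial β K →ₐ[K] T)
    (f : α → β) (p : MvPolynomial α K) :
    φ (rename f p) = aeval (fun i => φ (X (f i))) p := by
  rw [← AlgHom.comp_apply]
  exact congrFun (congrArg _ (algHom_ext (by simp))) p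

section Relations

variable {α T : Type*} [Fintype α] [CommRing T]

theorem aeval_esymm {K : Type*} [CommRing K] [Algebra K T] (a : α → T) (r : ℕ) :
    aeval a (esymm α K r) = esymmOf a r := by
  simp only [esymm, map_sum, map_prod, aeval_X, esymmOf]

theorem aeval_hsymm {K : Type*} [CommRing K] [Algebra K T] [DecidableEq α] (a : α → T) (r : ℕ) :
    aeval a (hsymm α K r) = hsymmOf a r := by
  simp only [hsymm, map_sum, map_multiset_prod, Multiset.map_map, Function.comp_def, aeval_X,
    hsymmOf]

variable [Algebra ℚ T] {n k d : ℕ}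

theorem map_JgensQ_eq_zero_iff (φ : MvPolynomial (Fin n ⊕ Fin d) ℚ →ₐ[ℚ] T) :
    (∀ p ∈ JgensQ n k d, φ p = 0) ↔ SatisfiesRelations (0 : Fin k → T)
      (fun i => φ (X (.inl i))) fun j => φ (X (.inr j)) := by
  have hmapY (r : ℕ) : φ (hY n d r) = hsymmOf (fun j => φ (X (.inr j))) r := by
    rw [hY, algHom_rename, aeval_hsymm]
  have hmapXY (r : ℕ) : φ (genXY n d r) =
      esymmSub (fun i => φ (X (.inl i))) (fun j => φ (X (.inr j))) r := by
    simp only [genXY, map_sum, map_mul, map_pow, map_neg, map_one, eX, hmapY, algHom_rename,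
      aeval_esymm, esymmSub]
  have hmapPow (i : Fin n) : φ (genPow n d i) = ∏ j, (φ (X (.inl i)) - φ (X (.inr j))) := by
    simp only [genPow, map_sum, map_mul, map_pow, map_neg, map_one, eY, algHom_rename,
      aeval_esymm, prod_sub_eq_sum_esymmOf, Fintype.card_fin]
  constructor
  · refine fun h => ⟨fun r hr => ?_, fun r hr => ?_, fun i => ?_⟩
    · rw [esymmSub_zero_left, ← hmapY, h _ (.inl (.inl ⟨r, hr, rfl⟩)), mul_zero]
    · rw [← hmapXY, h _ (.inl (.inr ⟨r, hr, rfl⟩))]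
    · rw [← hmapPow, h _ (.inr ⟨i, rfl⟩)]
  · rintro h p ((⟨r, hr, rfl⟩ | ⟨r, hr, rfl⟩) | ⟨i, rfl⟩)
    · have hy := h.esymmSub_base_eq_zero r hr
      rw [esymmSub_zero_left] at hy
      rw [hmapY, ← (isUnit_neg_one.pow r).mul_right_eq_zero, hy]
    · rw [hmapXY, h.esymmSub_eq_zero r hr]
    · rw [hmapPow, h.prod_sub_eq_zero i]

theorem map_JtgensQ_eq_zero_iff (φ : MvPolynomial (Fin n ⊕ Fin d ⊕ Fin k) ℚ →ₐ[ℚ] T) :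
    (∀ p ∈ JtgensQ n k d, φ p = 0) ↔ SatisfiesRelations (fun i => φ (X (.inr (.inr i))))
      (fun i => φ (X (.inl i))) fun j => φ (X (.inr (.inl j))) := by
  have hmapTY (r : ℕ) : φ (genTY3 n k d r) =
      esymmSub (fun i => φ (X (.inr (.inr i)))) (fun j => φ (X (.inr (.inl j)))) r := by
    simp only [genTY3, map_sum, map_mul, map_pow, map_neg, map_one, eT3, hY3, algHom_rename,
      aeval_esymm, aeval_hsymm, esymmSub, Function.comp_apply]
  have hmapXY (r : ℕ) : φ (genXY3 n k d r) =
      esymmSub (fun i => φ (X (.inl i))) (fun j => φ (X (.inr (.inl j)))) r := by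
    simp only [genXY3, map_sum, map_mul, map_pow, map_neg, map_one, eX3, hY3, algHom_rename,
      aeval_esymm, aeval_hsymm, esymmSub, Function.comp_apply]
  have hmapPow (i : Fin n) :
      φ (genPow3 n k d i) = ∏ j, (φ (X (.inl i)) - φ (X (.inr (.inl j)))) := by
    simp only [genPow3, map_sum, map_mul, map_pow, map_neg, map_one, eY3, algHom_rename,
      aeval_esymm, prod_sub_eq_sum_esymmOf, Fintype.card_fin, Function.comp_apply]
  constructor
  · refine fun h => ⟨fun r hr => ?_, fun r hr => ?_, fun i => ?_⟩
    · rw [← hmapTY, h _ (.inl (.inl ⟨r, hr, rfl⟩))]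
    · rw [← hmapXY, h _ (.inl (.inr ⟨r, hr, rfl⟩))]
    · rw [← hmapPow, h _ (.inr ⟨i, rfl⟩)]
  · rintro h p ((⟨r, hr, rfl⟩ | ⟨r, hr, rfl⟩) | ⟨i, rfl⟩)
    · rw [hmapTY, h.esymmSub_base_eq_zero r hr]
    · rw [hmapXY, h.esymmSub_eq_zero r hr]
    · rw [hmapPow, h.prod_sub_eq_zero i]

end Relations

/-! ### Spanning the quotient of `ℚ[x,y]^{S_d}` -/

theorem map_esymmOf {α R S : Type*} [Fintype α] [CommRing R] [CommRing S] {F : Type*}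
    [FunLike F R S] [RingHomClass F R S] (φ : F) (a : α → R) (r : ℕ) :
    φ (esymmOf a r) = esymmOf (fun i => φ (a i)) r := by
  simp only [esymmOf, map_sum, map_prod]

theorem esymmOf_comp_perm {α R : Type*} [Fintype α] [CommRing R] (a : α → R)
    (g : Equiv.Perm α) (r : ℕ) : esymmOf (a ∘ g) r = esymmOf a r := by
  rw [← aeval_esymm (K := ℤ), ← aeval_rename, esymm_isSymmetric, aeval_esymm]

theorem hsymmOf_comp_perm {α R : Type*} [Fintype α] [DecidableEq α] [CommRing R] (a : α → R)
    (g : Equiv.Perm α) (r : ℕ) : hsymmOf (a ∘ g) r = hsymmOf a r := by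
  rw [← aeval_hsymm (K := ℤ), ← aeval_rename, hsymm_isSymmetric, aeval_hsymm]

theorem SatisfiesRelations.comp_perm {T : Type*} [CommRing T] {k n d : ℕ} {t : Fin k → T}
    {x : Fin n → T} {y : Fin d → T} (h : SatisfiesRelations t x y) (g : Equiv.Perm (Fin d)) :
    SatisfiesRelations t x (y ∘ g) where
  esymmSub_base_eq_zero r hr := by
    simpa only [esymmSub, hsymmOf_comp_perm] using h.esymmSub_base_eq_zero r hr
  esymmSub_eq_zero r hr := by
    simpa only [esymmSub, hsymmOf_comp_perm] using h.esymmSub_eq_zero r hr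
  prod_sub_eq_zero i := by
    simpa only [Function.comp_apply, Equiv.prod_comp g fun j => x i - y j] using
      h.prod_sub_eq_zero i

section Invariants

variable {n k d : ℕ}

/-- Polynomials in the `x`- and `y`-variables, viewed as polynomials in the `y`-variables over
`ℚ[x]`. -/
noncomputable def yPolyEquiv (n d : ℕ) :
    MvPolynomial (Fin n ⊕ Fin d) ℚ ≃ₐ[ℚ] MvPolynomial (Fin d) (MvPolynomial (Fin n) ℚ) :=
  (renameEquiv ℚ (Equiv.sumComm (Fin n) (Fin d))).trans (sumAlgEquiv ℚ (Fin d) (Fin n))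

theorem isSymmetric_yPolyEquiv {f : MvPolynomial (Fin n ⊕ Fin d) ℚ} (hf : f ∈ invQ2 n d) :
    (yPolyEquiv n d f).IsSymmetric := by
  intro g
  have hcomm : ((rename g).restrictScalars ℚ).comp (yPolyEquiv n d).toAlgHom =
      (yPolyEquiv n d).toAlgHom.comp (rename (permY n d g)) := by
    ext i : 1
    rcases i with i | i <;> simp [yPolyEquiv, permY]
  exact (DFunLike.congr_fun hcomm f).trans (congrArg (yPolyEquiv n d) (hf g))

theorem yPolyEquiv_symm_C (a : MvPolynomial (Fin n) ℚ) :
    (yPolyEquiv n d).symm (C a) = rename Sum.inl a := by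
  rw [AlgEquiv.symm_apply_eq]
  have hcomp : IsScalarTower.toAlgHom ℚ (MvPolynomial (Fin n) ℚ) _ =
      (yPolyEquiv n d).toAlgHom.comp (rename Sum.inl) := by
    ext i : 1
    simp [yPolyEquiv, algebraMap_eq]
  exact DFunLike.congr_fun hcomp a

theorem yPolyEquiv_symm_esymm (r : ℕ) :
    (yPolyEquiv n d).symm (esymm (Fin d) _ r) = esymmOf (fun j => X (.inr j)) r := by
  simp [esymm, esymmOf, yPolyEquiv]

theorem rename_mem_adjoin_range {σ τ : Type*} (f : σ → τ) (p : MvPolynomial σ ℚ) :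
    rename f p ∈ Algebra.adjoin ℚ (Set.range fun i => (X (f i) : MvPolynomial τ ℚ)) := by
  rw [rename_eq_aeval, ← aeval_range]
  exact ⟨p, rfl⟩

theorem esymmOf_mem_invQ2 (r : ℕ) :
    esymmOf (fun j => (X (.inr j) : MvPolynomial (Fin n ⊕ Fin d) ℚ)) r ∈ invQ2 n d := by
  intro g
  have hX : (fun j => rename (permY n d g) (X (.inr j))) =
      (fun j => (X (.inr j) : MvPolynomial (Fin n ⊕ Fin d) ℚ)) ∘ g :=
    _root_.funext fun j => rename_X _ _
  rw [map_esymmOf, hX, esymmOf_comp_perm]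

theorem invQ2_eq_adjoin (n d : ℕ) : invQ2 n d = Algebra.adjoin ℚ
    (Set.range (esymmOf fun j => X (.inr j)) ∪ Set.range fun i => X (.inl i)) := by
  refine le_antisymm (fun f hf => ?_) (Algebra.adjoin_le (Set.union_subset ?_ ?_))
  · obtain ⟨p, hp⟩ := esymmAlgHom_fin_surjective (MvPolynomial (Fin n) ℚ) le_rfl
      ⟨_, isSymmetric_yPolyEquiv hf⟩
    let φ : MvPolynomial (Fin d) (MvPolynomial (Fin n) ℚ) →+* MvPolynomial (Fin n ⊕ Fin d) ℚ :=
      (yPolyEquiv n d).symm.toRingEquiv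
    have hf' : f = φ (aeval (fun i : Fin d => esymm (Fin d) _ (i + 1)) p) := by
      rw [← esymmAlgHom_apply, hp]
      exact ((yPolyEquiv n d).symm_apply_apply f).symm
    rw [hf', map_aeval]
    refine eval₂_mem (fun m _ => ?_) fun i => Algebra.subset_adjoin (.inl ⟨i + 1, ?_⟩)
    · exact (yPolyEquiv_symm_C (p.coeff m)).symm ▸
        Algebra.adjoin_mono Set.subset_union_right (rename_mem_adjoin_range _ _)
    · exact (yPolyEquiv_symm_esymm _).symm
  · rintro _ ⟨r, rfl⟩
    exact esymmOf_mem_invQ2 r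
  · rintro _ ⟨i, rfl⟩ g
    exact rename_X _ _

theorem invQ2_quotient_spannedBy (hk : d ≤ k) (hn : d ≤ n) :
    SpannedBy ℚ (invQ2 n d ⧸ Ideal.comap (invQ2 n d).val (Ideal.span (JgensQ n k d)))
      (k.choose d * (d.factorial * stirling2 n d)) := by
  let π := Ideal.Quotient.mkₐ ℚ (Ideal.span (JgensQ n k d))
  have hrel : SatisfiesRelations (fun i => algebraMap ℚ _ ((0 : Fin k → ℚ) i))
      (fun i => π (X (.inl i))) fun j => π (X (.inr j)) := by
    simp only [Pi.zero_apply, map_zero]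
    exact (map_JgensQ_eq_zero_iff π).mp fun p hp =>
      Ideal.Quotient.eq_zero_iff_mem.mpr (Ideal.subset_span hp)
  have hrange : (π.comp (invQ2 n d).val).range = Algebra.adjoin ℚ
      (Set.range (esymmOf fun j => π (X (.inr j))) ∪ Set.range fun i => π (X (.inl i))) := by
    rw [AlgHom.range_comp, Subalgebra.range_val, invQ2_eq_adjoin, AlgHom.map_adjoin,
      Set.image_union, ← Set.range_comp, ← Set.range_comp]
    congr 3
    exact _root_.funext fun r => map_esymmOf π _ r
  have hker : Ideal.comap (invQ2 n d).val (Ideal.span (JgensQ n k d)) =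
      RingHom.ker (π.comp (invQ2 n d).val) := by
    ext f
    rw [RingHom.mem_ker, Ideal.mem_comap]
    exact Ideal.Quotient.eq_zero_iff_mem.symm
  have h := hrel.spannedBy_adjoin hk hn
  rw [← hrange] at h
  rw [hker]
  let e := Ideal.quotientKerEquivRange (π.comp (invQ2 n d).val)
  exact h.of_surjective e.symm.toLinearMap e.symm.surjective

end Invariants

section Homogeneous

theorem isHomogeneous_prod_map_X {α K : Type*} [CommSemiring K] (s : Multiset α) :
    ((s.map X).prod : MvPolynomial α K).IsHomogeneous s.card := by
  induction s using Multiset.induction_on with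
  | empty => simpa using isHomogeneous_one α K
  | cons a s ih =>
    rw [Multiset.map_cons, Multiset.prod_cons, Multiset.card_cons, add_comm]
    exact (isHomogeneous_X K a).mul ih

theorem esymm_isHomogeneous (α K : Type*) [Fintype α] [CommSemiring K] (r : ℕ) :
    (esymm α K r).IsHomogeneous r := by
  refine .sum _ _ _ fun s hs => ?_
  exact (Finset.mem_powersetCard.mp hs).2 ▸ isHomogeneous_prod_map_X s.val

theorem hsymm_isHomogeneous (α K : Type*) [Fintype α] [DecidableEq α] [CommSemiring K] (r : ℕ) :
    (hsymm α K r).IsHomogeneous r := by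
  refine .sum _ _ _ fun s _ => ?_
  simpa only [s.2] using isHomogeneous_prod_map_X (K := K) s.1

theorem isHomogeneous_sum_neg_one_pow_mul {σ K : Type*} [CommRing K] {r : ℕ}
    {p q : ℕ → MvPolynomial σ K} (hp : ∀ j, (p j).IsHomogeneous j)
    (hq : ∀ j, (q j).IsHomogeneous j) :
    (∑ j ∈ Finset.range (r + 1), (-1) ^ j * (p (r - j) * q j)).IsHomogeneous r := by
  refine .sum _ _ _ fun j hj => ?_
  have h := ((isHomogeneous_one σ K).neg.pow j).mul ((hp (r - j)).mul (hq j))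
  rwa [zero_mul, zero_add, Nat.sub_add_cancel (Nat.lt_succ_iff.mp (Finset.mem_range.mp hj))] at h

attribute [local instance] gradedAlgebra in
theorem isHomogeneous_span_JtgensQ (n k d : ℕ) :
    (Ideal.span (JtgensQ n k d)).IsHomogeneous
      (homogeneousSubmodule (Fin n ⊕ Fin d ⊕ Fin k) ℚ) := by
  refine Ideal.homogeneous_span _ _ ?_
  rintro _ ((⟨r, -, rfl⟩ | ⟨r, -, rfl⟩) | ⟨i, rfl⟩)
  · exact ⟨r, isHomogeneous_sum_neg_one_pow_mul
      (fun j => (esymm_isHomogeneous _ _ j).rename_isHomogeneous)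
      fun j => (hsymm_isHomogeneous _ _ j).rename_isHomogeneous⟩
  · exact ⟨r, isHomogeneous_sum_neg_one_pow_mul
      (fun j => (esymm_isHomogeneous _ _ j).rename_isHomogeneous)
      fun j => (hsymm_isHomogeneous _ _ j).rename_isHomogeneous⟩
  · exact ⟨d, isHomogeneous_sum_neg_one_pow_mul (isHomogeneous_X_pow _)
      fun j => (esymm_isHomogeneous _ _ j).rename_isHomogeneous⟩

theorem homogeneousComponent_zero_X_mul {σ K : Type*} [CommSemiring K] (i : σ)
    (p : MvPolynomial σ K) : homogeneousComponent 0 (X i * p) = 0 := by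
  classical
  rw [homogeneousComponent_zero, coeff_X_mul', if_neg (by simp), C_0]

theorem homogeneousComponent_succ_X_mul {σ K : Type*} [CommSemiring K] (m : ℕ) (i : σ)
    (p : MvPolynomial σ K) :
    homogeneousComponent (m + 1) (X i * p) = X i * homogeneousComponent m p := by
  classical
  ext u
  simp only [coeff_homogeneousComponent, coeff_X_mul']
  by_cases hi : i ∈ u.support
  · have hle : Finsupp.single i 1 ≤ u :=
      Finsupp.single_le_iff.mpr (Nat.one_le_iff_ne_zero.mpr (Finsupp.mem_support_iff.mp hi))
    have hu : u.degree = (u - Finsupp.single i 1).degree + 1 := by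
      conv_lhs => rw [← tsub_add_cancel_of_le hle, map_add, Finsupp.degree_single]
    simp only [hi, if_true, hu, Nat.add_right_cancel_iff]
  · simp only [hi, if_false, ite_self]

end Homogeneous

section Reynolds

variable {K G V : Type*} [CommRing K] [Group G] [Fintype G] [Invertible (Fintype.card G : K)]
  [AddCommGroup V] [Module K V] (ρ : Representation K G V)

theorem averageMap_apply (v : V) :
    ρ.averageMap v = ⅟(Fintype.card G : K) • ∑ g, ρ g v := by
  simp [GroupAlgebra.average, map_sum]

theorem averageMap_comm {f : V →ₗ[K] V} (hf : ∀ g v, ρ g (f v) = f (ρ g v)) (v : V) :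
    ρ.averageMap (f v) = f (ρ.averageMap v) := by
  simp only [averageMap_apply, hf, map_smul, map_sum]

theorem averageMap_mem {W : Submodule K V} {v : V} (h : ∀ g, ρ g v ∈ W) : ρ.averageMap v ∈ W := by
  rw [averageMap_apply]
  exact W.smul_mem _ (W.sum_mem fun g _ => h g)

/-- The action of `S_d` on `ℚ[x,y,t]` by permutation of the `y`-variables. -/
noncomputable def permRep (n k d : ℕ) :
    Representation ℚ (Equiv.Perm (Fin d)) (MvPolynomial (Fin n ⊕ Fin d ⊕ Fin k) ℚ) where
  toFun g := (rename (permY3 n k d g)).toLinearMap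
  map_one' := by
    have hone : permY3 n k d 1 = Equiv.refl _ := by ext (_ | _ | _) <;> rfl
    rw [hone]
    exact LinearMap.ext rename_id_apply
  map_mul' g h := by
    have hmul : ⇑(permY3 n k d (g * h)) = permY3 n k d g ∘ permY3 n k d h := by
      ext (_ | _ | _) <;> rfl
    rw [hmul]
    exact LinearMap.ext fun p => (rename_rename _ _ p).symm

end Reynolds

/-! ### Lifting spanning sets from `t = 0` -/

/-- A graded Nakayama lemma, proved by induction on the degree: `π m` is the projection onto
degree `m`, and multiplication by the `t i` raises degrees by one. -/
theorem eq_top_of_graded {ι P M : Type*} [Fintype ι] [Semiring P] [AddCommGroup M] [Module P M]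
    (N : Submodule P M) (t : ι → P) (π : ℕ → M →+ M) (hzero : ∀ i x, π 0 (t i • x) = 0)
    (hsucc : ∀ m i x, π (m + 1) (t i • x) = t i • π m x)
    (hsum : ∀ x, ∃ s : Finset ℕ, ∑ m ∈ s, π m x = x)
    (hN : ∀ x, ∃ y, (∀ m, π m y ∈ N) ∧ ∃ p : ι → M, x = y + ∑ i, t i • p i) : N = ⊤ := by
  have hcomp : ∀ m x, π m x ∈ N := by
    intro m
    induction m with
    | zero =>
      intro x
      obtain ⟨y, hy, p, rfl⟩ := hN x
      simpa only [map_add, map_sum, hzero, Finset.sum_const_zero, add_zero] using hy 0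
    | succ m ih =>
      intro x
      obtain ⟨y, hy, p, rfl⟩ := hN x
      simp only [map_add, map_sum, hsucc]
      exact N.add_mem (hy _) (N.sum_mem fun i _ => N.smul_mem _ (ih _))
  refine Submodule.eq_top_iff'.mpr fun x => ?_
  obtain ⟨s, hs⟩ := hsum x
  exact hs ▸ N.sum_mem fun m _ => hcomp m x

section Lift

variable {n k d : ℕ}

/-- The inclusion `ℚ[x,y]^{S_d} → ℚ[x,y,t]^{S_d}`. -/
noncomputable def liftInv (n k d : ℕ) : invQ2 n d →ₐ[ℚ] invQ3 n k d :=
  ((rename (Sum.map id Sum.inl)).comp (invQ2 n d).val).codRestrict (invQ3 n k d) fun f g => by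
    have hperm : permY3 n k d g ∘ Sum.map id Sum.inl = Sum.map id Sum.inl ∘ permY n d g := by
      ext (_ | _) <;> rfl
    change rename _ (rename _ f.1) = rename _ f.1
    rw [rename_rename, hperm, ← rename_rename, f.2 g]

/-- The specialisation `t = 0`. -/
noncomputable def tZero (n k d : ℕ) :
    MvPolynomial (Fin n ⊕ Fin d ⊕ Fin k) ℚ →ₐ[ℚ] MvPolynomial (Fin n ⊕ Fin d) ℚ :=
  aeval (Sum.elim (fun i => X (.inl i)) (Sum.elim (fun j => X (.inr j)) 0))

theorem tZero_mem_invQ2 {f : MvPolynomial (Fin n ⊕ Fin d ⊕ Fin k) ℚ} (hf : f ∈ invQ3 n k d) :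
    tZero n k d f ∈ invQ2 n d := by
  intro g
  have hcomm : (rename (permY n d g)).comp (tZero n k d) =
      (tZero n k d).comp (rename (permY3 n k d g)) := by
    ext i : 1
    rcases i with i | i | i <;> simp [tZero, permY, permY3]
  exact (DFunLike.congr_fun hcomm f).trans (congrArg (tZero n k d) (hf g))

/-- The ideal `(t_1, …, t_k)` of `ℚ[x,y,t]`. -/
noncomputable def tIdeal (n k d : ℕ) : Ideal (MvPolynomial (Fin n ⊕ Fin d ⊕ Fin k) ℚ) :=
  Ideal.span (Set.range fun i : Fin k => X (.inr (.inr i)))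

theorem X_mem_tIdeal (i : Fin k) : X (.inr (.inr i)) ∈ tIdeal n k d :=
  Ideal.subset_span ⟨i, rfl⟩

theorem sub_rename_tZero_mem_tIdeal (f : MvPolynomial (Fin n ⊕ Fin d ⊕ Fin k) ℚ) :
    f - rename (Sum.map id Sum.inl) (tZero n k d f) ∈ tIdeal n k d := by
  let π := Ideal.Quotient.mkₐ ℚ (tIdeal n k d)
  have hπ : π = π.comp ((rename (Sum.map id Sum.inl)).comp (tZero n k d)) := by
    ext i : 1
    rcases i with i | i | i
    · simp [tZero]
    · simp [tZero]
    · have hX : π (X (.inr (.inr i))) = 0 := Ideal.Quotient.eq_zero_iff_mem.mpr (X_mem_tIdeal i)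
      simp [tZero, hX]
  exact Ideal.Quotient.eq.mp (DFunLike.congr_fun hπ f)

theorem rename_mem_span_JtgensQ_sup_tIdeal {f : MvPolynomial (Fin n ⊕ Fin d) ℚ}
    (hf : f ∈ Ideal.span (JgensQ n k d)) :
    rename (Sum.map id Sum.inl) f ∈ Ideal.span (JtgensQ n k d) ⊔ tIdeal n k d := by
  let π := Ideal.Quotient.mkₐ ℚ (Ideal.span (JtgensQ n k d) ⊔ tIdeal n k d)
  have hrel := (map_JtgensQ_eq_zero_iff π).mp fun p hp =>
    Ideal.Quotient.eq_zero_iff_mem.mpr (Ideal.mem_sup_left (Ideal.subset_span hp))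
  have ht : (fun i : Fin k => π (X (.inr (.inr i)))) = 0 :=
    _root_.funext fun i => Ideal.Quotient.eq_zero_iff_mem.mpr (Ideal.mem_sup_right (X_mem_tIdeal i))
  rw [ht] at hrel
  have hgen : ∀ p ∈ JgensQ n k d, π (rename (Sum.map id Sum.inl) p) = 0 := by
    refine (map_JgensQ_eq_zero_iff (π.comp (rename (Sum.map id Sum.inl)))).mpr ?_
    simpa only [AlgHom.comp_apply, rename_X, Sum.map_inl, Sum.map_inr, id] using hrel
  have hle : Ideal.span (JgensQ n k d) ≤
      RingHom.ker (π.comp (rename (Sum.map id Sum.inl))) := Ideal.span_le.mpr hgen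
  exact Ideal.Quotient.eq_zero_iff_mem.mp (hle hf)

theorem rename_permY3_mem_span_JtgensQ {f : MvPolynomial (Fin n ⊕ Fin d ⊕ Fin k) ℚ}
    (hf : f ∈ Ideal.span (JtgensQ n k d)) (g : Equiv.Perm (Fin d)) :
    rename (permY3 n k d g) f ∈ Ideal.span (JtgensQ n k d) := by
  let π := Ideal.Quotient.mkₐ ℚ (Ideal.span (JtgensQ n k d))
  have hrel := (map_JtgensQ_eq_zero_iff π).mp fun p hp =>
    Ideal.Quotient.eq_zero_iff_mem.mpr (Ideal.subset_span hp)
  have hgen : ∀ p ∈ JtgensQ n k d, π (rename (permY3 n k d g) p) = 0 := by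
    refine (map_JtgensQ_eq_zero_iff (π.comp (rename (permY3 n k d g)))).mpr ?_
    simp only [AlgHom.comp_apply, rename_X]
    exact hrel.comp_perm g
  have hle : Ideal.span (JtgensQ n k d) ≤
      RingHom.ker (π.comp (rename (permY3 n k d g))) := Ideal.span_le.mpr hgen
  exact Ideal.Quotient.eq_zero_iff_mem.mp (hle hf)

/-- The homogeneous component of degree `m`, on `ℚ[x,y,t]^{S_d}`. -/
noncomputable def invComponent (n k d m : ℕ) : invQ3 n k d →+ invQ3 n k d where
  toFun f := ⟨homogeneousComponent m f.1, fun g => by rw [rename_homogeneousComponent, f.2 g]⟩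
  map_zero' := Subtype.ext (map_zero _)
  map_add' f g := Subtype.ext (map_add _ _ _)

theorem coe_invComponent (m : ℕ) (f : invQ3 n k d) :
    (invComponent n k d m f).1 = homogeneousComponent m f.1 := rfl

theorem sum_invComponent (f : invQ3 n k d) :
    ∑ m ∈ Finset.range (f.1.totalDegree + 1), invComponent n k d m f = f := by
  refine Subtype.ext ?_
  simp only [AddSubmonoidClass.coe_finsetSum, coe_invComponent]
  exact sum_homogeneousComponent f.1

theorem coe_X_smul (i : Fin k) (f : invQ3 n k d) :
    ((X i : MvPolynomial (Fin k) ℚ) • f : invQ3 n k d).1 = X (.inr (.inr i)) * f.1 :=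
  congrArg (· * f.1) (rename_X _ i)

theorem invComponent_zero_X_smul (i : Fin k) (f : invQ3 n k d) :
    invComponent n k d 0 ((X i : MvPolynomial (Fin k) ℚ) • f) = 0 := by
  refine Subtype.ext ?_
  rw [coe_invComponent, coe_X_smul, homogeneousComponent_zero_X_mul, ZeroMemClass.coe_zero]

theorem invComponent_succ_X_smul (m : ℕ) (i : Fin k) (f : invQ3 n k d) :
    invComponent n k d (m + 1) ((X i : MvPolynomial (Fin k) ℚ) • f) =
      (X i : MvPolynomial (Fin k) ℚ) • invComponent n k d m f := by
  refine Subtype.ext ?_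
  rw [coe_invComponent, coe_X_smul, coe_X_smul, homogeneousComponent_succ_X_mul, coe_invComponent]

theorem exists_eq_add_sum_smul_of_mem_sup (f : invQ3 n k d)
    (hf : f.1 ∈ Ideal.span (JtgensQ n k d) ⊔ tIdeal n k d) :
    ∃ j : invQ3 n k d, j.1 ∈ Ideal.span (JtgensQ n k d) ∧
      ∃ p : Fin k → invQ3 n k d, f = j + ∑ i, (X i : MvPolynomial (Fin k) ℚ) • p i := by
  have : Invertible (Fintype.card (Equiv.Perm (Fin d)) : ℚ) :=
    invertibleOfNonzero (Nat.cast_ne_zero.mpr Fintype.card_ne_zero)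
  let avg := (permRep n k d).averageMap
  have havg : ∀ q, avg q ∈ invQ3 n k d := (permRep n k d).averageMap_invariant
  obtain ⟨j, hj, q, hq, hjq⟩ := Submodule.mem_sup.mp hf
  obtain ⟨p, rfl⟩ := Ideal.mem_span_range_iff_exists_fun.mp hq
  have hmul : ∀ i, avg (p i * X (.inr (.inr i))) =
      ((X i : MvPolynomial (Fin k) ℚ) • (⟨avg (p i), havg (p i)⟩ : invQ3 n k d)).1 := fun i => by
    rw [coe_X_smul, mul_comm (p i)]
    exact averageMap_comm (permRep n k d) (f := LinearMap.mulLeft ℚ (X (.inr (.inr i))))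
      (fun g q => (map_mul (rename (permY3 n k d g)) _ q).trans (by rw [rename_X]; rfl)) (p i)
  refine ⟨⟨avg j, havg j⟩, ?_, fun i => ⟨avg (p i), havg (p i)⟩, Subtype.ext ?_⟩
  · exact averageMap_mem (permRep n k d)
      (W := (Ideal.span (JtgensQ n k d)).restrictScalars ℚ) (rename_permY3_mem_span_JtgensQ hj)
  · have hfix : avg f = f := (permRep n k d).averageMap_id f.1 f.2
    rw [← hfix, ← hjq, map_add, map_sum]
    simp only [hmul, AddMemClass.coe_add, AddSubmonoidClass.coe_finsetSum]

instance (n k d : ℕ) : IsScalarTower ℚ (MvPolynomial (Fin k) ℚ) (invQ3 n k d) :=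
  .of_algebraMap_eq fun r => ((tHomQ n k d).commutes r).symm

variable {B : Set (invQ2 n d)}

theorem invComponent_liftInv_mem_span
    (hhom : ∀ b ∈ B, ∃ m, (b : MvPolynomial (Fin n ⊕ Fin d) ℚ).IsHomogeneous m)
    {s : invQ2 n d} (hs : s ∈ Submodule.span ℚ B) (m : ℕ) :
    invComponent n k d m (liftInv n k d s) ∈
      Submodule.span (MvPolynomial (Fin k) ℚ) (liftInv n k d '' B) := by
  induction hs using Submodule.span_induction with
  | zero => simp only [map_zero, zero_mem]
  | add x y _ _ hx hy => simpa only [map_add] using add_mem hx hy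
  | smul r x _ hx =>
    have hcomm : invComponent n k d m (liftInv n k d (r • x)) =
        r • invComponent n k d m (liftInv n k d x) := by
      rw [map_smul]
      exact Subtype.ext (map_smul (homogeneousComponent m) r (liftInv n k d x).1)
    exact hcomm ▸ Submodule.smul_of_tower_mem _ r hx
  | mem b hb =>
    obtain ⟨l, hl⟩ := hhom b hb
    have hcomp : (invComponent n k d m (liftInv n k d b)).1 =
        if m = l then (liftInv n k d b).1 else 0 :=
      homogeneousComponent_of_mem hl.rename_isHomogeneous
    split_ifs at hcomp with hlm
    · rw [show invComponent n k d m (liftInv n k d b) = liftInv n k d b from Subtype.ext hcomp]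
      exact Submodule.subset_span ⟨b, hb, rfl⟩
    · rw [show invComponent n k d m (liftInv n k d b) = 0 from Subtype.ext hcomp]
      exact zero_mem _

theorem exists_eq_liftInv_add
    (hspan : Submodule.span ℚ
      (⇑(Ideal.Quotient.mk (Ideal.comap (invQ2 n d).val (Ideal.span (JgensQ n k d)))) '' B) = ⊤)
    (f : invQ3 n k d) :
    ∃ s ∈ Submodule.span ℚ B, ∃ j : invQ3 n k d, j.1 ∈ Ideal.span (JtgensQ n k d) ∧
      ∃ p : Fin k → invQ3 n k d,
        f = liftInv n k d s + j + ∑ i, (X i : MvPolynomial (Fin k) ℚ) • p i := by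
  let I := Ideal.comap (invQ2 n d).val (Ideal.span (JgensQ n k d))
  let q : invQ2 n d := ⟨tZero n k d f.1, tZero_mem_invQ2 f.2⟩
  obtain ⟨s, hs, hsq⟩ : ∃ s ∈ Submodule.span ℚ B, q - s ∈ I := by
    have hmem : Ideal.Quotient.mkₐ ℚ I q ∈
        (Submodule.span ℚ B).map (Ideal.Quotient.mkₐ ℚ I).toLinearMap := by
      rw [Submodule.map_span]
      exact hspan.ge trivial
    obtain ⟨s, hs, hsq⟩ := hmem
    exact ⟨s, hs, Ideal.Quotient.eq.mp hsq.symm⟩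
  have hmem : (f - liftInv n k d s).1 ∈ Ideal.span (JtgensQ n k d) ⊔ tIdeal n k d := by
    have hsplit : (f - liftInv n k d s).1 = rename (Sum.map id Sum.inl) (q - s).1 +
        (f.1 - rename (Sum.map id Sum.inl) (tZero n k d f.1)) := by
      change f.1 - rename (Sum.map id Sum.inl) s.1 =
        rename (Sum.map id Sum.inl) (tZero n k d f.1 - s.1) + _
      rw [map_sub]
      ring
    exact hsplit ▸ add_mem (rename_mem_span_JtgensQ_sup_tIdeal hsq)
      (Ideal.mem_sup_right (sub_rename_tZero_mem_tIdeal f.1))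
  obtain ⟨j, hj, p, hp⟩ := exists_eq_add_sum_smul_of_mem_sup _ hmem
  exact ⟨s, hs, j, hj, p, by rw [add_assoc, ← hp, add_sub_cancel]⟩

theorem span_liftInv_sup_eq_top
    (hhom : ∀ b ∈ B, ∃ m, (b : MvPolynomial (Fin n ⊕ Fin d) ℚ).IsHomogeneous m)
    (hspan : Submodule.span ℚ
      (⇑(Ideal.Quotient.mk (Ideal.comap (invQ2 n d).val (Ideal.span (JgensQ n k d)))) '' B) = ⊤) :
    Submodule.span (MvPolynomial (Fin k) ℚ) (liftInv n k d '' B) ⊔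
      (Ideal.comap (invQ3 n k d).val (Ideal.span (JtgensQ n k d))).restrictScalars _ = ⊤ := by
  refine eq_top_of_graded _ X (invComponent n k d) invComponent_zero_X_smul
    invComponent_succ_X_smul (fun f => ⟨_, sum_invComponent f⟩) fun f => ?_
  obtain ⟨s, hs, j, hj, p, hp⟩ := exists_eq_liftInv_add hspan f
  refine ⟨liftInv n k d s + j, fun m => ?_, p, hp⟩
  rw [map_add]
  exact Submodule.add_mem_sup (invComponent_liftInv_mem_span hhom hs m)
    (homogeneousComponent_mem_of_mem (isHomogeneous_span_JtgensQ n k d) hj m)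

end Lift

/-! ### Points of the scheme cut out by the relations -/

theorem card_filter_card_insert {α : Type*} [Fintype α] [DecidableEq α] (s : Finset α) (d : ℕ) :
    (Finset.univ.filter fun c => (insert c s).card = d + 1).card =
      if s.card = d + 1 then d + 1 else if s.card = d then Fintype.card α - d else 0 := by
  split_ifs with hsucc hd
  · rw [← hsucc]
    congr 1
    ext c
    by_cases hc : c ∈ s <;> simp [hc, hsucc]
  · rw [← hd, ← Finset.card_compl]
    congr 1
    ext c
    by_cases hc : c ∈ s <;> simp [hc]
  · rw [Finset.card_eq_zero, Finset.filter_eq_empty_iff]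
    intro c _
    by_cases hc : c ∈ s <;> simp [hc, hsucc, hd]

theorem card_filter_card_image (k n d : ℕ) :
    (Finset.univ.filter fun w : Fin n → Fin k => (Finset.univ.image w).card = d).card =
      k.descFactorial d * stirling2 n d := by
  induction n generalizing d with
  | zero => cases d <;> simp [stirling2]
  | succ n ih =>
    have himage : ∀ (c : Fin k) (w : Fin n → Fin k),
        Finset.univ.image (Fin.cons c w : Fin (n + 1) → Fin k) =
          insert c (Finset.univ.image w) := by
      intro c w
      ext a
      simp [Fin.exists_fin_succ, eq_comm]
    have hfiber : (Finset.univ.filter fun w : Fin (n + 1) → Fin k =>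
          (Finset.univ.image w).card = d).card = ∑ w : Fin n → Fin k,
        (Finset.univ.filter fun c => (insert c (Finset.univ.image w)).card = d).card := by
      simp only [Finset.card_filter]
      rw [← (Fin.consEquiv fun _ => Fin k).sum_comp, Fintype.sum_prod_type_right]
      exact Finset.sum_congr rfl fun w _ => Finset.sum_congr rfl fun c _ => by
        rw [← himage]; rfl
    rw [hfiber]
    cases d with
    | zero => simp [stirling2]
    | succ d =>
      have hsplit : ∀ m, (if m = d + 1 then d + 1 else if m = d then k - d else 0) =
          (d + 1) * (if m = d + 1 then 1 else 0) + (k - d) * (if m = d then 1 else 0) := by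
        intro m
        split_ifs <;> omega
      simp only [card_filter_card_insert, Fintype.card_fin, hsplit, Finset.sum_add_distrib,
        ← Finset.mul_sum, ← Finset.card_filter, ih]
      rw [Nat.descFactorial_succ, stirling2]
      ring

theorem linearIndependent_of_pairwise_dual_eq_zero {ι P M : Type*} [CommRing P] [NoZeroDivisors P]
    [AddCommGroup M] [Module P M] (v : ι → M) (f : ι → Module.Dual P M)
    (hzero : Pairwise fun i j => f i (v j) = 0) (hne : ∀ i, f i (v i) ≠ 0) :
    LinearIndependent P v := by
  refine linearIndependent_iff'.mpr fun s g hg i hi => ?_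
  have hsum : f i (∑ j ∈ s, g j • v j) = g i * f i (v i) := by
    simp only [map_sum, map_smul, smul_eq_mul]
    exact Finset.sum_eq_single_of_mem i hi fun j _ hj => by rw [hzero hj.symm, mul_zero]
  rw [hg, map_zero, eq_comm, mul_eq_zero] at hsum
  exact hsum.resolve_right (hne i)

section Points

variable {n k d : ℕ}

/-- The invariant quotient `ℚ[x,y,t]^{S_d} / (J_{n,k,d}^{ℚ,t} ∩ ℚ[x,y,t]^{S_d})`. -/
abbrev InvQuotient (n k d : ℕ) : Type :=
  invQ3 n k d ⧸ Ideal.comap (invQ3 n k d).val (Ideal.span (JtgensQ n k d))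

/-- The class of `x_i`. -/
noncomputable def xClass (k d : ℕ) (i : Fin n) : InvQuotient n k d :=
  Ideal.Quotient.mk _ ⟨X (.inl i), fun g => rename_X (permY3 n k d g) (.inl i)⟩

theorem exists_algHom_xClass_eq {w : Fin n → Fin k} (hw : (Finset.univ.image w).card = d) :
    ∃ φ : InvQuotient n k d →ₐ[MvPolynomial (Fin k) ℚ] MvPolynomial (Fin k) ℚ,
      ∀ i, φ (xClass k d i) = X (w i) := by
  let σ : Fin d ↪o Fin k := (Finset.univ.image w).orderEmbOfFin hw
  have hrange : Set.range w = Set.range σ := by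
    rw [Finset.range_orderEmbOfFin, Finset.coe_image, Finset.coe_univ, Set.image_univ]
  let ψ : MvPolynomial (Fin n ⊕ Fin d ⊕ Fin k) ℚ →ₐ[ℚ] MvPolynomial (Fin k) ℚ :=
    aeval (Sum.elim (X ∘ w) (Sum.elim (X ∘ σ) X))
  have hψ : Ideal.span (JtgensQ n k d) ≤ RingHom.ker ψ := by
    refine Ideal.span_le.mpr ((map_JtgensQ_eq_zero_iff ψ).mpr ?_)
    simpa only [ψ, aeval_X, Sum.elim_inl, Sum.elim_inr] using
      SatisfiesRelations.of_range_eq X σ.injective hrange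
  have ht : ∀ p, ψ (rename (Sum.inr ∘ Sum.inr) p) = p := by
    intro p
    rw [algHom_rename]
    simp only [ψ, aeval_X, Sum.elim_inr, Function.comp_apply]
    exact aeval_X_left_apply p
  let φ : invQ3 n k d →ₐ[MvPolynomial (Fin k) ℚ] MvPolynomial (Fin k) ℚ :=
    { (ψ.comp (invQ3 n k d).val).toRingHom with commutes' := ht }
  exact ⟨Ideal.Quotient.liftₐ _ φ fun f hf => hψ hf, fun i => aeval_X _ _⟩

/-- A product vanishing at every point `x = (t_{w'(1)}, …, t_{w'(n)})` with `w' ≠ w`. -/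
noncomputable def separator (d : ℕ) (w : Fin n → Fin k) : InvQuotient n k d :=
  ∏ i, ∏ c ∈ Finset.univ.erase (w i),
    (xClass k d i - algebraMap (MvPolynomial (Fin k) ℚ) _ (X c))

theorem algHom_separator {w w' : Fin n → Fin k}
    {φ : InvQuotient n k d →ₐ[MvPolynomial (Fin k) ℚ] MvPolynomial (Fin k) ℚ}
    (hφ : ∀ i, φ (xClass k d i) = X (w' i)) :
    φ (separator d w) = ∏ i, ∏ c ∈ Finset.univ.erase (w i), (X (w' i) - X c) := by
  simp only [separator, map_prod, map_sub, hφ, AlgHom.commutes, Algebra.algebraMap_self,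
    RingHom.id_apply]

theorem linearIndependent_separator (n k d : ℕ) : LinearIndependent (MvPolynomial (Fin k) ℚ)
    fun w : {w : Fin n → Fin k // (Finset.univ.image w).card = d} => separator d w.1 := by
  choose φ hφ using fun w : {w : Fin n → Fin k // (Finset.univ.image w).card = d} =>
    exists_algHom_xClass_eq w.2
  refine linearIndependent_of_pairwise_dual_eq_zero _ (fun w => (φ w).toLinearMap)
    (fun w' w hne => (algHom_separator (hφ w')).trans ?_)
    fun w => (algHom_separator (hφ w)).trans_ne ?_
  · obtain ⟨i, hi⟩ := Function.ne_iff.mp (Subtype.coe_ne_coe.mpr hne)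
    exact Finset.prod_eq_zero (Finset.mem_univ i) <| Finset.prod_eq_zero
      (Finset.mem_erase.mpr ⟨hi, Finset.mem_univ (w'.1 i)⟩) (sub_self _)
  · refine Finset.prod_ne_zero_iff.mpr fun i _ => Finset.prod_ne_zero_iff.mpr fun c hc => ?_
    exact sub_ne_zero.mpr fun h => Finset.ne_of_mem_erase hc (X_injective h).symm

theorem le_finrank_InvQuotient (n k d : ℕ)
    [Module.Finite (MvPolynomial (Fin k) ℚ) (InvQuotient n k d)] :
    k.descFactorial d * stirling2 n d ≤
      Module.finrank (MvPolynomial (Fin k) ℚ) (InvQuotient n k d) := by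
  rw [← card_filter_card_image, ← Fintype.card_subtype]
  exact (linearIndependent_separator n k d).fintype_card_le_finrank

end Points

/-! ### Bases of the quotient of `ℚ[x,y,t]^{S_d}` -/

section Basis

variable {n k d : ℕ} {B : Set (invQ2 n d)}

theorem span_mk_liftInv_eq_top
    (hhom : ∀ b ∈ B, ∃ m, (b : MvPolynomial (Fin n ⊕ Fin d) ℚ).IsHomogeneous m)
    (hspan : Submodule.span ℚ
      (⇑(Ideal.Quotient.mk (Ideal.comap (invQ2 n d).val (Ideal.span (JgensQ n k d)))) '' B) = ⊤) :
    Submodule.span (MvPolynomial (Fin k) ℚ)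
      (Set.range fun b : B => (Ideal.Quotient.mk _ (liftInv n k d b) : InvQuotient n k d)) = ⊤ := by
  let I := Ideal.comap (invQ3 n k d).val (Ideal.span (JtgensQ n k d))
  let π := (Ideal.Quotient.mkₐ (MvPolynomial (Fin k) ℚ) I).toLinearMap
  have hI : (I.restrictScalars (MvPolynomial (Fin k) ℚ)).map π = ⊥ :=
    LinearMap.le_ker_iff_map.mp fun _ hf => Ideal.Quotient.eq_zero_iff_mem.mpr hf
  have hmap := congrArg (Submodule.map π) (span_liftInv_sup_eq_top hhom hspan)
  rw [Submodule.map_sup, hI, sup_bot_eq, Submodule.map_span, Submodule.map_top,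
    LinearMap.range_eq_top.mpr Ideal.Quotient.mk_surjective, Set.image_image,
    Set.image_eq_range] at hmap
  exact hmap

theorem exists_basis_InvQuotient (hk : d ≤ k) (hn : d ≤ n)
    (hhom : ∀ b ∈ B, ∃ m, (b : MvPolynomial (Fin n ⊕ Fin d) ℚ).IsHomogeneous m)
    (hind : LinearIndependent ℚ fun b : B =>
      Ideal.Quotient.mk (Ideal.comap (invQ2 n d).val (Ideal.span (JgensQ n k d))) b.1)
    (hspan : Submodule.span ℚ
      (⇑(Ideal.Quotient.mk (Ideal.comap (invQ2 n d).val (Ideal.span (JgensQ n k d)))) '' B) = ⊤) :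
    ∃ b : Module.Basis B (MvPolynomial (Fin k) ℚ) (InvQuotient n k d),
      (∀ i, b i = Ideal.Quotient.mk _ (liftInv n k d i)) ∧
        Module.rank (MvPolynomial (Fin k) ℚ) (InvQuotient n k d) =
          (k.descFactorial d * stirling2 n d : ℕ) := by
  have hN := invQ2_quotient_spannedBy hk hn
  have := hN.module_finite
  have : Fintype B := @Fintype.ofFinite _ hind.finite
  have hspanT := span_mk_liftInv_eq_top hhom hspan
  have : Module.Finite (MvPolynomial (Fin k) ℚ) (InvQuotient n k d) :=
    .of_fg_top (hspanT ▸ Submodule.fg_span (Set.finite_range _))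
  have hcard : Fintype.card B ≤ k.descFactorial d * stirling2 n d := by
    refine (hind.fintype_card_le_finrank.trans hN.finrank_le).trans_eq ?_
    rw [Nat.descFactorial_eq_factorial_mul_choose]
    ring
  have hle := le_finrank_InvQuotient n k d
  let b := Module.Basis.mk
    (linearIndependent_of_top_le_span_of_card_le_finrank hspanT.ge (hcard.trans hle)) hspanT.ge
  refine ⟨b, fun i => Module.Basis.mk_apply _ _ i, ?_⟩
  rw [← Module.finrank_eq_rank, ((Module.finrank_eq_card_basis b).trans_le hcard).antisymm hle]

theorem BsetT_eq_range (n k d : ℕ) (B : Set (invQ2 n d)) :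
    BsetT n k d B = Set.range fun p : (Fin k →₀ ℕ) × B =>
      (monomial p.1 1 : MvPolynomial (Fin k) ℚ) • liftInv n k d p.2 := by
  have hmonomial : ∀ (u : Fin k →₀ ℕ) (b : B),
      ((monomial u 1 : MvPolynomial (Fin k) ℚ) • liftInv n k d b).1 =
        rename (Sum.map id Sum.inl) b.1.1 * ∏ i, X (.inr (.inr i)) ^ u i := by
    intro u b
    have hprod : rename (Sum.inr ∘ Sum.inr) (monomial u (1 : ℚ)) =
        ∏ i, (X (.inr (.inr i)) : MvPolynomial (Fin n ⊕ Fin d ⊕ Fin k) ℚ) ^ u i := by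
      rw [monomial_eq, C_1, one_mul, Finsupp.prod_fintype _ _ fun _ => pow_zero _]
      simp only [map_prod, map_pow, rename_X, Function.comp_apply]
    rw [← hprod, mul_comm]
    rfl
  ext q
  constructor
  · rintro ⟨b, hb, c, hq⟩
    exact ⟨(Finsupp.equivFunOnFinite.symm c, ⟨b, hb⟩),
      Subtype.ext ((hmonomial _ _).trans hq.symm)⟩
  · rintro ⟨⟨u, b⟩, rfl⟩
    exact ⟨b, b.2, u, hmonomial u b⟩

end Basis

theorem BsetT_descends_to_basis_general (n k d : ℕ) (hk : d ≤ k) (hn : d ≤ n)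
    (B : Set ↥(invQ2 n d))
    (hhom : ∀ b ∈ B, ∃ m, ((b : MvPolynomial (Fin n ⊕ Fin d) ℚ)).IsHomogeneous m)
    (hind : LinearIndependent ℚ (fun b : B =>
      Ideal.Quotient.mk (Ideal.comap (invQ2 n d).val (Ideal.span (JgensQ n k d)))
        (b : ↥(invQ2 n d))))
    (hspan : Submodule.span ℚ
      (⇑(Ideal.Quotient.mk (Ideal.comap (invQ2 n d).val (Ideal.span (JgensQ n k d)))) ''
        B) = ⊤) :
    LinearIndependent ℚ (fun q : BsetT n k d B =>
      Ideal.Quotient.mk (Ideal.comap (invQ3 n k d).val (Ideal.span (JtgensQ n k d)))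
        (q : ↥(invQ3 n k d))) ∧
    Submodule.span ℚ
      (⇑(Ideal.Quotient.mk (Ideal.comap (invQ3 n k d).val (Ideal.span (JtgensQ n k d)))) ''
        BsetT n k d B) = ⊤ ∧
    Module.Free (MvPolynomial (Fin k) ℚ)
      (↥(invQ3 n k d) ⧸ Ideal.comap (invQ3 n k d).val (Ideal.span (JtgensQ n k d))) ∧
    Module.rank (MvPolynomial (Fin k) ℚ)
        (↥(invQ3 n k d) ⧸ Ideal.comap (invQ3 n k d).val (Ideal.span (JtgensQ n k d))) =
      ((Nat.factorial k / Nat.factorial (k - d) * stirling2 n d : ℕ) : Cardinal) := by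
  obtain ⟨b, hb, hrank⟩ := exists_basis_InvQuotient hk hn hhom hind hspan
  let g := fun p : (Fin k →₀ ℕ) × B =>
    (monomial p.1 1 : MvPolynomial (Fin k) ℚ) • liftInv n k d p.2
  let c := (basisMonomials (Fin k) ℚ).smulTower b
  have hc : ⇑c = Ideal.Quotient.mk _ ∘ g := _root_.funext fun p => by
    rw [Module.Basis.smulTower_apply, coe_basisMonomials, hb]
    rfl
  have hg : Function.Injective g := .of_comp (hc ▸ c.injective)
  have := Module.Free.of_basis b
  rw [BsetT_eq_range]
  refine ⟨(linearIndependent_equiv' (Equiv.ofInjective g hg) hc.symm).mp c.linearIndependent,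
    ?_, ‹_›, ?_⟩
  · rw [← Set.range_comp, ← hc, c.span_eq]
  · rw [← Nat.descFactorial_eq_div hk, hrank]

/-- If a family `B` of homogeneous `S_d`-invariant polynomials
descends to a `ℚ`-basis of `ℚ[x,y]^{S_d}/(J_{n,k,d}^ℚ ∩ ℚ[x,y]^{S_d})`, then `B^t`
descends to a `ℚ`-basis of `ℚ[x,y,t]^{S_d}/(J_{n,k,d}^{ℚ,t} ∩ ℚ[x,y,t]^{S_d})`; in
particular, this last quotient is a free `ℚ[t_1,…,t_k]`-module of rank
`(k!/(k−d)!)·Stir(n,d)`. -/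
theorem BsetT_descends_to_basis (n k d : ℕ) (hd : 1 ≤ d) (hk : d ≤ k) (hn : k ≤ n)
    (B : Set ↥(invQ2 n d))
    (hhom : ∀ b ∈ B, ∃ m, ((b : MvPolynomial (Fin n ⊕ Fin d) ℚ)).IsHomogeneous m)
    (hind : LinearIndependent ℚ (fun b : B =>
      Ideal.Quotient.mk (Ideal.comap (invQ2 n d).val (Ideal.span (JgensQ n k d)))
        (b : ↥(invQ2 n d))))
    (hspan : Submodule.span ℚ
      (⇑(Ideal.Quotient.mk (Ideal.comap (invQ2 n d).val (Ideal.span (JgensQ n k d)))) ''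
        B) = ⊤) :
    LinearIndependent ℚ (fun q : BsetT n k d B =>
      Ideal.Quotient.mk (Ideal.comap (invQ3 n k d).val (Ideal.span (JtgensQ n k d)))
        (q : ↥(invQ3 n k d))) ∧
    Submodule.span ℚ
      (⇑(Ideal.Quotient.mk (Ideal.comap (invQ3 n k d).val (Ideal.span (JtgensQ n k d)))) ''
        BsetT n k d B) = ⊤ ∧
    Module.Free (MvPolynomial (Fin k) ℚ)
      (↥(invQ3 n k d) ⧸ Ideal.comap (invQ3 n k d).val (Ideal.span (JtgensQ n k d))) ∧
    Module.rank (MvPolynomial (Fin k) ℚ)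
        (↥(invQ3 n k d) ⧸ Ideal.comap (invQ3 n k d).val (Ideal.span (JtgensQ n k d))) =
      ((Nat.factorial k / Nat.factorial (k - d) * stirling2 n d : ℕ) : Cardinal) := by
  exact BsetT_descends_to_basis_general n k d hk (hk.trans hn) B hhom hind hspan
end

section
/- Let n ≥ k ≥ d ≥ 1 be integers. If f ∈ J_{n,k,d} ∩ ℤ[x_1,…,x_n,y_1,…,y_d]^{S_d}, then d!·f lies in the ideal of the invariant ring ℤ[x_1,…,x_n,y_1,…,y_d]^{S_d} generated by the set G. -/
open MvPolynomial

set_option synthInstance.maxHeartbeats 1000000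
set_option maxHeartbeats 4000000

/-- The elementary symmetric polynomial `e_r` in the x-variables, over `ℤ`. -/
noncomputable def eXZ (n d r : ℕ) : MvPolynomial (Fin n ⊕ Fin d) ℤ :=
  rename Sum.inl (esymm (Fin n) ℤ r)

/-- The complete homogeneous symmetric polynomial `h_r` in the y-variables, over `ℤ`. -/
noncomputable def hYZ (n d r : ℕ) : MvPolynomial (Fin n ⊕ Fin d) ℤ :=
  rename Sum.inr (hsymm (Fin d) ℤ r)

/-- The elementary symmetric polynomial `e_r` in the y-variables, over `ℤ`. -/
noncomputable def eYZ (n d r : ℕ) : MvPolynomial (Fin n ⊕ Fin d) ℤ :=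
  rename Sum.inr (esymm (Fin d) ℤ r)

/-- `Σ_{a+b=r} (−1)^b e_a(x_1,…,x_n)·h_b(y_1,…,y_d)`, over `ℤ`. -/
noncomputable def genXYZ (n d r : ℕ) : MvPolynomial (Fin n ⊕ Fin d) ℤ :=
  ∑ j ∈ Finset.range (r + 1),
    (-1 : MvPolynomial (Fin n ⊕ Fin d) ℤ) ^ j * (eXZ n d (r - j) * hYZ n d j)

/-- `Σ_{j=0}^{d} (−1)^j x_i^{d−j} e_j(y_1,…,y_d)`, over `ℤ`. -/
noncomputable def genPowZ (n d : ℕ) (i : Fin n) : MvPolynomial (Fin n ⊕ Fin d) ℤ :=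
  ∑ j ∈ Finset.range (d + 1),
    (-1 : MvPolynomial (Fin n ⊕ Fin d) ℤ) ^ j * (X (Sum.inl i) ^ (d - j) * eYZ n d j)

/-- The set `G ⊆ ℤ[x_1,…,x_n,y_1,…,y_d]` of generators of the ideal `J_{n,k,d}`. -/
def GgensZ (n k d : ℕ) : Set (MvPolynomial (Fin n ⊕ Fin d) ℤ) :=
  {p | ∃ r, k - d < r ∧ p = hYZ n d r} ∪
  {p | ∃ r, n - d < r ∧ p = genXYZ n d r} ∪
  {p | ∃ i : Fin n, p = genPowZ n d i}

/-- The subring of `S_d`-invariants of `ℤ[x_1,…,x_n,y_1,…,y_d]`, where `S_d` permutes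
the variables `y_1,…,y_d` and fixes the x-variables. -/
noncomputable def invZ2 (n d : ℕ) : Subalgebra ℤ (MvPolynomial (Fin n ⊕ Fin d) ℤ) where
  carrier := {f | ∀ g : Equiv.Perm (Fin d), rename (⇑(permY n d g)) f = f}
  mul_mem' := fun ha hb g => by rw [map_mul, ha g, hb g]
  add_mem' := fun ha hb g => by rw [map_add, ha g, hb g]
  one_mem' := fun g => by rw [map_one]
  zero_mem' := fun g => by rw [map_zero]
  algebraMap_mem' := fun r g => by rw [MvPolynomial.algebraMap_eq, rename_C]

/-! Let a finite group `G` act on a ring `A` with ring of invariants `R`. The transfer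
`a ↦ ∑ g, g • a` is an `R`-linear map `A → R`, so it sends the extension `IA` of an ideal `I` of `R`
back into `I`; on an invariant it is multiplication by `|G|`. Here `G = S_d`, and `I` is generated
by the elements of `GgensZ`, all of which are invariant, so that `IA = J_{n,k,d}`. -/

theorem apply_mem_of_mem_ideal_map {R A : Type*} [CommSemiring R] [CommSemiring A] [Algebra R A]
    (φ : A →ₗ[R] R) {I : Ideal R} {a : A} (ha : a ∈ I.map (algebraMap R A)) : φ a ∈ I := by
  have ha' : a ∈ I • (⊤ : Submodule R A) := by
    rwa [Ideal.smul_top_eq_map, Submodule.restrictScalars_mem]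
  have hφ : φ a ∈ I • (⊤ : Submodule R A).map φ := by
    rw [← Submodule.map_smul'']
    exact Submodule.mem_map_of_mem ha'
  exact Submodule.smul_le.2 (fun i hi r _ ↦ I.mul_mem_right r hi) hφ

theorem smul_sum_perm {G M : Type*} [Group G] [Fintype G] [AddCommMonoid M]
    [DistribMulAction G M] (m : M) (g : G) : g • ∑ h : G, h • m = ∑ h : G, h • m := by
  simp only [Finset.smul_sum, smul_smul]
  exact (Group.mulLeft_bijective g).sum_comp fun h ↦ h • m

section Transfer

variable (R A G : Type*) [CommSemiring R] [Semiring A] [Algebra R A] [FaithfulSMul R A]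
  [Group G] [Fintype G] [MulSemiringAction G A] [SMulCommClass G R A] [Algebra.IsInvariant R A G]

/-- The transfer `a ↦ ∑ g, g • a` from `A` to its ring of invariants under a finite group `G`.
The ring of invariants is any `R` that injects into `A` with the invariants as its image. -/
noncomputable def invariantTransfer : A →ₗ[R] R :=
  (∑ g : G, DistribSMul.toLinearMap R A g).codRestrictOfInjective (Algebra.linearMap R A)
    (by rw [Algebra.coe_linearMap]; exact FaithfulSMul.algebraMap_injective R A)
    fun a ↦ LinearMap.mem_range.2 <|
      Algebra.IsInvariant.isInvariant (G := G) _ fun g ↦ by simpa using smul_sum_perm a g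

theorem algebraMap_invariantTransfer (a : A) :
    algebraMap R A (invariantTransfer R A G a) = ∑ g : G, g • a := by
  rw [invariantTransfer, ← Algebra.linearMap_apply, LinearMap.codRestrictOfInjective_comp_apply]
  simp

theorem invariantTransfer_algebraMap (r : R) :
    invariantTransfer R A G (algebraMap R A r) = Fintype.card G * r :=
  FaithfulSMul.algebraMap_injective R A <| by
    simp [algebraMap_invariantTransfer, smul_algebraMap]

end Transfer

theorem card_mul_mem_of_algebraMap_mem_map {R A : Type*} (G : Type*) [CommSemiring R]
    [CommSemiring A] [Algebra R A] [FaithfulSMul R A] [Group G] [Fintype G]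
    [MulSemiringAction G A] [SMulCommClass G R A] [Algebra.IsInvariant R A G]
    {I : Ideal R} {r : R} (hr : algebraMap R A r ∈ I.map (algebraMap R A)) :
    (Fintype.card G : R) * r ∈ I := by
  rw [← invariantTransfer_algebraMap R A G]
  exact apply_mem_of_mem_ideal_map _ hr

section Rename

variable {σ σ' τ τ' R : Type*} [CommSemiring R]

theorem rename_sumCongr_refl_rename_inl (g : τ ≃ τ') (p : MvPolynomial σ R) :
    rename (Equiv.sumCongr (Equiv.refl σ) g) (rename Sum.inl p) = rename Sum.inl p := by
  rw [rename_rename]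
  rfl

theorem rename_sumCongr_rename_inr_of_isSymmetric (e : σ ≃ σ') (g : Equiv.Perm τ)
    {p : MvPolynomial τ R} (hp : p.IsSymmetric) :
    rename (Equiv.sumCongr e g) (rename Sum.inr p) = rename Sum.inr p := by
  conv_rhs => rw [← hp g]
  simp only [rename_rename]
  rfl

end Rename

theorem neg_one_pow_mul_mem {A S : Type*} [Ring A] [SetLike S A] [SubringClass S A] {s : S}
    (j : ℕ) {a : A} (ha : a ∈ s) : (-1) ^ j * a ∈ s :=
  mul_mem (pow_mem (neg_mem (one_mem s)) j) ha

section Invariants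

variable {n d : ℕ}

theorem rename_inl_mem_invZ2 (p : MvPolynomial (Fin n) ℤ) : rename Sum.inl p ∈ invZ2 n d :=
  fun g ↦ rename_sumCongr_refl_rename_inl g p

theorem rename_inr_mem_invZ2 {p : MvPolynomial (Fin d) ℤ} (hp : p.IsSymmetric) :
    rename Sum.inr p ∈ invZ2 n d :=
  fun g ↦ rename_sumCongr_rename_inr_of_isSymmetric _ g hp

theorem hYZ_mem_invZ2 (r : ℕ) : hYZ n d r ∈ invZ2 n d :=
  rename_inr_mem_invZ2 (hsymm_isSymmetric _ _ r)

theorem genXYZ_mem_invZ2 (r : ℕ) : genXYZ n d r ∈ invZ2 n d :=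
  sum_mem fun j _ ↦ neg_one_pow_mul_mem j <|
    mul_mem (rename_inl_mem_invZ2 _) (hYZ_mem_invZ2 j)

theorem genPowZ_mem_invZ2 (i : Fin n) : genPowZ n d i ∈ invZ2 n d := by
  have hX : X (Sum.inl i) ∈ invZ2 n d := by
    simpa only [rename_X] using rename_inl_mem_invZ2 (X i)
  exact sum_mem fun j _ ↦ neg_one_pow_mul_mem j <|
    mul_mem (pow_mem hX _) (rename_inr_mem_invZ2 (esymm_isSymmetric _ _ j))

theorem GgensZ_subset_invZ2 (n k d : ℕ) : GgensZ n k d ⊆ invZ2 n d := by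
  rintro p ((⟨r, -, rfl⟩ | ⟨r, -, rfl⟩) | ⟨i, rfl⟩)
  · exact hYZ_mem_invZ2 r
  · exact genXYZ_mem_invZ2 r
  · exact genPowZ_mem_invZ2 i

theorem map_span_preimage_GgensZ (n k d : ℕ) :
    (Ideal.span (Subtype.val ⁻¹' GgensZ n k d : Set (invZ2 n d))).map
      (algebraMap (invZ2 n d) (MvPolynomial (Fin n ⊕ Fin d) ℤ)) = Ideal.span (GgensZ n k d) := by
  rw [Ideal.map_span]
  congr 1
  exact Set.image_preimage_eq_of_subset <| by simpa using GgensZ_subset_invZ2 n k d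

end Invariants

section PermAction

variable {n d : ℕ}

/-- The action of `S_d` on `ℤ[x_1,…,x_n,y_1,…,y_d]` that permutes the y-variables and fixes the
x-variables, so that `invZ2 n d` is its ring of invariants. -/
noncomputable instance permYAction :
    MulSemiringAction (Equiv.Perm (Fin d)) (MvPolynomial (Fin n ⊕ Fin d) ℤ) where
  smul g p := rename (permY n d g) p
  one_smul p := by
    have h1 : ⇑(permY n d 1) = id := by ext (i | j) <;> rfl
    change rename (permY n d 1) p = p
    rw [h1, rename_id_apply]
  mul_smul g h p := by
    have hgh : ⇑(permY n d (g * h)) = permY n d g ∘ permY n d h := by ext (i | j) <;> rfl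
    change rename (permY n d (g * h)) p = rename (permY n d g) (rename (permY n d h) p)
    rw [hgh, rename_rename]
  smul_zero g := map_zero (rename (permY n d g))
  smul_add g := map_add (rename (permY n d g))
  smul_one g := map_one (rename (permY n d g))
  smul_mul g := map_mul (rename (permY n d g))

theorem perm_smul_eq_rename (g : Equiv.Perm (Fin d)) (p : MvPolynomial (Fin n ⊕ Fin d) ℤ) :
    g • p = rename (permY n d g) p :=
  rfl

instance : SMulCommClass (Equiv.Perm (Fin d)) (invZ2 n d) (MvPolynomial (Fin n ⊕ Fin d) ℤ) where
  smul_comm g r p := by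
    simp only [perm_smul_eq_rename, Subalgebra.smul_def, smul_eq_mul, map_mul, r.2 g]

instance : Algebra.IsInvariant (invZ2 n d) (MvPolynomial (Fin n ⊕ Fin d) ℤ)
    (Equiv.Perm (Fin d)) where
  isInvariant p hp := ⟨⟨p, hp⟩, rfl⟩

end PermAction

/-- If `f ∈ J_{n,k,d} ∩ ℤ[x,y]^{S_d}`, then `d!·f` lies in the ideal
of the invariant ring `ℤ[x,y]^{S_d}` generated by the set `G`. -/
theorem factorial_smul_mem_invariant_span (n k d : ℕ) (hd : 1 ≤ d) (hk : d ≤ k)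
    (hn : k ≤ n) (f : ↥(invZ2 n d))
    (hf : (f : MvPolynomial (Fin n ⊕ Fin d) ℤ) ∈ Ideal.span (GgensZ n k d)) :
    (Nat.factorial d : ↥(invZ2 n d)) * f ∈
      Ideal.span (Subtype.val ⁻¹' GgensZ n k d : Set ↥(invZ2 n d)) := by
  rw [← map_span_preimage_GgensZ] at hf
  simpa only [Fintype.card_perm, Fintype.card_fin] using
    card_mul_mem_of_algebraMap_mem_map (Equiv.Perm (Fin d)) hf
end
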